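/- Let (M,ḡ) be a Riemannian manifold with boundary hypersurface Σ, and let X be a C³ vector field on a neighborhood of Σ such that (L_X ḡ)^⊤ = 0 and H'(L_X ḡ) = 0 on Σ, and X = 0 on a nonempty open subset of Σ. Then X ≡ 0 on all of Σ (assuming Σ is connected). -/

import Mathlib

noncomputable section

open scoped BigOperators
open MeasureTheory Filter

/-- Points of the coordinate chart `ℝⁿ`. -/
abbrev Pt (n : ℕ) := Fin n → ℝ

/-- Partial derivative of a scalar function in the `i`-th coordinate direction. -/
def pd {n : ℕ} (i : Fin n) (f : Pt n → ℝ) (x : Pt n) : ℝ :=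
  fderiv ℝ f x (Pi.single i 1)

/-- Inverse metric `g^{ij}` (pointwise matrix inverse). -/
def ginv {n : ℕ} (g : Pt n → Fin n → Fin n → ℝ) (x : Pt n) (i j : Fin n) : ℝ :=
  (Matrix.of (g x))⁻¹ i j

/-- Christoffel symbols `Γ^k_{ij}` of the metric `g`. -/
def chr {n : ℕ} (g : Pt n → Fin n → Fin n → ℝ) (x : Pt n) (k i j : Fin n) : ℝ :=
  (1/2) * ∑ l, ginv g x k l *
    (pd i (fun y => g y j l) x + pd j (fun y => g y i l) x - pd l (fun y => g y i j) x)

/-- Covariant derivative of a covector field: `X_{i;j}`. -/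
def cdCov {n : ℕ} (g : Pt n → Fin n → Fin n → ℝ) (X : Pt n → Fin n → ℝ)
    (x : Pt n) (i j : Fin n) : ℝ :=
  pd j (fun y => X y i) x - ∑ k, chr g x k i j * X x k

/-- Covariant derivative of a vector field: `X^i_{;j}`. -/
def cdVec {n : ℕ} (g : Pt n → Fin n → Fin n → ℝ) (X : Pt n → Fin n → ℝ)
    (x : Pt n) (i j : Fin n) : ℝ :=
  pd j (fun y => X y i) x + ∑ k, chr g x i k j * X x k

/-- Covariant derivative of a symmetric (0,2)-tensor: `h_{ij;k}`. -/
def cd2 {n : ℕ} (g : Pt n → Fin n → Fin n → ℝ) (h : Pt n → Fin n → Fin n → ℝ)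
    (x : Pt n) (i j k : Fin n) : ℝ :=
  pd k (fun y => h y i j) x - ∑ l, chr g x l i k * h x l j - ∑ l, chr g x l j k * h x i l

/-- Second covariant derivative of a covector field: `X_{i;jk}`. -/
def cdCov2 {n : ℕ} (g : Pt n → Fin n → Fin n → ℝ) (X : Pt n → Fin n → ℝ)
    (x : Pt n) (i j k : Fin n) : ℝ :=
  cd2 g (fun y a b => cdCov g X y a b) x i j k

/-- Riemann curvature tensor `R^l_{ijk}`. -/
def riem {n : ℕ} (g : Pt n → Fin n → Fin n → ℝ) (x : Pt n) (l i j k : Fin n) : ℝ :=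
  pd j (fun y => chr g y l i k) x - pd k (fun y => chr g y l i j) x
  + ∑ m, chr g x l m j * chr g x m i k - ∑ m, chr g x l m k * chr g x m i j

/-- Riemann curvature with all indices lowered. -/
def riemLow {n : ℕ} (g : Pt n → Fin n → Fin n → ℝ) (x : Pt n) (a b c d : Fin n) : ℝ :=
  ∑ l, g x a l * riem g x l b c d

/-- Ricci curvature `R_{ij}`. -/
def ric {n : ℕ} (g : Pt n → Fin n → Fin n → ℝ) (x : Pt n) (i j : Fin n) : ℝ :=
  ∑ l, riem g x l i l j

/-- Lower the index of a vector field using `g`. -/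
def lowerV {n : ℕ} (g : Pt n → Fin n → Fin n → ℝ) (X : Pt n → Fin n → ℝ)
    (x : Pt n) (i : Fin n) : ℝ :=
  ∑ j, g x i j * X x j

/-- Lie derivative of the metric `g` along the vector field `X`:
`(L_X g)_{ij} = X_{i;j} + X_{j;i}` (index lowered by `g`). -/
def lieg {n : ℕ} (g : Pt n → Fin n → Fin n → ℝ) (X : Pt n → Fin n → ℝ)
    (x : Pt n) (i j : Fin n) : ℝ :=
  cdCov g (lowerV g X) x i j + cdCov g (lowerV g X) x j i

/-- Hessian `f_{;ij}`. -/
def hess {n : ℕ} (g : Pt n → Fin n → Fin n → ℝ) (f : Pt n → ℝ)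
    (x : Pt n) (i j : Fin n) : ℝ :=
  cdCov g (fun y a => pd a f y) x i j

/-- Laplace–Beltrami operator on functions. -/
def lapf {n : ℕ} (g : Pt n → Fin n → Fin n → ℝ) (f : Pt n → ℝ) (x : Pt n) : ℝ :=
  ∑ i, ∑ j, ginv g x i j * hess g f x i j

/-- Trace of a (0,2)-tensor with respect to `g`. -/
def trT {n : ℕ} (g : Pt n → Fin n → Fin n → ℝ) (h : Pt n → Fin n → Fin n → ℝ)
    (x : Pt n) : ℝ :=
  ∑ i, ∑ j, ginv g x i j * h x i j

/-- Divergence of a (0,2)-tensor, as a covector. -/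
def divT {n : ℕ} (g : Pt n → Fin n → Fin n → ℝ) (h : Pt n → Fin n → Fin n → ℝ)
    (x : Pt n) (i : Fin n) : ℝ :=
  ∑ j, ∑ k, ginv g x j k * cd2 g h x i j k

/-- Bianchi operator `β_g h = -div_g h + (1/2) d (tr_g h)`. -/
def bianchi {n : ℕ} (g : Pt n → Fin n → Fin n → ℝ) (h : Pt n → Fin n → Fin n → ℝ)
    (x : Pt n) (i : Fin n) : ℝ :=
  -divT g h x i + (1/2) * pd i (fun y => trT g h y) x

/-- Gradient vector field `(∇f)^i`. -/
def gradV {n : ℕ} (g : Pt n → Fin n → Fin n → ℝ) (f : Pt n → ℝ)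
    (x : Pt n) (i : Fin n) : ℝ :=
  ∑ j, ginv g x i j * pd j f x

/-- The tensor is symmetric. -/
def symT {n : ℕ} (g : Pt n → Fin n → Fin n → ℝ) : Prop :=
  ∀ x i j, g x i j = g x j i

/-- `g` is pointwise positive definite. -/
def posdef {n : ℕ} (g : Pt n → Fin n → Fin n → ℝ) : Prop :=
  ∀ (x : Pt n) (v : Fin n → ℝ), v ≠ 0 → 0 < ∑ i, ∑ j, g x i j * v i * v j

/-- Smooth componentwise. -/
def smoothT {n : ℕ} (g : Pt n → Fin n → Fin n → ℝ) : Prop :=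
  ∀ i j, ContDiff ℝ (⊤ : ℕ∞) (fun x => g x i j)

/-- The lowered tensor `(T_h)_{ijk} = (1/2)(h_{ij;k} + h_{ik;j} - h_{jk;i})`. -/
def Tlow {n : ℕ} (g : Pt n → Fin n → Fin n → ℝ) (h : Pt n → Fin n → Fin n → ℝ)
    (x : Pt n) (i j k : Fin n) : ℝ :=
  (1/2) * (cd2 g h x i j k + cd2 g h x i k j - cd2 g h x j k i)
/-- Unit normal vector to the level set `{f = 0}` (normalized `g`-gradient of `f`). -/
def nuV {n : ℕ} (g : Pt n → Fin n → Fin n → ℝ) (f : Pt n → ℝ)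
    (x : Pt n) (i : Fin n) : ℝ :=
  gradV g f x i / Real.sqrt (∑ j, ∑ k, ginv g x j k * pd j f x * pd k f x)

/-- Ambient second fundamental form of the level set `{f = 0}`:
symmetrized covariant derivative of the lowered unit normal. -/
def sff {n : ℕ} (g : Pt n → Fin n → Fin n → ℝ) (f : Pt n → ℝ)
    (x : Pt n) (i j : Fin n) : ℝ :=
  (1/2) * (cdCov g (lowerV g (nuV g f)) x i j + cdCov g (lowerV g (nuV g f)) x j i)

/-- Mean curvature of the level set `{f = 0}` (divergence of the unit normal). -/
def hmean {n : ℕ} (g : Pt n → Fin n → Fin n → ℝ) (f : Pt n → ℝ) (x : Pt n) : ℝ :=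
  ∑ i, ∑ j, ginv g x i j * cdCov g (lowerV g (nuV g f)) x i j

/-- The perturbed metric `g + s h`. -/
def mpert {n : ℕ} (g h : Pt n → Fin n → Fin n → ℝ) (s : ℝ) :
    Pt n → Fin n → Fin n → ℝ :=
  fun y a b => g y a b + s * h y a b

/-- Linearized mean curvature `H'|_g(h)`. -/
def hmeanLin {n : ℕ} (g h : Pt n → Fin n → Fin n → ℝ) (f : Pt n → ℝ) (x : Pt n) : ℝ :=
  deriv (fun s : ℝ => hmean (mpert g h s) f x) 0

/-- Linearized second fundamental form `A'|_g(h)`. -/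
def sffLin {n : ℕ} (g h : Pt n → Fin n → Fin n → ℝ) (f : Pt n → ℝ)
    (x : Pt n) (i j : Fin n) : ℝ :=
  deriv (fun s : ℝ => sff (mpert g h s) f x i j) 0

/-- Linearized unit normal `ν'|_g(h)` (a vector field along the level set). -/
def nuLin {n : ℕ} (g h : Pt n → Fin n → Fin n → ℝ) (f : Pt n → ℝ)
    (x : Pt n) (i : Fin n) : ℝ :=
  deriv (fun s : ℝ => nuV (mpert g h s) f x i) 0

/-- Linearized Ricci curvature `Ric'|_g(h)`. -/
def ricLin {n : ℕ} (g h : Pt n → Fin n → Fin n → ℝ) (x : Pt n) (i j : Fin n) : ℝ :=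
  deriv (fun s : ℝ => ric (mpert g h s) x i j) 0

/-- A vector `v` is tangent to the level set `{f = 0}` at `x`. -/
def Tang {n : ℕ} (f : Pt n → ℝ) (x : Pt n) (v : Fin n → ℝ) : Prop :=
  fderiv ℝ f x v = 0

/-! ### Calculus of partial derivatives -/
section Calc
variable {n : ℕ}

theorem pd_add {i : Fin n} {u v : Pt n → ℝ} {x : Pt n} (hu : DifferentiableAt ℝ u x)
    (hv : DifferentiableAt ℝ v x) :
    pd i (fun y => u y + v y) x = pd i u x + pd i v x := by
  unfold pd
  rw [fderiv_fun_add hu hv]; rfl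

theorem pd_sub {i : Fin n} {u v : Pt n → ℝ} {x : Pt n} (hu : DifferentiableAt ℝ u x)
    (hv : DifferentiableAt ℝ v x) :
    pd i (fun y => u y - v y) x = pd i u x - pd i v x := by
  unfold pd
  rw [fderiv_fun_sub hu hv]; rfl

theorem pd_mul {i : Fin n} {u v : Pt n → ℝ} {x : Pt n} (hu : DifferentiableAt ℝ u x)
    (hv : DifferentiableAt ℝ v x) :
    pd i (fun y => u y * v y) x = pd i u x * v x + u x * pd i v x := by
  unfold pd
  rw [fderiv_fun_mul hu hv]; simp; ring

theorem pd_neg {i : Fin n} {u : Pt n → ℝ} {x : Pt n} :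
    pd i (fun y => - u y) x = - pd i u x := by
  unfold pd
  rw [fderiv_fun_neg]; rfl

theorem pd_const {i : Fin n} {c : ℝ} {x : Pt n} : pd i (fun _ => c) x = 0 := by
  simp [pd]

theorem pd_cmul {i : Fin n} {u : Pt n → ℝ} {x : Pt n} {c : ℝ} (hu : DifferentiableAt ℝ u x) :
    pd i (fun y => c * u y) x = c * pd i u x := by
  rw [pd_mul (by fun_prop) hu, pd_const]; ring

theorem pd_sum {ι : Type*} {i : Fin n} {s : Finset ι} {u : ι → Pt n → ℝ} {x : Pt n}
    (hu : ∀ j ∈ s, DifferentiableAt ℝ (u j) x) :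
    pd i (fun y => ∑ j ∈ s, u j y) x = ∑ j ∈ s, pd i (u j) x := by
  unfold pd
  rw [fderiv_fun_sum hu]; simp

theorem pd_congr {i : Fin n} {u v : Pt n → ℝ} {x : Pt n} (h : u =ᶠ[nhds x] v) :
    pd i u x = pd i v x := by
  unfold pd; rw [h.fderiv_eq]

theorem pd_eventually {i : Fin n} {u v : Pt n → ℝ} {x : Pt n} (h : u =ᶠ[nhds x] v) :
    pd i u =ᶠ[nhds x] pd i v := by
  filter_upwards [h.eventuallyEq_nhds] with y hy using pd_congr hy

theorem cdAt_pd {i : Fin n} {u : Pt n → ℝ} {x : Pt n} {m k : WithTop ℕ∞}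
    (hu : ContDiffAt ℝ k u x) (h : m + 1 ≤ k) : ContDiffAt ℝ m (pd i u) x := by
  unfold pd
  exact (hu.fderiv_right h).clm_apply contDiffAt_const

theorem cd_pd {i : Fin n} {u : Pt n → ℝ} {m k : WithTop ℕ∞}
    (hu : ContDiff ℝ k u) (h : m + 1 ≤ k) : ContDiff ℝ m (pd i u) :=
  contDiff_iff_contDiffAt.2 fun _ => cdAt_pd hu.contDiffAt h

theorem cdAt_pd_top {i : Fin n} {u : Pt n → ℝ} {x : Pt n}
    (hu : ContDiffAt ℝ (⊤ : ℕ∞) u x) : ContDiffAt ℝ (⊤ : ℕ∞) (pd i u) x :=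
  cdAt_pd hu (by norm_cast)

theorem cd_pd_top {i : Fin n} {u : Pt n → ℝ}
    (hu : ContDiff ℝ (⊤ : ℕ∞) u) : ContDiff ℝ (⊤ : ℕ∞) (pd i u) :=
  cd_pd hu (by norm_cast)

theorem pd_comm {i j : Fin n} {u : Pt n → ℝ} {x : Pt n} (hu : ContDiffAt ℝ 2 u x) :
    pd i (pd j u) x = pd j (pd i u) x := by
  have hs := hu.isSymmSndFDerivAt (by simp)
  have hd : DifferentiableAt ℝ (fderiv ℝ u) x :=
    (hu.fderiv_right (m := 1) (by norm_num)).differentiableAt (by norm_num)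
  have key : ∀ a b : Fin n, pd a (pd b u) x
      = fderiv ℝ (fderiv ℝ u) x (Pi.single a 1) (Pi.single b 1) := by
    intro a b
    unfold pd
    rw [fderiv_clm_apply hd (by fun_prop)]
    simp
  rw [key, key]
  exact hs _ _

theorem fderiv_eq_sum_pd {u : Pt n → ℝ} {x v : Pt n} :
    fderiv ℝ u x v = ∑ i, v i * pd i u x := by
  unfold pd
  conv_lhs => rw [← Finset.univ_sum_single v]
  rw [map_sum]
  refine Finset.sum_congr rfl fun i _ => ?_
  have : (Pi.single i (v i) : Pt n) = v i • Pi.single i 1 := by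
    ext k; by_cases h : k = i
    · subst h; simp
    · simp [h]
  rw [this, map_smul, smul_eq_mul]

theorem pd_comp {a : Fin n} {V : Pt n → ℝ} {Φ : Pt n → Pt n} {y : Pt n}
    (hV : DifferentiableAt ℝ V (Φ y)) (hΦ : DifferentiableAt ℝ Φ y) :
    pd a (fun z => V (Φ z)) y = ∑ j, pd j V (Φ y) * pd a (fun z => Φ z j) y := by
  have h1 : fderiv ℝ (fun z => V (Φ z)) y = (fderiv ℝ V (Φ y)).comp (fderiv ℝ Φ y) :=
    fderiv_comp y hV hΦ
  have h2 : ∀ j, fderiv ℝ (fun z => Φ z j) y = (ContinuousLinearMap.proj j).comp (fderiv ℝ Φ y) := by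
    intro j
    have := fderiv_pi (𝕜 := ℝ) (φ := fun j z => Φ z j) (x := y) (fun i => by fun_prop)
    have h3 : (fun x i => (fun j z => Φ z j) i x) = Φ := rfl
    rw [h3] at this
    rw [this]; ext; simp
  conv_lhs => unfold pd
  rw [h1, ContinuousLinearMap.comp_apply, fderiv_eq_sum_pd]
  refine Finset.sum_congr rfl fun j _ => ?_
  conv_rhs => rw [mul_comm]
  congr 1
  conv_rhs => unfold pd
  rw [h2]; rfl

theorem integral_pd {a : Fin n} {F : Pt n → ℝ} (hF : ContDiff ℝ 1 F) (hc : HasCompactSupport F) :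
    ∫ x, pd a F x = 0 := by
  have h := integral_mul_fderiv_eq_neg_fderiv_mul_of_integrable (μ := (volume : Measure (Pt n)))
    (f := fun _ : Pt n => (1:ℝ)) (g := F) (v := Pi.single a 1) ?_ ?_ ?_ ?_ ?_
  · simpa [pd] using h
  · simp
  · simp only [one_mul]
    have : Continuous (fun x => fderiv ℝ F x (Pi.single a 1)) :=
      (hF.continuous_fderiv (by norm_num)).clm_apply continuous_const
    refine this.integrable_of_hasCompactSupport ?_
    exact (hc.fderiv (𝕜 := ℝ)).comp_left (g := fun L : Pt n →L[ℝ] ℝ => L (Pi.single a 1)) rfl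
  · simp only [one_mul]
    exact hF.continuous.integrable_of_hasCompactSupport hc
  · intro x _; fun_prop
  · intro x _; exact hF.differentiable (by norm_num) x

theorem hcs_pd {a : Fin n} {F : Pt n → ℝ} (hc : HasCompactSupport F) :
    HasCompactSupport (pd a F) :=
  (hc.fderiv (𝕜 := ℝ)).comp_left (g := fun L : Pt n →L[ℝ] ℝ => L (Pi.single a 1)) rfl

theorem tsupport_pd {a : Fin n} {F : Pt n → ℝ} : tsupport (pd a F) ⊆ tsupport F := by
  refine closure_minimal ?_ (isClosed_tsupport _)
  intro x hx
  by_contra h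
  apply hx
  have : F =ᶠ[nhds x] fun _ => 0 := notMem_tsupport_iff_eventuallyEq.1 h
  rw [pd_congr this, pd_const]

end Calc

/-! ### Carleman estimate: algebra -/
/-- The `γ`-gradient. -/
def thV {n : ℕ} (γ : Fin n → Fin n → Pt n → ℝ) (u : Pt n → ℝ) (c : Fin n) (x : Pt n) : ℝ :=
  ∑ d, γ c d x * pd d u x
/-- The squared gradient length. -/
def nnV {n : ℕ} (γ : Fin n → Fin n → Pt n → ℝ) (u : Pt n → ℝ) (x : Pt n) : ℝ :=
  ∑ c, thV γ u c x * pd c u x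
/-- The divergence form operator. -/
def llV {n : ℕ} (γ : Fin n → Fin n → Pt n → ℝ) (u : Pt n → ℝ) (x : Pt n) : ℝ :=
  ∑ c, pd c (thV γ u c) x

section Carl
variable {n : ℕ} {γ : Fin n → Fin n → Pt n → ℝ}

theorem thV_cd {k m : WithTop ℕ∞} (hγ : ∀ a b, ContDiff ℝ m (γ a b)) {u : Pt n → ℝ}
    (hu : ContDiff ℝ k u) (h : m + 1 ≤ k) (c : Fin n) : ContDiff ℝ m (thV γ u c) := by
  unfold thV
  exact ContDiff.sum fun d _ => (hγ c d).mul (cd_pd hu h)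

theorem nnV_cd {k m : WithTop ℕ∞} (hγ : ∀ a b, ContDiff ℝ m (γ a b)) {u : Pt n → ℝ}
    (hu : ContDiff ℝ k u) (h : m + 1 ≤ k) : ContDiff ℝ m (nnV γ u) := by
  unfold nnV
  exact ContDiff.sum fun d _ => (thV_cd hγ hu h d).mul (cd_pd hu h)

theorem thV_symm (hs : ∀ a b x, γ a b x = γ b a x) (u v : Pt n → ℝ) (x : Pt n) :
    ∑ a, thV γ u a x * pd a v x = ∑ a, thV γ v a x * pd a u x := by
  unfold thV
  simp only [Finset.sum_mul]
  rw [Finset.sum_comm]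
  refine Finset.sum_congr rfl fun a _ => Finset.sum_congr rfl fun b _ => ?_
  rw [hs b a x]; ring

/-- Conjugation by the weight. -/
theorem conj_id (hs : ∀ a b x, γ a b x = γ b a x) (hγ : ∀ a b, ContDiff ℝ (⊤ : ℕ∞) (γ a b))
    {φ : Pt n → ℝ} (hφ : ContDiff ℝ (⊤ : ℕ∞) φ) {w : Pt n → ℝ} (hw : ContDiff ℝ 2 w) (τ : ℝ)
    (x : Pt n) :
    llV γ (fun y => Real.exp (-τ * φ y) * w y) x = Real.exp (-τ * φ x) *
      (llV γ w x - 2 * τ * ∑ c, thV γ φ c x * pd c w x - τ * llV γ φ x * w x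
        + τ ^ 2 * nnV γ φ x * w x) := by
  have hγ1 : ∀ a b, ContDiff ℝ 1 (γ a b) := fun a b => (hγ a b).of_le (by norm_cast)
  have dφ : Differentiable ℝ φ := hφ.differentiable (by simp)
  have dw : Differentiable ℝ w := hw.differentiable (by simp)
  have dte : Differentiable ℝ (fun y => -τ * φ y) := dφ.const_mul _
  have de : Differentiable ℝ (fun y => Real.exp (-τ * φ y)) := dte.exp
  have hpe : ∀ b y, pd b (fun y => Real.exp (-τ * φ y)) y
      = - τ * Real.exp (-τ * φ y) * pd b φ y := by
    intro b y
    unfold pd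
    have := fderiv_exp (f := fun y => -τ * φ y) (x := y) (dte y)
    rw [this, fderiv_const_mul (dφ y)]
    simp; ring
  have h1 : ∀ b y, pd b (fun y => Real.exp (-τ * φ y) * w y) y
      = Real.exp (-τ * φ y) * (pd b w y - τ * (pd b φ y * w y)) := by
    intro b y
    rw [pd_mul (de y) (dw y), hpe]; ring
  have h2 : ∀ a, thV γ (fun y => Real.exp (-τ * φ y) * w y) a
      = fun y => Real.exp (-τ * φ y) * (thV γ w a y - τ * (thV γ φ a y * w y)) := by
    intro a; funext y
    unfold thV
    simp only [h1, Finset.mul_sum, Finset.sum_mul, ← Finset.sum_sub_distrib]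
    refine Finset.sum_congr rfl fun b _ => ?_
    ring
  have dtw : ∀ a, Differentiable ℝ (thV γ w a) := fun a =>
    (thV_cd hγ1 hw (by norm_num) a).differentiable (by simp)
  have dtφ : ∀ a, Differentiable ℝ (thV γ φ a) := fun a =>
    (thV_cd hγ hφ (by norm_cast) a).differentiable (by simp)
  have h3 : ∀ a, pd a (thV γ (fun y => Real.exp (-τ * φ y) * w y) a) x
      = Real.exp (-τ * φ x) * (pd a (thV γ w a) x - τ * (thV γ w a x * pd a φ x)
        - τ * (thV γ φ a x * pd a w x) - τ * (pd a (thV γ φ a) x * w x)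
        + τ ^ 2 * (thV γ φ a x * pd a φ x * w x)) := by
    intro a
    rw [h2, pd_mul (de x) (by fun_prop), hpe, pd_sub (dtw a x) (by fun_prop),
      pd_cmul (by fun_prop), pd_mul (dtφ a x) (dw x)]
    ring
  have hsw := thV_symm hs w φ x
  unfold llV nnV
  simp only [h3, ← Finset.mul_sum, Finset.sum_add_distrib, Finset.sum_sub_distrib]
  simp only [← Finset.mul_sum, ← Finset.sum_mul]
  rw [hsw]
  ring

/-- The flux. -/
def fluxV (γ : Fin n → Fin n → Pt n → ℝ) (φ w : Pt n → ℝ) (σ τ : ℝ) (a : Fin n) (x : Pt n) : ℝ :=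
  -(thV γ w a x * ∑ c, thV γ φ c x * pd c w x) + (1/2) * (thV γ φ a x * nnV γ w x)
   - ((1/2) * llV γ φ x + σ) * (w x * thV γ w a x)
   - (1/2) * τ ^ 2 * (nnV γ φ x * thV γ φ a x * (w x * w x))

/-- The quadratic form in the gradient. -/
def bqV (γ : Fin n → Fin n → Pt n → ℝ) (φ : Pt n → ℝ) (σ : ℝ) (b c : Fin n) (x : Pt n) : ℝ :=
  (∑ a, γ a b x * pd a (thV γ φ c) x) - (1/2) * (∑ a, thV γ φ a x * pd a (γ b c) x) + σ * γ b c x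

theorem flux_id (hs : ∀ a b x, γ a b x = γ b a x) (hγ : ∀ a b, ContDiff ℝ (⊤ : ℕ∞) (γ a b))
    {φ : Pt n → ℝ} (hφ : ContDiff ℝ (⊤ : ℕ∞) φ) {w : Pt n → ℝ} (hw : ContDiff ℝ 2 w) (σ τ : ℝ)
    (x : Pt n) :
    -((llV γ w x + τ ^ 2 * nnV γ φ x * w x) *
      ((∑ c, thV γ φ c x * pd c w x) + ((1/2) * llV γ φ x + σ) * w x)) =
    (∑ a, pd a (fluxV γ φ w σ τ a) x) + (∑ b, ∑ c, bqV γ φ σ b c x * pd b w x * pd c w x)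
     + w x * (∑ a, (1/2) * pd a (llV γ φ) x * thV γ w a x)
     + τ ^ 2 * ((1/2) * (∑ c, thV γ φ c x * pd c (nnV γ φ) x) - σ * nnV γ φ x) * (w x * w x) := by
  have hγ1 : ∀ a b, ContDiff ℝ 1 (γ a b) := fun a b => (hγ a b).of_le (by norm_cast)
  have dγ : ∀ a b, Differentiable ℝ (γ a b) := fun a b => (hγ a b).differentiable (by simp)
  have dw : Differentiable ℝ w := hw.differentiable (by simp)
  have dpw : ∀ a, Differentiable ℝ (pd a w) := fun a =>
    (cd_pd (m := 1) hw (by norm_num)).differentiable (by simp)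
  have dtw : ∀ a, Differentiable ℝ (thV γ w a) := fun a =>
    (thV_cd hγ1 hw (by norm_num) a).differentiable (by simp)
  have ctφ : ∀ a, ContDiff ℝ (⊤ : ℕ∞) (thV γ φ a) := fun a => thV_cd hγ hφ (by norm_cast) a
  have dtφ : ∀ a, Differentiable ℝ (thV γ φ a) := fun a => (ctφ a).differentiable (by simp)
  have dnw : Differentiable ℝ (nnV γ w) := (nnV_cd hγ1 hw (by norm_num)).differentiable (by simp)
  have dnφ : Differentiable ℝ (nnV γ φ) := (nnV_cd hγ hφ (by norm_cast)).differentiable (by simp)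
  have dlφ : Differentiable ℝ (llV γ φ) := by
    have : ContDiff ℝ (⊤ : ℕ∞) (llV γ φ) := by
      unfold llV
      exact ContDiff.sum fun a _ => cd_pd_top (ctφ a)
    exact this.differentiable (by simp)
  have dm : Differentiable ℝ (fun y => ∑ c, thV γ φ c y * pd c w y) := by fun_prop
  -- expansion of derivatives
  have e1 : ∀ a, pd a (fluxV γ φ w σ τ a) x =
      -(pd a (thV γ w a) x * ∑ c, thV γ φ c x * pd c w x)
      - thV γ w a x * pd a (fun y => ∑ c, thV γ φ c y * pd c w y) x
      + (1/2) * (pd a (thV γ φ a) x * nnV γ w x) + (1/2) * (thV γ φ a x * pd a (nnV γ w) x)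
      - w x * ((1/2) * pd a (llV γ φ) x * thV γ w a x)
      - ((1/2) * llV γ φ x + σ) * (thV γ w a x * pd a w x)
      - ((1/2) * llV γ φ x + σ) * w x * pd a (thV γ w a) x
      - (1/2) * τ ^ 2 * (thV γ φ a x * pd a (nnV γ φ) x) * (w x * w x)
      - (1/2) * τ ^ 2 * (nnV γ φ x * (w x * w x)) * pd a (thV γ φ a) x
      - τ ^ 2 * nnV γ φ x * w x * (thV γ φ a x * pd a w x) := by
    intro a
    unfold fluxV
    rw [pd_sub (by fun_prop) (by fun_prop), pd_sub (by fun_prop) (by fun_prop),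
      pd_add (by fun_prop) (by fun_prop), pd_neg, pd_mul (dtw a x) (dm x),
      pd_cmul (by fun_prop), pd_mul (dtφ a x) (dnw x),
      pd_mul (by fun_prop) (by fun_prop), pd_add (by fun_prop) (by fun_prop), pd_const,
      pd_cmul (dlφ x), pd_mul (dw x) (dtw a x), pd_cmul (by fun_prop),
      pd_mul (by fun_prop) (by fun_prop), pd_mul (dnφ x) (dtφ a x), pd_mul (dw x) (dw x)]
    ring
  have e2 : ∀ a, pd a (fun y => ∑ c, thV γ φ c y * pd c w y) x =
      ∑ c, (pd a (thV γ φ c) x * pd c w x + thV γ φ c x * pd a (pd c w) x) := by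
    intro a
    rw [pd_sum (fun c _ => by fun_prop)]
    exact Finset.sum_congr rfl fun c _ => pd_mul (dtφ c x) (dpw c x)
  have e3 : ∀ a, pd a (nnV γ w) x =
      (∑ b, ∑ c, pd a (γ b c) x * pd b w x * pd c w x) + 2 * ∑ b, thV γ w b x * pd a (pd b w) x := by
    intro a
    have e31 : ∀ b, pd a (thV γ w b) x = ∑ c, (pd a (γ b c) x * pd c w x + γ b c x * pd a (pd c w) x) := by
      intro b
      unfold thV
      rw [pd_sum (fun c _ => by fun_prop)]
      exact Finset.sum_congr rfl fun c _ => pd_mul (dγ b c x) (dpw c x)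
    unfold nnV
    rw [pd_sum (fun c _ => by fun_prop)]
    have : ∀ b, pd a (fun y => thV γ w b y * pd b w y) x =
        (∑ c, pd a (γ b c) x * pd b w x * pd c w x) + (∑ c, γ b c x * pd a (pd c w) x * pd b w x)
         + thV γ w b x * pd a (pd b w) x := by
      intro b
      rw [pd_mul (dtw b x) (dpw b x), e31, Finset.sum_add_distrib, add_mul, Finset.sum_mul,
        Finset.sum_mul]
      congr 2
      exact Finset.sum_congr rfl fun c _ => by ring
    simp only [this, Finset.sum_add_distrib]
    have h4 : ∑ b, ∑ c, γ b c x * pd a (pd c w) x * pd b w x = ∑ b, thV γ w b x * pd a (pd b w) x := by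
      rw [Finset.sum_comm]
      refine Finset.sum_congr rfl fun c _ => ?_
      unfold thV
      rw [Finset.sum_mul]
      refine Finset.sum_congr rfl fun b _ => ?_
      rw [hs b c]; ring
    rw [h4]; ring
  -- key cancellation
  have e4 : ∑ a, thV γ w a x * (∑ c, thV γ φ c x * pd a (pd c w) x) =
      ∑ a, thV γ φ a x * ∑ b, thV γ w b x * pd a (pd b w) x := by
    simp only [Finset.mul_sum]
    rw [Finset.sum_comm]
    refine Finset.sum_congr rfl fun a _ => Finset.sum_congr rfl fun b _ => ?_
    rw [pd_comm hw.contDiffAt]; ring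
  have e5 : ∑ b, ∑ c, bqV γ φ σ b c x * pd b w x * pd c w x =
      (∑ a, thV γ w a x * ∑ c, pd a (thV γ φ c) x * pd c w x)
      - (1/2) * (∑ a, thV γ φ a x * ∑ b, ∑ c, pd a (γ b c) x * pd b w x * pd c w x)
      + σ * nnV γ w x := by
    have t1 : ∑ b, ∑ c, (∑ a, γ a b x * pd a (thV γ φ c) x) * pd b w x * pd c w x
        = ∑ a, thV γ w a x * ∑ c, pd a (thV γ φ c) x * pd c w x := by
      simp only [thV, Finset.sum_mul, Finset.mul_sum]
      rw [Finset.sum_comm]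
      rw [Finset.sum_congr rfl fun c _ => Finset.sum_comm]
      rw [Finset.sum_comm]
      refine Finset.sum_congr rfl fun a _ => Finset.sum_congr rfl fun c _ =>
        Finset.sum_congr rfl fun b _ => ?_
      ring
    have t2 : ∑ b, ∑ c, (∑ a, thV γ φ a x * pd a (γ b c) x) * pd b w x * pd c w x
        = ∑ a, thV γ φ a x * ∑ b, ∑ c, pd a (γ b c) x * pd b w x * pd c w x := by
      simp only [Finset.sum_mul, Finset.mul_sum]
      rw [Finset.sum_congr rfl fun c _ => Finset.sum_comm]
      rw [Finset.sum_comm]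
      refine Finset.sum_congr rfl fun a _ => Finset.sum_congr rfl fun c _ =>
        Finset.sum_congr rfl fun b _ => ?_
      ring
    have t3 : ∑ b, ∑ c, γ b c x * pd b w x * pd c w x = nnV γ w x := by
      unfold nnV thV
      simp only [Finset.sum_mul]
      refine Finset.sum_congr rfl fun a _ => Finset.sum_congr rfl fun b _ => ?_
      ring
    rw [← t1, ← t2, ← t3]
    simp only [Finset.mul_sum, ← Finset.sum_add_distrib, ← Finset.sum_sub_distrib]
    refine Finset.sum_congr rfl fun b _ => Finset.sum_congr rfl fun c _ => ?_
    unfold bqV; ring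
  rw [e5]
  simp only [e1, e2, e3]
  have l1 : ∑ a, pd a (thV γ w a) x = llV γ w x := rfl
  have l2 : ∑ a, pd a (thV γ φ a) x = llV γ φ x := rfl
  have l3 : ∑ a, thV γ w a x * pd a w x = nnV γ w x := rfl
  simp only [Finset.sum_add_distrib, Finset.sum_sub_distrib, mul_add, Finset.sum_neg_distrib,
    ← Finset.mul_sum, ← Finset.sum_mul, l1, l2, l3]
  simp only [mul_left_comm _ (2:ℝ), ← Finset.mul_sum, e4]
  ring
end Carl

section Carl2
variable {n : ℕ} {γ : Fin n → Fin n → Pt n → ℝ}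

theorem sumsq_pos {ξ : Pt n} (h : ξ ≠ 0) : 0 < ∑ i, ξ i ^ 2 := by
  obtain ⟨i, hi⟩ : ∃ i, ξ i ≠ 0 := by
    by_contra hc; push Not at hc; exact h (funext hc)
  exact Finset.sum_pos' (fun _ _ => sq_nonneg _) ⟨i, Finset.mem_univ _, by positivity⟩

theorem qf_nhds {β : Fin n → Fin n → Pt n → ℝ} (hβ : ∀ a b, Continuous (β a b)) {x0 : Pt n}
    (hpos : ∀ ξ : Pt n, ξ ≠ 0 → 0 < ∑ a, ∑ b, β a b x0 * ξ a * ξ b) :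
    ∃ c > 0, ∀ᶠ x in nhds x0, ∀ ξ : Pt n, c * ∑ i, ξ i ^ 2 ≤ ∑ a, ∑ b, β a b x * ξ a * ξ b := by
  set S : Set (Pt n) := {ξ | ∑ i, ξ i ^ 2 = 1} with hS
  have hSc : IsCompact S := by
    refine Metric.isCompact_of_isClosed_isBounded (isClosed_eq (by fun_prop) (by fun_prop)) ?_
    refine (Metric.isBounded_closedBall (x := (0 : Pt n)) (r := 1)).subset ?_
    intro ξ hξ
    rw [mem_closedBall_zero_iff, pi_norm_le_iff_of_nonneg zero_le_one]
    intro i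
    have : ξ i ^ 2 ≤ ∑ i, ξ i ^ 2 := Finset.single_le_sum (f := fun i => ξ i ^ 2)
      (fun _ _ => sq_nonneg _) (Finset.mem_univ i)
    rw [show ∑ i, ξ i ^ 2 = 1 from hξ] at this
    rw [Real.norm_eq_abs]
    exact (sq_le_one_iff_abs_le_one _).1 this
  have hcont : Continuous (fun p : Pt n × Pt n => ∑ a, ∑ b, β a b p.1 * p.2 a * p.2 b) := by
    fun_prop
  obtain ⟨c, hc, hmin⟩ : ∃ c > 0, ∀ ξ ∈ S, c < ∑ a, ∑ b, β a b x0 * ξ a * ξ b := by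
    rcases S.eq_empty_or_nonempty with he | hne
    · exact ⟨1, one_pos, by simp [he]⟩
    · obtain ⟨ξ, hξ, hm⟩ := hSc.exists_isMinOn hne
        (f := fun ξ : Pt n => ∑ a, ∑ b, β a b x0 * ξ a * ξ b) (by fun_prop)
      have hξ0 : ξ ≠ 0 := by
        rintro rfl; simp [hS] at hξ
      have := hpos ξ hξ0
      refine ⟨_, half_pos this, fun η hη => ?_⟩
      have h2 := hm hη
      simp only [Set.mem_ofPred_eq] at h2
      linarith
  refine ⟨c, hc, ?_⟩
  have hev : ∀ᶠ x in nhds x0, ∀ ξ ∈ S, c < ∑ a, ∑ b, β a b x * ξ a * ξ b := by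
    apply hSc.eventually_forall_of_forall_eventually
    intro ξ hξ
    have : Tendsto (fun p : Pt n × Pt n => ∑ a, ∑ b, β a b p.1 * p.2 a * p.2 b) (nhds (x0, ξ))
      (nhds (∑ a, ∑ b, β a b x0 * ξ a * ξ b)) := hcont.continuousAt
    exact this.eventually (lt_mem_nhds (hmin ξ hξ))
  filter_upwards [hev] with x hx ξ
  by_cases h0 : ξ = 0
  · subst h0; simp
  have hp := sumsq_pos h0
  set q := ∑ i, ξ i ^ 2 with hq
  set t := Real.sqrt q with ht
  have ht0 : 0 < t := Real.sqrt_pos.2 hp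
  have htq : t ^ 2 = q := Real.sq_sqrt hp.le
  have hmem : (t⁻¹ • ξ) ∈ S := by
    simp only [hS, Set.mem_ofPred_eq, Pi.smul_apply, smul_eq_mul, mul_pow, ← Finset.mul_sum]
    rw [← hq, ← htq]; field_simp
  have h3 := hx _ hmem
  have h4 : ∑ a, ∑ b, β a b x * (t⁻¹ • ξ) a * (t⁻¹ • ξ) b
      = q⁻¹ * ∑ a, ∑ b, β a b x * ξ a * ξ b := by
    simp only [Finset.mul_sum, Pi.smul_apply, smul_eq_mul, ← htq]
    refine Finset.sum_congr rfl fun a _ => Finset.sum_congr rfl fun b _ => ?_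
    field_simp
  rw [h4] at h3
  have := mul_lt_mul_of_pos_left h3 hp
  rw [← mul_assoc, mul_inv_cancel₀ hp.ne', one_mul] at this
  linarith

set_option maxHeartbeats 2000000 in
theorem carleman (hs : ∀ a b x, γ a b x = γ b a x) (hγ : ∀ a b, ContDiff ℝ (⊤ : ℕ∞) (γ a b))
    {φ : Pt n → ℝ} (hφ : ContDiff ℝ (⊤ : ℕ∞) φ) (σ : ℝ) (x0 : Pt n)
    (hB : ∀ ξ : Pt n, ξ ≠ 0 → 0 < ∑ b, ∑ c, bqV γ φ σ b c x0 * ξ b * ξ c)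
    (hZ : 0 < (1/2) * (∑ c, thV γ φ c x0 * pd c (nnV γ φ) x0) - σ * nnV γ φ x0) :
    ∃ r > 0, ∃ C > 0, ∃ τ0 : ℝ, 1 ≤ τ0 ∧ ∀ τ ≥ τ0, ∀ u : Pt n → ℝ, ContDiff ℝ 2 u →
      tsupport u ⊆ Metric.ball x0 r →
      τ * ∫ x, Real.exp (2 * τ * φ x) * (u x ^ 2 + ∑ a, pd a u x ^ 2) ≤
        C * ∫ x, Real.exp (2 * τ * φ x) * llV γ u x ^ 2 := by
  have hγ1 : ∀ a b, ContDiff ℝ 1 (γ a b) := fun a b => (hγ a b).of_le (by norm_cast)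
  have ctφ : ∀ a, ContDiff ℝ (⊤ : ℕ∞) (thV γ φ a) := fun a => thV_cd hγ hφ (by norm_cast) a
  have cnφ : ContDiff ℝ (⊤ : ℕ∞) (nnV γ φ) := nnV_cd hγ hφ (by norm_cast)
  have clφ : ContDiff ℝ (⊤ : ℕ∞) (llV γ φ) := by
    unfold llV
    exact ContDiff.sum fun a _ => cd_pd_top (ctφ a)
  have hpc : ∀ {v : Pt n → ℝ} (a : Fin n), ContDiff ℝ (⊤ : ℕ∞) v → Continuous (pd a v) :=
    fun a hv => (cd_pd_top hv).continuous
  have cγ : ∀ a b, Continuous (γ a b) := fun a b => (hγ a b).continuous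
  have cγ' : ∀ d a b, Continuous (pd d (γ a b)) := fun d a b => hpc d (hγ a b)
  have cth : ∀ a, Continuous (thV γ φ a) := fun a => (ctφ a).continuous
  have cth' : ∀ d a, Continuous (pd d (thV γ φ a)) := fun d a => hpc d (ctφ a)
  have cn : Continuous (nnV γ φ) := cnφ.continuous
  have cn' : ∀ d, Continuous (pd d (nnV γ φ)) := fun d => hpc d cnφ
  have cl' : ∀ d, Continuous (pd d (llV γ φ)) := fun d => hpc d clφ
  have cφ : Continuous φ := hφ.continuous
  have cφ' : ∀ d, Continuous (pd d φ) := fun d => hpc d hφ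
  have cB : ∀ b c, Continuous (bqV γ φ σ b c) := by
    intro b c; unfold bqV; fun_prop
  obtain ⟨c1, hc1, hev1⟩ := qf_nhds cB hB
  set Z : Pt n → ℝ := fun x => (1/2) * (∑ c, thV γ φ c x * pd c (nnV γ φ) x) - σ * nnV γ φ x with hZdef
  have cZ : Continuous Z := by rw [hZdef]; fun_prop
  have hev2 : ∀ᶠ x in nhds x0, Z x0 / 2 < Z x :=
    cZ.continuousAt.eventually (lt_mem_nhds (half_lt_self hZ))
  set kk : Fin n → Pt n → ℝ := fun b x => ∑ a, (1/2) * pd a (llV γ φ) x * γ a b x with hkk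
  have ck : Continuous (fun x => ∑ b, kk b x ^ 2) := by rw [hkk]; fun_prop
  set K : ℝ := ∑ b, kk b x0 ^ 2 + 1 with hK
  have hK0 : 0 < K := by positivity
  have hev3 : ∀ᶠ x in nhds x0, ∑ b, kk b x ^ 2 < K :=
    ck.continuousAt.eventually (gt_mem_nhds (by rw [hK]; linarith))
  set F0 : ℝ := ∑ b, pd b φ x0 ^ 2 + 1 with hF0
  have hF00 : 0 < F0 := by positivity
  have cF : Continuous (fun x => ∑ b, pd b φ x ^ 2) := by fun_prop
  have hev4 : ∀ᶠ x in nhds x0, ∑ b, pd b φ x ^ 2 < F0 :=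
    cF.continuousAt.eventually (gt_mem_nhds (by rw [hF0]; linarith))
  obtain ⟨r, hr, hball⟩ := Metric.eventually_nhds_iff_ball.1
    (hev1.and (hev2.and (hev3.and hev4)))
  set c : ℝ := min c1 (Z x0 / 2) with hc
  have hc0 : 0 < c := lt_min hc1 (half_pos hZ)
  set C2 : ℝ := (2 * F0 + 2) / (2 * c) with hC2
  have hC20 : 0 < C2 := by positivity
  set τ0 : ℝ := 1 + (2 * K / c + 8 * σ ^ 2) / (2 * c) with hτ0
  have hτ01 : 1 ≤ τ0 := by rw [hτ0]; have : 0 ≤ (2 * K / c + 8 * σ ^ 2) / (2 * c) := by positivity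
                           linarith
  refine ⟨r, hr, 2 * C2, by positivity, τ0, hτ01, ?_⟩
  intro τ hτ u hu hsupp
  have hτ1 : 1 ≤ τ := hτ01.trans hτ
  set w : Pt n → ℝ := fun x => Real.exp (τ * φ x) * u x with hw
  have hφ2 : ContDiff ℝ 2 φ := hφ.of_le (by norm_cast)
  have cw : ContDiff ℝ 2 w := by
    rw [hw]; exact ((contDiff_const.mul hφ2).exp).mul hu
  have huw : u = fun y => Real.exp (-τ * φ y) * w y := by
    funext y; simp only [hw]; rw [← mul_assoc, ← Real.exp_add]; simp
  have hcu : HasCompactSupport u :=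
    HasCompactSupport.of_support_subset_isCompact (isCompact_closedBall x0 r)
      ((subset_tsupport u).trans (hsupp.trans Metric.ball_subset_closedBall))
  have hcw : HasCompactSupport w := hcu.mul_left
  have du : Differentiable ℝ u := hu.differentiable (by simp)
  have dφ : Differentiable ℝ φ := hφ.differentiable (by simp)
  have cu' : ∀ a, Continuous (pd a u) := fun a => (cd_pd (m := 1) hu (by norm_num)).continuous
  have cw' : ∀ a, Continuous (pd a w) := fun a => (cd_pd (m := 1) cw (by norm_num)).continuous
  have hwsupp : ∀ x, x ∉ Metric.ball x0 r → u =ᶠ[nhds x] fun _ => 0 := fun x hx =>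
    notMem_tsupport_iff_eventuallyEq.1 (fun h => hx (hsupp h))
  -- numeric inequality
  have hnum : 2 * c * τ ^ 3 ≤ 4 * τ * (c * τ ^ 2 - K / (2 * c)) - 8 * τ ^ 2 * σ ^ 2 := by
    have h1 : (2 * K / c + 8 * σ ^ 2) / (2 * c) ≤ τ := by rw [hτ0] at hτ; linarith
    rw [div_le_iff₀ (by positivity)] at h1
    have h2 : 2 * K / c * τ + 8 * σ ^ 2 * τ ^ 2 ≤ τ * (2 * c) * τ ^ 2 := by
      have h3 : (2 * K / c + 8 * σ ^ 2) * τ ^ 2 ≤ τ * (2 * c) * τ ^ 2 := by gcongr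
      have h4 : 2 * K / c * τ ≤ 2 * K / c * τ ^ 2 := by
        have : τ ≤ τ ^ 2 := le_self_pow₀ hτ1 (by norm_num)
        gcongr
      linarith
    have h5 : 4 * τ * (K / (2 * c)) = 2 * K / c * τ := by field_simp; ring
    have h6 : 4 * τ * (c * τ ^ 2 - K / (2 * c)) = 4 * c * τ ^ 3 - 2 * K / c * τ := by
      rw [mul_sub, h5]; ring
    rw [h6]
    linarith
  -- derivative of u in terms of w
  have hpw : ∀ a x, Real.exp (τ * φ x) * pd a u x = pd a w x - τ * (pd a φ x * w x) := by
    intro a x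
    have hpe : pd a (fun y => Real.exp (τ * φ y)) x
      = τ * Real.exp (τ * φ x) * pd a φ x := by
      unfold pd
      have := fderiv_exp (f := fun y => τ * φ y) (x := x) ((dφ x).const_mul _)
      rw [this, fderiv_const_mul (dφ x)]
      simp; ring
    simp only [hw]
    rw [pd_mul (((dφ x).const_mul _).exp) (du x), hpe]; ring
  have hexp : ∀ x, Real.exp (2 * τ * φ x) = Real.exp (τ * φ x) ^ 2 := by
    intro x; rw [← Real.exp_nat_mul]; congr 1; push_cast; ring
  -- pointwise inequality
  have hpt : ∀ x, τ * (Real.exp (2 * τ * φ x) * (u x ^ 2 + ∑ a, pd a u x ^ 2)) ≤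
      C2 * (2 * (Real.exp (2 * τ * φ x) * llV γ u x ^ 2)
        - 4 * τ * ∑ a, pd a (fluxV γ φ w σ τ a) x) := by
    intro x
    set s : ℝ := ∑ a, pd a w x ^ 2 with hsdef
    have hs0 : 0 ≤ s := Finset.sum_nonneg fun _ _ => sq_nonneg _
    set Q : ℝ := (∑ b, ∑ c, bqV γ φ σ b c x * pd b w x * pd c w x)
      + w x * (∑ a, (1/2) * pd a (llV γ φ) x * thV γ w a x)
      + τ ^ 2 * Z x * (w x * w x) with hQ
    have hkw : ∑ a, (1/2) * pd a (llV γ φ) x * thV γ w a x = ∑ b, kk b x * pd b w x := by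
      simp only [hkk, thV, Finset.mul_sum, Finset.sum_mul]
      rw [Finset.sum_comm]
      exact Finset.sum_congr rfl fun a _ => Finset.sum_congr rfl fun b _ => by ring
    have hlow : (c / 2) * s + (c * τ ^ 2 - K / (2 * c)) * w x ^ 2 ≤ Q ∧
        (∑ a, (pd a φ x * w x) ^ 2) ≤ F0 * w x ^ 2 := by
      by_cases hx : x ∈ Metric.ball x0 r
      · obtain ⟨h1, h2, h3, h4⟩ := hball x hx
        have q1 := h1 (fun a => pd a w x)
        have q1' : c * s ≤ c1 * s := by gcongr; exact min_le_left _ _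
        have q2 : c ≤ Z x := (min_le_right _ _).trans h2.le
        have q3 : -(c / 2 * s) - K / (2 * c) * w x ^ 2 ≤ w x * ∑ b, kk b x * pd b w x := by
          have t1 : ∀ b, -(c / 2 * pd b w x ^ 2) - kk b x ^ 2 / (2 * c) * w x ^ 2
              ≤ w x * (kk b x * pd b w x) := by
            intro b
            have : 0 ≤ (c * pd b w x + kk b x * w x) ^ 2 / (2 * c) := by positivity
            have e : (c * pd b w x + kk b x * w x) ^ 2 / (2 * c) = c / 2 * pd b w x ^ 2
              + kk b x ^ 2 / (2 * c) * w x ^ 2 + w x * (kk b x * pd b w x) := by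
              field_simp; ring
            linarith
          have t2 := Finset.sum_le_sum (s := Finset.univ) fun b _ => t1 b
          rw [Finset.sum_sub_distrib, Finset.sum_neg_distrib, ← Finset.mul_sum, ← Finset.mul_sum,
            ← Finset.sum_mul, ← Finset.sum_div] at t2
          have t3 : (∑ b, kk b x ^ 2) / (2 * c) * w x ^ 2 ≤ K / (2 * c) * w x ^ 2 := by gcongr
          linarith
        have q4 : τ ^ 2 * c * (w x * w x) ≤ τ ^ 2 * Z x * (w x * w x) := by
          have := mul_self_nonneg (w x)
          gcongr
        refine ⟨?_, ?_⟩
        · rw [hQ, hkw]; linarith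
        · simp only [mul_pow, ← Finset.sum_mul]; gcongr
      · have hu0 := hwsupp x hx
        have hw0 : w =ᶠ[nhds x] fun _ => 0 := by
          filter_upwards [hu0] with y hy; simp [hw, hy]
        have hwx : w x = 0 := hw0.self_of_nhds
        have hwa : ∀ a, pd a w x = 0 := fun a => by rw [pd_congr hw0, pd_const]
        simp [hQ, hsdef, hwx, hwa]
    obtain ⟨hlow, hF⟩ := hlow
    have hid := flux_id hs hγ hφ cw σ τ x
    have hconj := conj_id hs hγ hφ cw τ x
    rw [← huw] at hconj
    set m := ∑ c, thV γ φ c x * pd c w x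
    set A := Real.exp (τ * φ x) * llV γ u x with hA
    have hAeq : A = llV γ w x - 2 * τ * m - τ * llV γ φ x * w x + τ ^ 2 * nnV γ φ x * w x := by
      rw [hA, hconj, ← mul_assoc, ← Real.exp_add]; simp
    have hAA : Real.exp (2 * τ * φ x) * llV γ u x ^ 2 = A ^ 2 := by rw [hexp, hA]; ring
    have hmain : 4 * τ * ((∑ a, pd a (fluxV γ φ w σ τ a) x) + Q) ≤ 2 * A ^ 2 + 8 * τ ^ 2 * σ ^ 2 * w x ^ 2 := by
      have hid' : (∑ a, pd a (fluxV γ φ w σ τ a) x) + Q = -((llV γ w x + τ ^ 2 * nnV γ φ x * w x) *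
        (m + ((1/2) * llV γ φ x + σ) * w x)) := by rw [hid, hQ, hZdef]; ring
      rw [hid']
      set S := llV γ w x + τ ^ 2 * nnV γ φ x * w x
      set M := m + ((1/2) * llV γ φ x + σ) * w x with hM
      have : A - 2 * τ * σ * w x = S - 2 * τ * M := by rw [hAeq, hM]; ring
      have t1 : (A - 2 * τ * σ * w x) ^ 2 = (S - 2 * τ * M) ^ 2 := by rw [this]
      have t2 := sq_nonneg S
      have t3 := sq_nonneg (2 * τ * M)
      have t4 := sq_nonneg (A + 2 * τ * σ * w x)
      linarith
    have hL : τ * (Real.exp (2 * τ * φ x) * (u x ^ 2 + ∑ a, pd a u x ^ 2)) ≤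
        2 * τ * s + (2 * F0 + 1) * τ ^ 3 * w x ^ 2 := by
      have e1 : Real.exp (2 * τ * φ x) * (u x ^ 2 + ∑ a, pd a u x ^ 2) =
          w x ^ 2 + ∑ a, (pd a w x - τ * (pd a φ x * w x)) ^ 2 := by
        simp only [← hpw, mul_pow, ← Finset.mul_sum, hexp]
        rw [show w x = Real.exp (τ * φ x) * u x from rfl]; ring
      have e2 : ∑ a, (pd a w x - τ * (pd a φ x * w x)) ^ 2 ≤
          2 * s + 2 * τ ^ 2 * ∑ a, (pd a φ x * w x) ^ 2 := by
        rw [hsdef, Finset.mul_sum, Finset.mul_sum, ← Finset.sum_add_distrib]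
        refine Finset.sum_le_sum fun a _ => ?_
        linarith [sq_nonneg (pd a w x + τ * (pd a φ x * w x))]
      have e3 : 2 * τ ^ 2 * ∑ a, (pd a φ x * w x) ^ 2 ≤ 2 * τ ^ 2 * (F0 * w x ^ 2) := by gcongr
      have e4 : τ * w x ^ 2 ≤ τ ^ 3 * w x ^ 2 := by
        have : τ ≤ τ ^ 3 := le_self_pow₀ hτ1 (by norm_num)
        gcongr
      rw [e1]
      have : τ * (w x ^ 2 + ∑ a, (pd a w x - τ * (pd a φ x * w x)) ^ 2) ≤
        τ * (w x ^ 2 + (2 * s + 2 * τ ^ 2 * (F0 * w x ^ 2))) := by gcongr; linarith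
      linarith
    have hfin : 2 * c * τ * s + 2 * c * τ ^ 3 * w x ^ 2 ≤
        2 * A ^ 2 - 4 * τ * ∑ a, pd a (fluxV γ φ w σ τ a) x := by
      have h1 := mul_le_mul_of_nonneg_left hlow (show (0:ℝ) ≤ 4 * τ by linarith)
      have h2 := mul_le_mul_of_nonneg_right hnum (sq_nonneg (w x))
      linarith
    rw [hAA]
    refine hL.trans ?_
    refine le_trans ?_ (mul_le_mul_of_nonneg_left hfin hC20.le)
    have e : C2 * (2 * c * τ * s + 2 * c * τ ^ 3 * w x ^ 2) =
      (2 * F0 + 2) * τ * s + (2 * F0 + 2) * τ ^ 3 * w x ^ 2 := by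
      rw [hC2]; field_simp
    rw [e]
    have p1 : 0 ≤ F0 * (τ * s) := by positivity
    have p2 : 0 ≤ τ ^ 3 * w x ^ 2 := by positivity
    linarith
  -- integrate
  have cfl : ∀ a, ContDiff ℝ 1 (fluxV γ φ w σ τ a) := by
    intro a
    have a1 : ∀ a, ContDiff ℝ 1 (thV γ w a) := fun a => thV_cd hγ1 cw (by norm_num) a
    have a2 : ContDiff ℝ 1 (nnV γ w) := nnV_cd hγ1 cw (by norm_num)
    have a3 : ∀ a, ContDiff ℝ 1 (thV γ φ a) := fun a => (ctφ a).of_le (by norm_cast)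
    have a4 : ContDiff ℝ 1 (nnV γ φ) := cnφ.of_le (by norm_cast)
    have a5 : ContDiff ℝ 1 (llV γ φ) := clφ.of_le (by norm_cast)
    have a6 : ContDiff ℝ 1 w := cw.of_le (by norm_num)
    have a7 : ∀ a, ContDiff ℝ 1 (pd a w) := fun a => cd_pd cw (by norm_num)
    unfold fluxV; fun_prop
  have hsupp_of : ∀ v : Pt n → ℝ, (∀ x, (u =ᶠ[nhds x] fun _ => 0) → v x = 0) →
      HasCompactSupport v := by
    intro v hv
    refine HasCompactSupport.of_support_subset_isCompact (isCompact_closedBall x0 r) ?_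
    intro x hx
    by_contra h
    exact hx (hv x (hwsupp x (fun h' => h (Metric.ball_subset_closedBall h'))))
  have hw_of : ∀ x, (u =ᶠ[nhds x] fun _ => 0) → w =ᶠ[nhds x] fun _ => 0 := by
    intro x hx; filter_upwards [hx] with y hy; simp [hw, hy]
  have sfl : ∀ a, HasCompactSupport (fluxV γ φ w σ τ a) := by
    intro a
    apply hsupp_of
    intro x hx
    have hw0 := hw_of x hx
    have hwx : w x = 0 := hw0.self_of_nhds
    have hwa : ∀ a, pd a w x = 0 := fun a => by rw [pd_congr hw0, pd_const]
    simp [fluxV, thV, nnV, hwx, hwa]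
  have ifl : ∫ x, ∑ a, pd a (fluxV γ φ w σ τ a) x = 0 := by
    rw [integral_finsetSum]
    · exact Finset.sum_eq_zero fun a _ => integral_pd (cfl a) (sfl a)
    · intro a _
      exact (cd_pd (m := 0) (cfl a) (by norm_num)).continuous.integrable_of_hasCompactSupport
        (hcs_pd (sfl a))
  have ifl' : Integrable (fun x => ∑ a, pd a (fluxV γ φ w σ τ a) x) := by
    refine integrable_finsetSum _ fun a _ => ?_
    exact (cd_pd (m := 0) (cfl a) (by norm_num)).continuous.integrable_of_hasCompactSupport
        (hcs_pd (sfl a))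
  have cll : Continuous (llV γ u) := by
    unfold llV
    refine continuous_finsetSum _ fun a _ => ?_
    exact (cd_pd (m := 0) (thV_cd hγ1 hu (by norm_num) a) (by norm_num)).continuous
  have cu : Continuous u := hu.continuous
  have i1 : Integrable (fun x => Real.exp (2 * τ * φ x) * (u x ^ 2 + ∑ a, pd a u x ^ 2)) := by
    refine Continuous.integrable_of_hasCompactSupport (by fun_prop) (hsupp_of _ ?_)
    intro x hx
    simp [hx.self_of_nhds, pd_congr hx, pd_const]
  have i2 : Integrable (fun x => Real.exp (2 * τ * φ x) * llV γ u x ^ 2) := by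
    refine Continuous.integrable_of_hasCompactSupport (by fun_prop) (hsupp_of _ ?_)
    intro x hx
    have : llV γ u x = 0 := by
      unfold llV
      refine Finset.sum_eq_zero fun a _ => ?_
      have : thV γ u a =ᶠ[nhds x] fun _ => 0 := by
        filter_upwards [hx.eventuallyEq_nhds] with y hy
        simp [thV, pd_congr hy, pd_const]
      rw [pd_congr this, pd_const]
    simp [this]
  have := integral_mono (i1.const_mul τ) (((i2.const_mul 2).sub (ifl'.const_mul (4 * τ))).const_mul C2) hpt
  rw [integral_const_mul, integral_const_mul] at this
  simp only [Pi.sub_apply] at this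
  rw [integral_sub (i2.const_mul 2) (ifl'.const_mul (4 * τ)), integral_const_mul,
    integral_const_mul, ifl] at this
  linarith
end Carl2

section Weight
variable {n : ℕ} {γ : Fin n → Fin n → Pt n → ℝ}

theorem pd_coord (a i : Fin n) (x : Pt n) : pd a (fun y => y i) x = if i = a then 1 else 0 := by
  unfold pd
  have : (fun y : Pt n => y i) = (ContinuousLinearMap.proj (R := ℝ) (φ := fun _ => ℝ) i) := rfl
  rw [this, ContinuousLinearMap.fderiv]
  simp [Pi.single_apply]

theorem pd_thV (hγ : ∀ a b, ContDiff ℝ (⊤ : ℕ∞) (γ a b)) {w : Pt n → ℝ} (hw : ContDiff ℝ 2 w)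
    (a b : Fin n) (x : Pt n) :
    pd a (thV γ w b) x = ∑ c, (pd a (γ b c) x * pd c w x + γ b c x * pd a (pd c w) x) := by
  have dγ : ∀ a b, Differentiable ℝ (γ a b) := fun a b => (hγ a b).differentiable (by simp)
  have dpw : ∀ a, Differentiable ℝ (pd a w) := fun a =>
    (cd_pd (m := 1) hw (by norm_num)).differentiable (by simp)
  unfold thV
  rw [pd_sum (fun c _ => by fun_prop)]
  exact Finset.sum_congr rfl fun c _ => pd_mul (dγ b c x) (dpw c x)

theorem pd_nnV (hs : ∀ a b x, γ a b x = γ b a x) (hγ : ∀ a b, ContDiff ℝ (⊤ : ℕ∞) (γ a b))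
    {w : Pt n → ℝ} (hw : ContDiff ℝ 2 w) (a : Fin n) (x : Pt n) :
    pd a (nnV γ w) x =
      (∑ b, ∑ c, pd a (γ b c) x * pd b w x * pd c w x) + 2 * ∑ b, thV γ w b x * pd a (pd b w) x := by
  have hγ1 : ∀ a b, ContDiff ℝ 1 (γ a b) := fun a b => (hγ a b).of_le (by norm_cast)
  have dpw : ∀ a, Differentiable ℝ (pd a w) := fun a =>
    (cd_pd (m := 1) hw (by norm_num)).differentiable (by simp)
  have dtw : ∀ a, Differentiable ℝ (thV γ w a) := fun a =>
    (thV_cd hγ1 hw (by norm_num) a).differentiable (by simp)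
  unfold nnV
  rw [pd_sum (fun c _ => by fun_prop)]
  have : ∀ b, pd a (fun y => thV γ w b y * pd b w y) x =
      (∑ c, pd a (γ b c) x * pd b w x * pd c w x) + (∑ c, γ b c x * pd a (pd c w) x * pd b w x)
       + thV γ w b x * pd a (pd b w) x := by
    intro b
    rw [pd_mul (dtw b x) (dpw b x), pd_thV hγ hw, Finset.sum_add_distrib, add_mul, Finset.sum_mul,
      Finset.sum_mul]
    congr 2
    exact Finset.sum_congr rfl fun c _ => by ring
  simp only [this, Finset.sum_add_distrib]
  have h4 : ∑ b, ∑ c, γ b c x * pd a (pd c w) x * pd b w x = ∑ b, thV γ w b x * pd a (pd b w) x := by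
    rw [Finset.sum_comm]
    refine Finset.sum_congr rfl fun c _ => ?_
    unfold thV
    rw [Finset.sum_mul]
    refine Finset.sum_congr rfl fun b _ => ?_
    rw [hs b c]; ring
  rw [h4]; ring

/-- The basic quadratic function. -/
def psiV (x0 y : Pt n) (x : Pt n) : ℝ := ∑ i, ((x i - x0 i) * y i - (x i - x0 i) ^ 2)

theorem psiV_cd (x0 y : Pt n) : ContDiff ℝ (⊤ : ℕ∞) (psiV x0 y) := by
  unfold psiV; fun_prop

theorem pd_psiV (x0 y x : Pt n) (a : Fin n) : pd a (psiV x0 y) x = y a - 2 * (x a - x0 a) := by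
  unfold psiV
  rw [pd_sum (fun c _ => by fun_prop)]
  have : ∀ i, pd a (fun x : Pt n => (x i - x0 i) * y i - (x i - x0 i) ^ 2) x
      = if i = a then y i - 2 * (x i - x0 i) else 0 := by
    intro i
    have h1 : pd a (fun x : Pt n => x i - x0 i) x = if i = a then 1 else 0 := by
      rw [pd_sub (by fun_prop) (by fun_prop), pd_coord, pd_const, sub_zero]
    simp only [pow_two]
    rw [pd_sub (by fun_prop) (by fun_prop), pd_mul (by fun_prop) (by fun_prop), h1, pd_const,
      pd_mul (by fun_prop) (by fun_prop), h1]
    split_ifs <;> ring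
  simp [this]

/-- The weight. -/
def phiV (x0 y : Pt n) (l : ℝ) (x : Pt n) : ℝ := psiV x0 y x + l / 2 * (psiV x0 y x * psiV x0 y x)

theorem phiV_cd (x0 y : Pt n) (l : ℝ) : ContDiff ℝ (⊤ : ℕ∞) (phiV x0 y l) := by
  have := psiV_cd x0 y
  unfold phiV; fun_prop

theorem pd_phiV (x0 y : Pt n) (l : ℝ) (a : Fin n) :
    pd a (phiV x0 y l) = fun x => (1 + l * psiV x0 y x) * (y a - 2 * (x a - x0 a)) := by
  have h : Differentiable ℝ (psiV x0 y) := (psiV_cd x0 y).differentiable (by simp)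
  funext x
  unfold phiV
  rw [pd_add (by fun_prop) (by fun_prop), pd_cmul (by fun_prop), pd_mul (by fun_prop) (by fun_prop),
    pd_psiV]
  ring

theorem psiV_self (x0 y : Pt n) : psiV x0 y x0 = 0 := by simp [psiV]

theorem pd_phiV_self (x0 y : Pt n) (l : ℝ) (a : Fin n) : pd a (phiV x0 y l) x0 = y a := by
  rw [pd_phiV]; simp [psiV_self]

theorem pd_pd_phiV_self (x0 y : Pt n) (l : ℝ) (a d : Fin n) :
    pd a (pd d (phiV x0 y l)) x0 = l * y a * y d - if d = a then 2 else 0 := by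
  have h : Differentiable ℝ (psiV x0 y) := (psiV_cd x0 y).differentiable (by simp)
  rw [pd_phiV, pd_mul (by fun_prop) (by fun_prop), pd_add (by fun_prop) (by fun_prop), pd_const,
    pd_cmul (by fun_prop), pd_psiV, psiV_self, pd_sub (by fun_prop) (by fun_prop), pd_const,
    pd_cmul (by fun_prop), pd_sub (by fun_prop) (by fun_prop), pd_const, pd_coord]
  split_ifs <;> simp <;> ring

theorem qf_bound (B : Fin n → Fin n → ℝ) (ξ : Pt n) :
    -((∑ b, ∑ c, |B b c|) * ∑ i, ξ i ^ 2) ≤ ∑ b, ∑ c, B b c * ξ b * ξ c := by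
  rw [Finset.sum_mul, ← Finset.sum_neg_distrib]
  refine Finset.sum_le_sum fun b _ => ?_
  rw [Finset.sum_mul, ← Finset.sum_neg_distrib]
  refine Finset.sum_le_sum fun c _ => ?_
  have h1 : |B b c * ξ b * ξ c| ≤ |B b c| * ∑ i, ξ i ^ 2 := by
    rw [mul_assoc, abs_mul]
    refine mul_le_mul_of_nonneg_left ?_ (abs_nonneg _)
    have hb : ξ b ^ 2 ≤ ∑ i, ξ i ^ 2 := Finset.single_le_sum (f := fun i => ξ i ^ 2)
      (fun _ _ => sq_nonneg _) (Finset.mem_univ b)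
    have hc : ξ c ^ 2 ≤ ∑ i, ξ i ^ 2 := Finset.single_le_sum (f := fun i => ξ i ^ 2)
      (fun _ _ => sq_nonneg _) (Finset.mem_univ c)
    rw [abs_le]
    constructor <;> nlinarith [sq_nonneg (ξ b + ξ c), sq_nonneg (ξ b - ξ c)]
  linarith [neg_abs_le (B b c * ξ b * ξ c)]

theorem weight_exists (hs : ∀ a b x, γ a b x = γ b a x)
    (hγ : ∀ a b, ContDiff ℝ (⊤ : ℕ∞) (γ a b)) (x0 y : Pt n) (hy : y ≠ 0)
    (hpos : ∀ ξ : Pt n, ξ ≠ 0 → 0 < ∑ a, ∑ b, γ a b x0 * ξ a * ξ b) :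
    ∃ l > 0, ∃ σ : ℝ,
      (∀ ξ : Pt n, ξ ≠ 0 → 0 < ∑ b, ∑ c, bqV γ (phiV x0 y l) σ b c x0 * ξ b * ξ c) ∧
      0 < (1/2) * (∑ c, thV γ (phiV x0 y l) c x0 * pd c (nnV γ (phiV x0 y l)) x0)
        - σ * nnV γ (phiV x0 y l) x0 := by
  obtain ⟨c0, hc0, hev⟩ := qf_nhds (fun a b => (hγ a b).continuous) hpos
  have hco := hev.self_of_nhds
  set θ : Fin n → ℝ := fun c => ∑ d, γ c d x0 * y d with hθ
  set B0 : Fin n → Fin n → ℝ := fun b c => (∑ a, γ a b x0 * ∑ d, pd a (γ c d) x0 * y d)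
    - 2 * (∑ d, γ d b x0 * γ c d x0) - (1/2) * ∑ a, θ a * pd a (γ b c) x0 with hB0
  set C1 := ∑ b, ∑ c, |B0 b c| with hC1
  set σ := (C1 + 1) / c0 with hσ
  set N := ∑ c, θ c * y c with hN
  have hN0 : 0 < N := by
    have := hpos y hy
    rw [hN, hθ]
    simp only [Finset.sum_mul]
    exact lt_of_lt_of_eq this (Finset.sum_congr rfl fun a _ => Finset.sum_congr rfl fun b _ => by ring)
  set Z0 := (1/2) * ∑ c, θ c * ∑ a, ∑ b, pd c (γ a b) x0 * y a * y b with hZ0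
  set l := (|Z0| + 2 * (∑ c, θ c ^ 2) + |σ| * N + 1) / N ^ 2 with hl
  have hl0 : 0 < l := by positivity
  have hφ2 : ContDiff ℝ 2 (phiV x0 y l) := (phiV_cd x0 y l).of_le (by norm_cast)
  have hth : ∀ c, thV γ (phiV x0 y l) c x0 = θ c := by
    intro c; simp [thV, hθ, pd_phiV_self]
  have hnn : nnV γ (phiV x0 y l) x0 = N := by
    simp [nnV, hth, hN, pd_phiV_self]
  refine ⟨l, hl0, σ, ?_, ?_⟩
  · intro ξ hξ
    have hpth : ∀ a c, pd a (thV γ (phiV x0 y l) c) x0 =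
        (∑ d, pd a (γ c d) x0 * y d) + l * y a * θ c - 2 * γ c a x0 := by
      intro a c
      rw [pd_thV hγ hφ2, Finset.sum_add_distrib]
      simp only [pd_phiV_self, pd_pd_phiV_self, mul_sub, Finset.sum_sub_distrib, hθ]
      simp only [mul_ite, mul_zero, Finset.sum_ite_eq', Finset.mem_univ, if_true, Finset.mul_sum]
      have : ∀ x, γ c x x0 * (l * y a * y x) = l * y a * (γ c x x0 * y x) := fun x => by ring
      simp only [this]; ring
    have hbq : ∀ b c, bqV γ (phiV x0 y l) σ b c x0 = B0 b c + l * (θ b * θ c) + σ * γ b c x0 := by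
      intro b c
      have h1 : ∑ a, γ a b x0 * pd a (thV γ (phiV x0 y l) c) x0 =
          (∑ a, γ a b x0 * ∑ d, pd a (γ c d) x0 * y d) + l * (θ b * θ c)
          - 2 * (∑ d, γ d b x0 * γ c d x0) := by
        simp only [hpth, mul_sub, mul_add, Finset.sum_sub_distrib, Finset.sum_add_distrib]
        have h2 : ∑ a, γ a b x0 * (l * y a * θ c) = l * (θ b * θ c) := by
          rw [show θ b = ∑ d, γ b d x0 * y d from rfl, Finset.sum_mul, Finset.mul_sum]
          refine Finset.sum_congr rfl fun a _ => ?_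
          rw [hs a b]; ring
        have h2' : ∑ a, γ a b x0 * (2 * γ c a x0) = 2 * ∑ d, γ d b x0 * γ c d x0 := by
          rw [Finset.mul_sum]; exact Finset.sum_congr rfl fun a _ => by ring
        rw [h2, h2']
      unfold bqV
      simp only [hth]
      rw [h1, hB0]; ring
    have h3 : ∑ b, ∑ c, bqV γ (phiV x0 y l) σ b c x0 * ξ b * ξ c =
        (∑ b, ∑ c, B0 b c * ξ b * ξ c) + l * (∑ b, θ b * ξ b) ^ 2
        + σ * ∑ b, ∑ c, γ b c x0 * ξ b * ξ c := by
      rw [pow_two, Finset.sum_mul_sum]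
      simp only [Finset.mul_sum, ← Finset.sum_add_distrib, hbq]
      exact Finset.sum_congr rfl fun b _ => Finset.sum_congr rfl fun c _ => by ring
    rw [h3]
    have h4 := qf_bound B0 ξ
    have hC10 : 0 ≤ C1 := by positivity
    have hσ0 : 0 < σ := by positivity
    have h5 := mul_le_mul_of_nonneg_left (hco ξ) hσ0.le
    have h6 : σ * (c0 * ∑ i, ξ i ^ 2) = (C1 + 1) * ∑ i, ξ i ^ 2 := by
      rw [hσ]; field_simp
    have h7 := sumsq_pos hξ
    have h8 : 0 ≤ l * (∑ b, θ b * ξ b) ^ 2 := by positivity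
    linarith
  · have h1 : ∀ c, pd c (nnV γ (phiV x0 y l)) x0 =
        (∑ a, ∑ b, pd c (γ a b) x0 * y a * y b) + 2 * l * N * y c - 4 * θ c := by
      intro c
      rw [pd_nnV hs hγ hφ2]
      simp only [hth, pd_phiV_self, pd_pd_phiV_self, mul_sub, Finset.sum_sub_distrib, hN,
        mul_ite, mul_zero, Finset.sum_ite_eq', Finset.mem_univ, if_true, Finset.mul_sum,
        Finset.sum_mul]
      have : ∀ x, 2 * (θ x * (l * y c * y x)) = 2 * l * (θ x * y x) * y c := fun x => by ring
      simp only [this]; ring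
    rw [hnn]
    simp only [hth, h1]
    have h2 : (1/2) * ∑ c, θ c * ((∑ a, ∑ b, pd c (γ a b) x0 * y a * y b) + 2 * l * N * y c - 4 * θ c)
        = Z0 + l * N ^ 2 - 2 * ∑ c, θ c ^ 2 := by
      have : ∑ c, θ c * ((∑ a, ∑ b, pd c (γ a b) x0 * y a * y b) + 2 * l * N * y c - 4 * θ c)
          = (∑ c, θ c * ∑ a, ∑ b, pd c (γ a b) x0 * y a * y b) + 2 * l * N * (∑ c, θ c * y c)
            - 4 * ∑ c, θ c ^ 2 := by
        have gen : ∀ (A : Fin n → ℝ) (k : ℝ), ∑ c, θ c * (A c + k * y c - 4 * θ c) =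
            (∑ c, θ c * A c) + k * (∑ c, θ c * y c) - 4 * ∑ c, θ c ^ 2 := by
          intro A k
          rw [Finset.mul_sum, Finset.mul_sum, ← Finset.sum_add_distrib, ← Finset.sum_sub_distrib]
          exact Finset.sum_congr rfl fun c _ => by ring
        exact gen _ _
      rw [this, ← hN, hZ0]; ring
    rw [h2]
    have h3 : l * N ^ 2 = |Z0| + 2 * (∑ c, θ c ^ 2) + |σ| * N + 1 := by
      rw [hl]; field_simp
    rw [h3]
    have h4 : σ * N ≤ |σ| * N := by gcongr; exact le_abs_self σ
    linarith [neg_abs_le Z0]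
end Weight

section UCP
variable {n : ℕ} {γ : Fin n → Fin n → Pt n → ℝ}

/-- first order energy density -/
def e1V (u : Pt n → ℝ) (x : Pt n) : ℝ := u x ^ 2 + ∑ a, pd a u x ^ 2

theorem e1V_nonneg (u : Pt n → ℝ) (x : Pt n) : 0 ≤ e1V u x := by unfold e1V; positivity

theorem e1V_cont {u : Pt n → ℝ} (hu : ContDiff ℝ 2 u) : Continuous (e1V u) := by
  have := hu.continuous
  have h2 : ∀ a, Continuous (pd a u) := fun a => (cd_pd (m := 1) hu (by norm_num)).continuous
  unfold e1V
  fun_prop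

theorem e1V_congr {u v : Pt n → ℝ} {x : Pt n} (h : u =ᶠ[nhds x] v) : e1V u x = e1V v x := by
  unfold e1V
  rw [h.self_of_nhds]
  simp only [pd_congr h]

theorem llV_congr {u v : Pt n → ℝ} {x : Pt n} (h : u =ᶠ[nhds x] v) : llV γ u x = llV γ v x := by
  unfold llV
  refine Finset.sum_congr rfl fun c _ => pd_congr ?_
  have : ∀ d, pd d u =ᶠ[nhds x] pd d v := fun d => pd_eventually h
  have h3 : ∀ᶠ y in nhds x, ∀ d, pd d u y = pd d v y := eventually_all.2 this
  filter_upwards [h3] with y hy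
  simp [thV, hy]

theorem llV_cont (hγ : ∀ a b, ContDiff ℝ (⊤ : ℕ∞) (γ a b)) {u : Pt n → ℝ} (hu : ContDiff ℝ 2 u) :
    Continuous (llV γ u) := by
  unfold llV
  refine continuous_finsetSum _ fun c _ => ?_
  have : ContDiff ℝ 1 (thV γ u c) :=
    thV_cd (fun a b => (hγ a b).of_le (by norm_cast)) hu (by norm_num) c
  exact (cd_pd (m := 0) this (by norm_num)).continuous

theorem llV_zero {u : Pt n → ℝ} {x : Pt n} (h : u =ᶠ[nhds x] fun _ => 0) : llV γ u x = 0 := by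
  rw [llV_congr h]
  have : ∀ c, thV γ (fun _ => 0) c = fun _ => 0 := fun c => by funext y; simp [thV, pd_const]
  simp [llV, this, pd_const]

theorem e1V_zero {u : Pt n → ℝ} {x : Pt n} (h : u =ᶠ[nhds x] fun _ => 0) : e1V u x = 0 := by
  rw [e1V_congr h]
  simp [e1V, pd_const]

theorem absorb {ι : Type*} [Fintype ι] {φ : Pt n → ℝ} (hφ : Continuous φ) {C K c τ0 : ℝ}
    (hC : 0 < C) (hK : 0 ≤ K)
    {E Y : ι → Pt n → ℝ} (hE : ∀ b, Continuous (E b)) (hY : ∀ b, Continuous (Y b))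
    (hEc : ∀ b, HasCompactSupport (E b)) (hYc : ∀ b, HasCompactSupport (Y b))
    (hE0 : ∀ b x, 0 ≤ E b x) (hY0 : ∀ b x, 0 ≤ Y b x)
    (hcar : ∀ τ ≥ τ0, ∀ b, τ * ∫ x, Real.exp (2 * τ * φ x) * E b x ≤
      C * ∫ x, Real.exp (2 * τ * φ x) * Y b x)
    (hor : ∀ x, (∑ b, Y b x) ≤ K * (∑ b, E b x) ∨ φ x ≤ -c) :
    ∀ x, -c < φ x → ∑ b, E b x = 0 := by
  set Es : Pt n → ℝ := fun x => ∑ b, E b x with hEs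
  set Ys : Pt n → ℝ := fun x => ∑ b, Y b x with hYs
  have cEs : Continuous Es := by fun_prop
  have cYs : Continuous Ys := by fun_prop
  have iE : ∀ b (w : Pt n → ℝ), Continuous w → Integrable (fun x => w x * E b x) := fun b w hw =>
    (hw.mul (hE b)).integrable_of_hasCompactSupport ((hEc b).mul_left)
  have iY : ∀ b (w : Pt n → ℝ), Continuous w → Integrable (fun x => w x * Y b x) := fun b w hw =>
    (hw.mul (hY b)).integrable_of_hasCompactSupport ((hYc b).mul_left)
  have iEs : ∀ (w : Pt n → ℝ), Continuous w → Integrable (fun x => w x * Es x) := fun w hw => by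
    simp only [hEs, Finset.mul_sum]; exact integrable_finsetSum _ fun b _ => iE b w hw
  have iYs : ∀ (w : Pt n → ℝ), Continuous w → Integrable (fun x => w x * Ys x) := fun w hw => by
    simp only [hYs, Finset.mul_sum]; exact integrable_finsetSum _ fun b _ => iY b w hw
  have hEs0 : ∀ x, 0 ≤ Es x := fun x => Finset.sum_nonneg fun b _ => hE0 b x
  have hYs0 : ∀ x, 0 ≤ Ys x := fun x => Finset.sum_nonneg fun b _ => hY0 b x
  have cw : ∀ τ, Continuous fun x => Real.exp (2 * τ * φ x) := fun τ => by fun_prop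
  have hcarS : ∀ τ ≥ τ0, τ * ∫ x, Real.exp (2 * τ * φ x) * Es x ≤
      C * ∫ x, Real.exp (2 * τ * φ x) * Ys x := by
    intro τ hτ
    simp only [hEs, hYs, Finset.mul_sum]
    rw [integral_finsetSum _ fun b _ => iE b _ (cw τ), integral_finsetSum _ fun b _ => iY b _ (cw τ),
      Finset.mul_sum, Finset.mul_sum]
    exact Finset.sum_le_sum fun b _ => hcar τ hτ b
  set m : Pt n → ℝ := fun x => min 1 (max 0 (φ x + c)) with hm
  have cm : Continuous m := by fun_prop
  have hm0 : ∀ x, 0 ≤ m x := fun x => le_min zero_le_one (le_max_left _ _)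
  have key : ∀ τ : ℝ, τ0 ≤ τ → 0 < τ → 2 * C * K ≤ τ → τ * ∫ x, m x * Es x ≤ 2 * C * ∫ x, Ys x := by
    intro τ h1 h2 h3
    have hb : ∫ x, Real.exp (2 * τ * φ x) * Ys x ≤
        K * (∫ x, Real.exp (2 * τ * φ x) * Es x) + Real.exp (-(2 * τ * c)) * ∫ x, Ys x := by
      rw [← integral_const_mul, ← integral_const_mul, ← integral_add ((iEs _ (cw τ)).const_mul _)
        (by simpa using (iYs (fun _ => 1) continuous_const).const_mul (Real.exp (-(2 * τ * c))))]
      refine integral_mono (iYs _ (cw τ)) (((iEs _ (cw τ)).const_mul _).add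
        (by simpa using (iYs (fun _ => 1) continuous_const).const_mul (Real.exp (-(2 * τ * c))))) ?_
      intro x
      have he := Real.exp_pos (2 * τ * φ x)
      rcases hor x with h | h
      · have h4 := mul_le_mul_of_nonneg_left h he.le
        have h5 : 0 ≤ Real.exp (-(2 * τ * c)) * Ys x := mul_nonneg (Real.exp_pos _).le (hYs0 x)
        have h6 : K * (Real.exp (2 * τ * φ x) * Es x) = Real.exp (2 * τ * φ x) * (K * Es x) := by ring
        simp only [h6]
        exact h4.trans (le_add_of_nonneg_right h5)
      · have h4 : Real.exp (2 * τ * φ x) ≤ Real.exp (-(2 * τ * c)) := by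
          rw [Real.exp_le_exp]
          have := mul_le_mul_of_nonneg_left h (by positivity : 0 ≤ 2 * τ)
          linarith
        have h5 := mul_le_mul_of_nonneg_right h4 (hYs0 x)
        have h6 : 0 ≤ K * (Real.exp (2 * τ * φ x) * Es x) :=
          mul_nonneg hK (mul_nonneg he.le (hEs0 x))
        exact h5.trans (le_add_of_nonneg_left h6)
    have hc := hcarS τ h1
    set I := ∫ x, Real.exp (2 * τ * φ x) * Es x
    have hI0 : 0 ≤ I := integral_nonneg fun x => mul_nonneg (Real.exp_pos _).le (hEs0 x)
    have h4 : τ * I ≤ 2 * C * (Real.exp (-(2 * τ * c)) * ∫ x, Ys x) := by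
      have := mul_le_mul_of_nonneg_left hb hC.le
      have h5 := mul_le_mul_of_nonneg_right h3 hI0
      linarith
    have h5 : ∫ x, m x * Es x ≤ Real.exp (2 * τ * c) * I := by
      rw [← integral_const_mul]
      refine integral_mono (iEs m cm) ((iEs _ (cw τ)).const_mul _) ?_
      intro x
      have : m x ≤ Real.exp (2 * τ * c) * Real.exp (2 * τ * φ x) := by
        rw [← Real.exp_add]
        rcases le_or_gt (φ x + c) 0 with h | h
        · have : m x = 0 := by simp [hm, max_eq_left h]
          rw [this]; exact (Real.exp_pos _).le
        · refine (min_le_left _ _).trans (Real.one_le_exp ?_)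
          have : 0 ≤ 2 * τ * (φ x + c) := by positivity
          linarith
      have := mul_le_mul_of_nonneg_right this (hEs0 x)
      rw [mul_assoc] at this
      exact this
    calc τ * ∫ x, m x * Es x ≤ τ * (Real.exp (2 * τ * c) * I) := by gcongr
      _ = Real.exp (2 * τ * c) * (τ * I) := by ring
      _ ≤ Real.exp (2 * τ * c) * (2 * C * (Real.exp (-(2 * τ * c)) * ∫ x, Ys x)) := by gcongr
      _ = 2 * C * (∫ x, Ys x) * (Real.exp (2 * τ * c) * Real.exp (-(2 * τ * c))) := by ring
      _ = 2 * C * ∫ x, Ys x := by rw [← Real.exp_add]; simp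
  have hintg : ∫ x, m x * Es x ≤ 0 := by
    by_contra! hlt
    set J := ∫ x, m x * Es x
    set B := 2 * C * ∫ x, Ys x
    have := key (max (max τ0 1) (max (2 * C * K) ((|B| + 1) / J)))
      ((le_max_left _ _).trans (le_max_left _ _))
      (lt_of_lt_of_le one_pos ((le_max_right _ _).trans (le_max_left _ _)))
      ((le_max_left _ _).trans (le_max_right _ _))
    have h2 : (|B| + 1) / J * J ≤ B :=
      (mul_le_mul_of_nonneg_right ((le_max_right _ _).trans (le_max_right _ _)) hlt.le).trans this
    rw [div_mul_cancel₀ _ hlt.ne'] at h2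
    linarith [le_abs_self B]
  have hz : ∀ x, m x * Es x = 0 := by
    by_contra! hne
    obtain ⟨x, hx⟩ := hne
    have hcs : HasCompactSupport (fun x => m x * Es x) := by
      have : HasCompactSupport Es := by
        have h : Es = ∑ b, E b := by funext x; simp [hEs]
        rw [h]
        refine Finset.sum_induction _ HasCompactSupport (fun _ _ h1 h2 => h1.add h2)
          HasCompactSupport.zero fun b _ => hEc b
      exact this.mul_left
    have := (cm.mul cEs).integral_pos_of_hasCompactSupport_nonneg_nonzero (μ := volume) hcs
      (fun x => mul_nonneg (hm0 x) (hEs0 x)) (x := x) hx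
    exact absurd hintg (not_le.2 this)
  intro x hx
  rcases mul_eq_zero.1 (hz x) with h | h
  · exfalso
    have : 0 < m x := by
      simp only [hm]
      exact lt_min one_pos (lt_max_of_lt_right (by linarith))
    linarith
  · exact h

theorem ucp_local {ι : Type*} [Fintype ι] (hs : ∀ a b x, γ a b x = γ b a x)
    (hγ : ∀ a b, ContDiff ℝ (⊤ : ℕ∞) (γ a b)) {x0 z : Pt n} (hz : z ≠ x0)
    (hpos : ∀ ξ : Pt n, ξ ≠ 0 → 0 < ∑ a, ∑ b, γ a b x0 * ξ a * ξ b)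
    {W : ι → Pt n → ℝ} (hW : ∀ b, ContDiff ℝ 2 (W b)) {K : ℝ} (hK : 0 ≤ K)
    (hin : ∀ᶠ x in nhds x0, ∀ b, llV γ (W b) x ^ 2 ≤ K * ∑ c, e1V (W c) x)
    (hv : ∀ᶠ x in nhds x0, ∑ i, (x i - z i) ^ 2 < ∑ i, (x0 i - z i) ^ 2 → ∀ b, W b x = 0) :
    ∀ᶠ x in nhds x0, ∀ b, W b x = 0 := by
  set y : Pt n := z - x0 with hy
  have hy0 : y ≠ 0 := sub_ne_zero.2 hz
  obtain ⟨l, hl, σ, hB, hZ⟩ := weight_exists hs hγ x0 y hy0 hpos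
  obtain ⟨r1, hr1, C, hC, τ0, -, hcar⟩ := carleman hs hγ (phiV_cd x0 y l) σ x0 hB hZ
  have hps : ∀ᶠ x in nhds x0, -1 ≤ l * psiV x0 y x := by
    have : Continuous (fun x => l * psiV x0 y x) := continuous_const.mul (psiV_cd x0 y).continuous
    have h := this.tendsto x0
    rw [psiV_self] at h
    filter_upwards [h.eventually (lt_mem_nhds (show (-1 : ℝ) < l * 0 by simp))] with x hx using hx.le
  obtain ⟨r2, hr2, hball⟩ := Metric.eventually_nhds_iff_ball.1 (hin.and (hv.and hps))
  set r := min r1 r2 with hr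
  have hr0 : 0 < r := lt_min hr1 hr2
  have hin' : ∀ x ∈ Metric.ball x0 r, ∀ b, llV γ (W b) x ^ 2 ≤ K * ∑ c, e1V (W c) x := fun x hx =>
    (hball x (Metric.ball_subset_ball (min_le_right _ _) hx)).1
  have hv' : ∀ x ∈ Metric.ball x0 r, ∑ i, (x i - z i) ^ 2 < ∑ i, (x0 i - z i) ^ 2 →
      ∀ b, W b x = 0 := fun x hx =>
    (hball x (Metric.ball_subset_ball (min_le_right _ _) hx)).2.1
  have hps' : ∀ x ∈ Metric.ball x0 r, -1 ≤ l * psiV x0 y x := fun x hx =>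
    (hball x (Metric.ball_subset_ball (min_le_right _ _) hx)).2.2
  let χ : ContDiffBump x0 := ⟨r / 2, 3 * r / 4, by positivity, by linarith⟩
  have hχ : ContDiff ℝ 2 χ := χ.contDiff
  set u : ι → Pt n → ℝ := fun b x => χ x * W b x with hu
  have cu : ∀ b, ContDiff ℝ 2 (u b) := fun b => hχ.mul (hW b)
  have htsχ : tsupport χ = Metric.closedBall x0 (3 * r / 4) := χ.tsupport_eq
  have htu : ∀ b, tsupport (u b) ⊆ Metric.closedBall x0 (3 * r / 4) := fun b => by
    rw [← htsχ]; exact tsupport_mul_subset_left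
  have htu' : ∀ b, tsupport (u b) ⊆ Metric.ball x0 r1 := fun b =>
    (htu b).trans (Metric.closedBall_subset_ball (by
      have : r ≤ r1 := min_le_left _ _
      linarith))
  have hcu : ∀ b, HasCompactSupport (u b) := fun b =>
    (isCompact_closedBall x0 (3 * r / 4)).of_isClosed_subset (isClosed_tsupport _) (htu b)
  have hz0 : ∀ b x, x ∉ tsupport (u b) → u b =ᶠ[nhds x] fun _ => 0 := fun b x hx =>
    notMem_tsupport_iff_eventuallyEq.1 hx
  have hEc : ∀ b, HasCompactSupport (e1V (u b)) := fun b =>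
    HasCompactSupport.intro (hcu b) fun x hx => e1V_zero (hz0 b x hx)
  have hYc : ∀ b, HasCompactSupport (fun x => llV γ (u b) x ^ 2) := fun b =>
    HasCompactSupport.intro (hcu b) fun x hx => by simp [llV_zero (hz0 b x hx)]
  have hnear : ∀ x ∈ Metric.ball x0 (r / 2), ∀ b, u b =ᶠ[nhds x] W b := by
    intro x hx b
    filter_upwards [Metric.isOpen_ball.mem_nhds hx] with x' hx'
    have : χ x' = 1 := χ.one_of_mem_closedBall (Metric.ball_subset_closedBall hx')
    simp [hu, this]
  have hor : ∀ x, (∑ b, llV γ (u b) x ^ 2) ≤ (Fintype.card ι * K) * (∑ b, e1V (u b) x) ∨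
      phiV x0 y l x ≤ -(r ^ 2 / 16) := by
    intro x
    have hzero : (∀ b, u b =ᶠ[nhds x] fun _ => 0) →
        (∑ b, llV γ (u b) x ^ 2) ≤ (Fintype.card ι * K) * (∑ b, e1V (u b) x) := by
      intro h
      simp [fun b => llV_zero (γ := γ) (h b), fun b => e1V_zero (h b)]
    by_cases h1 : x ∈ Metric.ball x0 (r / 2)
    · left
      have e1 : ∀ b, llV γ (u b) x = llV γ (W b) x := fun b => llV_congr (hnear x h1 b)
      have e2 : ∀ b, e1V (u b) x = e1V (W b) x := fun b => e1V_congr (hnear x h1 b)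
      simp only [e1, e2]
      calc ∑ b, llV γ (W b) x ^ 2 ≤ ∑ b : ι, K * ∑ c, e1V (W c) x :=
            Finset.sum_le_sum fun b _ => hin' x (Metric.ball_subset_ball (by linarith) h1) b
        _ = _ := by simp; ring
    by_cases h2 : x ∈ Metric.ball x0 r
    swap
    · left
      refine hzero fun b => hz0 b x fun hx => h2 ?_
      exact Metric.closedBall_subset_ball (by linarith) (htu b hx)
    by_cases h3 : ∑ i, (x i - z i) ^ 2 < ∑ i, (x0 i - z i) ^ 2
    · left
      refine hzero fun b => ?_
      have ho : IsOpen {x : Pt n | ∑ i, (x i - z i) ^ 2 < ∑ i, (x0 i - z i) ^ 2} :=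
        isOpen_lt (by fun_prop) continuous_const
      filter_upwards [ho.mem_nhds h3, Metric.isOpen_ball.mem_nhds h2] with x' hx' hx''
      simp [hu, hv' x' hx'' hx' b]
    · right
      have hd : r ^ 2 / 4 ≤ ∑ i, (x i - x0 i) ^ 2 := by
        rw [Metric.mem_ball, not_lt] at h1
        by_contra! hlt
        have : dist x x0 < r / 2 := by
          rw [dist_pi_lt_iff (by positivity)]
          intro i
          rw [Real.dist_eq]
          refine abs_lt_of_sq_lt_sq ?_ (by positivity)
          have : (x i - x0 i) ^ 2 ≤ ∑ i, (x i - x0 i) ^ 2 :=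
            Finset.single_le_sum (f := fun i => (x i - x0 i) ^ 2) (fun _ _ => sq_nonneg _)
              (Finset.mem_univ i)
          linarith [show (r / 2) ^ 2 = r ^ 2 / 4 by ring]
        linarith
      have hpsi : psiV x0 y x ≤ -(∑ i, (x i - x0 i) ^ 2) / 2 := by
        have : (2:ℝ) * psiV x0 y x + ∑ i, (x i - x0 i) ^ 2 =
            (∑ i, (x0 i - z i) ^ 2) - ∑ i, (x i - z i) ^ 2 := by
          unfold psiV
          rw [Finset.mul_sum, ← Finset.sum_add_distrib, ← Finset.sum_sub_distrib]
          refine Finset.sum_congr rfl fun i _ => ?_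
          simp only [hy, Pi.sub_apply]; ring
        linarith
      have h5 := hps' x h2
      have h6 : psiV x0 y x ≤ 0 := by linarith [sq_nonneg r]
      have h7 : phiV x0 y l x = psiV x0 y x / 2 + psiV x0 y x * ((1 + l * psiV x0 y x) / 2) := by
        unfold phiV; ring
      have h8 : psiV x0 y x * ((1 + l * psiV x0 y x) / 2) ≤ 0 :=
        mul_nonpos_of_nonpos_of_nonneg h6 (by linarith)
      linarith
  have hfin := absorb (phiV_cd x0 y l).continuous hC (K := Fintype.card ι * K) (c := r ^ 2 / 16)
    (by positivity)
    (fun b => e1V_cont (cu b)) (fun b => (llV_cont hγ (cu b)).pow 2) hEc hYc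
    (fun b x => e1V_nonneg _ _) (fun b x => sq_nonneg _)
    (fun τ hτ b => hcar τ hτ (u b) (cu b) (htu' b)) hor
  have hφc : ∀ᶠ x in nhds x0, -(r ^ 2 / 16) < phiV x0 y l x := by
    have h := (phiV_cd x0 y l).continuous.tendsto x0
    have h0 : phiV x0 y l x0 = 0 := by simp [phiV, psiV_self]
    rw [h0] at h
    exact h.eventually (lt_mem_nhds (by linarith [pow_pos hr0 2]))
  filter_upwards [hφc, Metric.ball_mem_nhds x0 (half_pos hr0)] with x hx hx2 b
  have h := hfin x hx
  have h1 := (Finset.sum_eq_zero_iff_of_nonneg (fun b _ => e1V_nonneg (u b) x)).1 h b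
    (Finset.mem_univ b)
  rw [e1V_congr (hnear x hx2 b)] at h1
  unfold e1V at h1
  have h2 : 0 ≤ ∑ a, pd a (W b) x ^ 2 := by positivity
  have h3 : W b x ^ 2 = 0 := le_antisymm (by linarith) (sq_nonneg _)
  exact pow_eq_zero_iff (two_ne_zero) |>.1 h3

theorem ucp_ball {ι : Type*} [Fintype ι] (hs : ∀ a b x, γ a b x = γ b a x)
    (hγ : ∀ a b, ContDiff ℝ (⊤ : ℕ∞) (γ a b)) {δ : ℝ}
    (hpos : ∀ x ∈ Metric.ball (0 : Pt n) δ,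
      ∀ ξ : Pt n, ξ ≠ 0 → 0 < ∑ a, ∑ b, γ a b x * ξ a * ξ b)
    {W : ι → Pt n → ℝ} (hW : ∀ b, ContDiff ℝ 2 (W b)) {K : ℝ} (hK : 0 ≤ K)
    (hin : ∀ x ∈ Metric.ball (0 : Pt n) δ, ∀ b, llV γ (W b) x ^ 2 ≤ K * ∑ c, e1V (W c) x)
    {z : Pt n} (hz : ∀ᶠ x in nhds z, ∀ b, W b x = 0)
    (hzs : ∀ x : Pt n, ∑ i, (x i - z i) ^ 2 ≤ ∑ i, (0 - z i) ^ 2 → x ∈ Metric.ball (0 : Pt n) δ) :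
    ∀ᶠ x in nhds (0 : Pt n), ∀ b, W b x = 0 := by
  by_contra hcon
  set S : Set (Pt n) := closure {x | ∃ b, W b x ≠ 0} with hS
  have hmem : ∀ x, x ∉ S → ∀ᶠ x' in nhds x, ∀ b, W b x' = 0 := by
    intro x hx
    have : Sᶜ ∈ nhds x := (isClosed_closure.isOpen_compl).mem_nhds hx
    filter_upwards [this] with x' hx' b
    by_contra hb
    exact hx' (subset_closure ⟨b, hb⟩)
  set T : Set (Pt n) := S ∩ {x | ∑ i, (x i - z i) ^ 2 ≤ ∑ i, (0 - z i) ^ 2} with hT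
  have hTc : IsCompact T := by
    refine Metric.isCompact_of_isClosed_isBounded
      (isClosed_closure.inter (isClosed_le (by fun_prop) (by fun_prop))) ?_
    exact Metric.isBounded_ball.subset fun x hx => hzs x hx.2
  have hT0 : T.Nonempty := ⟨0, by
    by_contra h0
    exact hcon (hmem 0 fun h => h0 ⟨h, by simp⟩)⟩
  obtain ⟨x0, hx0, hmin⟩ := hTc.exists_isMinOn hT0
    (f := fun x : Pt n => ∑ i, (x i - z i) ^ 2) (by fun_prop)
  have hx0S : ¬ ∀ᶠ x in nhds x0, ∀ b, W b x = 0 := by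
    intro h
    obtain ⟨x', h1, b, h2⟩ := mem_closure_iff_nhds.1 hx0.1 _ h
    exact h2 (h1 b)
  refine hx0S (ucp_local hs hγ (z := z) ?_ (hpos x0 (hzs x0 hx0.2)) hW hK ?_ ?_)
  · rintro rfl; exact hx0S hz
  · filter_upwards [Metric.isOpen_ball.mem_nhds (hzs x0 hx0.2)] with x hx using hin x hx
  · refine Eventually.of_forall fun x hx => ?_
    by_contra! hb
    have : x ∈ T := ⟨subset_closure hb, hx.le.trans hx0.2⟩
    exact absurd (hmin this) (not_le.2 hx)
end UCP

section Geom
variable {n : ℕ}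

theorem sum_rot (F : Fin n → Fin n → Fin n → ℝ) :
    ∑ i, ∑ j, ∑ l, F i j l = ∑ l, ∑ i, ∑ j, F i j l := by
  rw [Finset.sum_comm (f := fun l i => ∑ j, F i j l)]
  refine Finset.sum_congr rfl fun i _ => ?_
  rw [Finset.sum_comm]

theorem det_ne_of_pos {A : Fin n → Fin n → ℝ}
    (h : ∀ v : Fin n → ℝ, v ≠ 0 → 0 < ∑ i, ∑ j, A i j * v i * v j) : (Matrix.of A).det ≠ 0 := by
  intro hd
  obtain ⟨v, hv, hv2⟩ := Matrix.exists_mulVec_eq_zero_iff.2 hd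
  have h1 := h v hv
  have h2 : ∑ i, ∑ j, A i j * v i * v j = ∑ i, v i * (Matrix.of A).mulVec v i := by
    refine Finset.sum_congr rfl fun i _ => ?_
    simp only [Matrix.mulVec, dotProduct, Matrix.of_apply, Finset.mul_sum]
    exact Finset.sum_congr rfl fun j _ => by ring
  rw [h2, hv2] at h1
  simp at h1

theorem ginv_mul {m : Pt n → Fin n → Fin n → ℝ} {x : Pt n} (hd : (Matrix.of (m x)).det ≠ 0)
    (i l : Fin n) : ∑ j, ginv m x i j * m x j l = if i = l then 1 else 0 := by
  have := congrFun (congrFun (Matrix.nonsing_inv_mul (Matrix.of (m x)) (isUnit_iff_ne_zero.2 hd)) i) l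
  rw [Matrix.mul_apply, Matrix.one_apply] at this
  exact this

theorem mul_ginv {m : Pt n → Fin n → Fin n → ℝ} {x : Pt n} (hd : (Matrix.of (m x)).det ≠ 0)
    (i l : Fin n) : ∑ j, m x i j * ginv m x j l = if i = l then 1 else 0 := by
  have := congrFun (congrFun (Matrix.mul_nonsing_inv (Matrix.of (m x)) (isUnit_iff_ne_zero.2 hd)) i) l
  rw [Matrix.mul_apply, Matrix.one_apply] at this
  exact this

theorem ginv_symm {m : Pt n → Fin n → Fin n → ℝ} {x : Pt n} (hs : ∀ i j, m x i j = m x j i)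
    (i j : Fin n) : ginv m x i j = ginv m x j i := by
  unfold ginv
  have h1 : (Matrix.of (m x)).transpose = Matrix.of (m x) := by
    ext a b; simp [hs a b]
  have h2 := Matrix.transpose_nonsing_inv (Matrix.of (m x))
  rw [h1] at h2
  conv_lhs => rw [← h2]
  rfl

theorem contr_ginv {m : Pt n → Fin n → Fin n → ℝ} {x : Pt n} (hd : (Matrix.of (m x)).det ≠ 0)
    (v : Fin n → ℝ) (i : Fin n) : ∑ j, ginv m x i j * ∑ l, m x j l * v l = v i := by
  simp only [Finset.mul_sum]
  rw [Finset.sum_comm]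
  simp only [← mul_assoc, ← Finset.sum_mul, ginv_mul hd]
  simp

theorem contr_g {m : Pt n → Fin n → Fin n → ℝ} {x : Pt n} (hd : (Matrix.of (m x)).det ≠ 0)
    (v : Fin n → ℝ) (i : Fin n) : ∑ j, m x i j * ∑ l, ginv m x j l * v l = v i := by
  simp only [Finset.mul_sum]
  rw [Finset.sum_comm]
  simp only [← mul_assoc, ← Finset.sum_mul, mul_ginv hd]
  simp

/-- positive definiteness of the inverse -/
theorem ginv_pos {m : Pt n → Fin n → Fin n → ℝ} {x : Pt n}
    (h : ∀ v : Fin n → ℝ, v ≠ 0 → 0 < ∑ i, ∑ j, m x i j * v i * v j)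
    (ζ : Fin n → ℝ) (hζ : ζ ≠ 0) : 0 < ∑ i, ∑ j, ginv m x i j * ζ i * ζ j := by
  have hd := det_ne_of_pos h
  set v : Fin n → ℝ := fun i => ∑ j, ginv m x i j * ζ j with hv
  have h1 : ∀ i, ∑ j, m x i j * v j = ζ i := fun i => contr_g hd ζ i
  have hv0 : v ≠ 0 := by
    intro h0
    apply hζ
    funext i
    rw [← h1 i, h0]; simp
  have h2 := h v hv0
  have h3 : ∑ i, ∑ j, m x i j * v i * v j = ∑ i, v i * ∑ j, m x i j * v j := by
    refine Finset.sum_congr rfl fun i _ => ?_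
    rw [Finset.mul_sum]
    exact Finset.sum_congr rfl fun j _ => by ring
  rw [h3] at h2
  simp only [h1] at h2
  refine lt_of_lt_of_eq h2 ?_
  refine Finset.sum_congr rfl fun i _ => ?_
  simp only [hv]
  rw [Finset.sum_mul]
  exact Finset.sum_congr rfl fun j _ => by ring

section smooth
variable {E : Type*} [NormedAddCommGroup E] [NormedSpace ℝ E]

theorem cd_det {k : WithTop ℕ∞} {M : E → Matrix (Fin n) (Fin n) ℝ} {q : E}
    (h : ∀ i j, ContDiffAt ℝ k (fun q => M q i j) q) : ContDiffAt ℝ k (fun q => (M q).det) q := by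
  simp only [Matrix.det_apply]
  refine ContDiffAt.sum fun σ _ => ?_
  refine ContDiffAt.const_smul _ ?_
  exact contDiffAt_prod fun i _ => h _ _

theorem cd_inv {k : WithTop ℕ∞} {M : E → Fin n → Fin n → ℝ} {q : E}
    (h : ∀ i j, ContDiffAt ℝ k (fun q => M q i j) q) (hd : (Matrix.of (M q)).det ≠ 0) (i j : Fin n) :
    ContDiffAt ℝ k (fun q => (Matrix.of (M q))⁻¹ i j) q := by
  have hdet : ContDiffAt ℝ k (fun q => (Matrix.of (M q)).det) q := cd_det h
  have hadj : ContDiffAt ℝ k (fun q => (Matrix.of (M q)).adjugate i j) q := by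
    simp only [Matrix.adjugate_apply]
    refine cd_det fun a b => ?_
    simp only [Matrix.updateRow_apply]
    split_ifs
    · exact contDiffAt_const
    · exact h a b
  simp only [Matrix.inv_def, Ring.inverse_eq_inv', Matrix.smul_apply, smul_eq_mul]
  exact (hdet.inv hd).mul hadj

theorem fd_inv {M : E → Fin n → Fin n → ℝ} {q : E}
    (h : ∀ i j, ContDiffAt ℝ 1 (fun q => M q i j) q) (hd : (Matrix.of (M q)).det ≠ 0) (i j : Fin n)
    (v : E) :
    fderiv ℝ (fun q => (Matrix.of (M q))⁻¹ i j) q v =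
      - ∑ a, ∑ b, (Matrix.of (M q))⁻¹ i a * fderiv ℝ (fun q => M q a b) q v * (Matrix.of (M q))⁻¹ b j := by
  have hdev : ∀ᶠ q' in nhds q, (Matrix.of (M q')).det ≠ 0 :=
    (cd_det (k := 1) h).continuousAt.eventually_ne hd
  have dI : ∀ i j, DifferentiableAt ℝ (fun q => (Matrix.of (M q))⁻¹ i j) q := fun i j =>
    (cd_inv h hd i j).differentiableAt (by norm_num)
  have dM : ∀ i j, DifferentiableAt ℝ (fun q => M q i j) q := fun i j =>
    (h i j).differentiableAt (by norm_num)
  -- derivative of the identity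
  have h1 : ∀ b, ∑ a, (fderiv ℝ (fun q => (Matrix.of (M q))⁻¹ i a) q v * M q a b +
      (Matrix.of (M q))⁻¹ i a * fderiv ℝ (fun q => M q a b) q v) = 0 := by
    intro b
    have h2 : (fun q' => ∑ a, (Matrix.of (M q'))⁻¹ i a * M q' a b) =ᶠ[nhds q]
        fun _ => if i = b then 1 else 0 := by
      filter_upwards [hdev] with q' hq'
      have := congrFun (congrFun (Matrix.nonsing_inv_mul (Matrix.of (M q')) (isUnit_iff_ne_zero.2 hq')) i) b
      rw [Matrix.mul_apply, Matrix.one_apply] at this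
      exact this
    have h3 := h2.fderiv_eq (𝕜 := ℝ)
    rw [fderiv_fun_sum (fun a _ => (dI i a).fun_mul (dM a b))] at h3
    have h4 := congrArg (fun L : E →L[ℝ] ℝ => L v) h3
    simp only [fderiv_fun_const, ContinuousLinearMap.sum_apply, Pi.zero_apply, ContinuousLinearMap.zero_apply] at h4
    rw [← h4]
    refine Finset.sum_congr rfl fun a _ => ?_
    rw [fderiv_fun_mul (dI i a) (dM a b)]
    simp; ring
  have h5 : ∀ a, ∑ b, M q a b * (Matrix.of (M q))⁻¹ b j = if a = j then 1 else 0 := by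
    intro a
    have := congrFun (congrFun (Matrix.mul_nonsing_inv (Matrix.of (M q)) (isUnit_iff_ne_zero.2 hd)) a) j
    rw [Matrix.mul_apply, Matrix.one_apply] at this
    exact this
  have h6 : ∑ b, (∑ a, (fderiv ℝ (fun q => (Matrix.of (M q))⁻¹ i a) q v * M q a b +
      (Matrix.of (M q))⁻¹ i a * fderiv ℝ (fun q => M q a b) q v)) * (Matrix.of (M q))⁻¹ b j = 0 := by
    simp [h1]
  simp only [Finset.sum_add_distrib, add_mul, Finset.sum_mul] at h6
  have h7 : ∑ b, ∑ a, fderiv ℝ (fun q => (Matrix.of (M q))⁻¹ i a) q v * M q a b * (Matrix.of (M q))⁻¹ b j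
      = fderiv ℝ (fun q => (Matrix.of (M q))⁻¹ i j) q v := by
    rw [Finset.sum_comm]
    simp only [mul_assoc, ← Finset.mul_sum, h5]
    simp
  rw [h7] at h6
  rw [Finset.sum_comm]
  linarith
end smooth

theorem cdCov_lower {m : Pt n → Fin n → Fin n → ℝ} {x : Pt n} (hd : (Matrix.of (m x)).det ≠ 0)
    (hs : ∀ i j, m x i j = m x j i)
    (dm : ∀ i j, DifferentiableAt ℝ (fun y => m y i j) x) {Y : Pt n → Fin n → ℝ}
    (dY : ∀ i, DifferentiableAt ℝ (fun y => Y y i) x) (i j : Fin n) :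
    cdCov m (lowerV m Y) x i j = ∑ l, (pd j (fun y => m y i l) x * Y x l + m x i l * pd j (fun y => Y y l) x
      - (1/2) * (pd i (fun y => m y j l) x + pd j (fun y => m y i l) x - pd l (fun y => m y i j) x) * Y x l) := by
  unfold cdCov
  have h1 : pd j (fun y => lowerV m Y y i) x =
      ∑ l, (pd j (fun y => m y i l) x * Y x l + m x i l * pd j (fun y => Y y l) x) := by
    unfold lowerV
    rw [pd_sum (fun l _ => (dm i l).fun_mul (dY l))]
    exact Finset.sum_congr rfl fun l _ => pd_mul (dm i l) (dY l)
  have h2 : ∑ k, chr m x k i j * lowerV m Y x k = ∑ l, (1/2) * (pd i (fun y => m y j l) x +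
      pd j (fun y => m y i l) x - pd l (fun y => m y i j) x) * Y x l := by
    unfold chr lowerV
    set D : Fin n → ℝ := fun l => pd i (fun y => m y j l) x +
      pd j (fun y => m y i l) x - pd l (fun y => m y i j) x
    simp only [mul_assoc, ← Finset.mul_sum]
    congr 1
    simp only [Finset.sum_mul]
    rw [Finset.sum_comm]
    refine Finset.sum_congr rfl fun l _ => ?_
    rw [← contr_ginv hd (fun l => Y x l) l, Finset.mul_sum]
    refine Finset.sum_congr rfl fun k _ => ?_
    rw [ginv_symm hs k l]; ring
  rw [h1, h2, ← Finset.sum_sub_distrib]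

/-- The logarithmic derivative of the volume density. -/
def ellV (m : Pt n → Fin n → Fin n → ℝ) (i : Fin n) (x : Pt n) : ℝ :=
  (1/2) * ∑ a, ∑ b, ginv m x a b * pd i (fun y => m y a b) x

theorem hmean_eq {m : Pt n → Fin n → Fin n → ℝ} {f : Pt n → ℝ} {x : Pt n}
    (hd : (Matrix.of (m x)).det ≠ 0) (hs : ∀ i j, m x i j = m x j i)
    (dm : ∀ i j, DifferentiableAt ℝ (fun y => m y i j) x)
    (dν : ∀ i, DifferentiableAt ℝ (fun y => nuV m f y i) x) :
    hmean m f x = (∑ i, pd i (fun y => nuV m f y i) x) + ∑ i, nuV m f x i * ellV m i x := by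
  unfold hmean
  simp only [cdCov_lower hd hs dm dν]
  set ν : Fin n → ℝ := fun l => nuV m f x l with hν
  have e1 : ∀ i j, ∑ l, (pd j (fun y => m y i l) x * nuV m f x l + m x i l * pd j (fun y => nuV m f y l) x
      - (1/2) * (pd i (fun y => m y j l) x + pd j (fun y => m y i l) x - pd l (fun y => m y i j) x) * nuV m f x l)
      = (∑ l, m x i l * pd j (fun y => nuV m f y l) x) +
        ((1/2) * (∑ l, pd j (fun y => m y i l) x * ν l) - (1/2) * (∑ l, pd i (fun y => m y j l) x * ν l)) +
        (1/2) * ∑ l, pd l (fun y => m y i j) x * ν l := by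
    intro i j
    simp only [Finset.mul_sum]
    rw [← Finset.sum_sub_distrib, ← Finset.sum_add_distrib, ← Finset.sum_add_distrib]
    exact Finset.sum_congr rfl fun l _ => by simp only [hν]; ring
  simp only [e1]
  simp only [mul_add, mul_sub, Finset.sum_add_distrib, Finset.sum_sub_distrib]
  have e2 : ∑ i, ∑ j, ginv m x i j * ∑ l, m x i l * pd j (fun y => nuV m f y l) x =
      ∑ i, pd i (fun y => nuV m f y i) x := by
    rw [Finset.sum_comm]
    refine Finset.sum_congr rfl fun j _ => ?_
    have := contr_ginv hd (fun l => pd j (fun y => nuV m f y l) x) j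
    rw [← this]
    exact Finset.sum_congr rfl fun i _ => by rw [ginv_symm hs i j]
  have e3 : ∑ i, ∑ j, ginv m x i j * ((1/2) * ∑ l, pd j (fun y => m y i l) x * ν l) =
      ∑ i, ∑ j, ginv m x i j * ((1/2) * ∑ l, pd i (fun y => m y j l) x * ν l) := by
    rw [Finset.sum_comm]
    exact Finset.sum_congr rfl fun j _ => Finset.sum_congr rfl fun i _ => by rw [ginv_symm hs i j]
  have e4 : ∑ i, ∑ j, ginv m x i j * ((1/2) * ∑ l, pd l (fun y => m y i j) x * ν l) =
      ∑ l, nuV m f x l * ellV m l x := by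
    unfold ellV
    simp only [Finset.mul_sum]
    rw [sum_rot]
    exact Finset.sum_congr rfl fun l _ => Finset.sum_congr rfl fun i _ =>
      Finset.sum_congr rfl fun j _ => by simp only [hν]; ring
  rw [e2, e3, e4]; ring

theorem lieg_eq {m : Pt n → Fin n → Fin n → ℝ} {x : Pt n} (hd : (Matrix.of (m x)).det ≠ 0)
    (hs : symT m)
    (dm : ∀ i j, DifferentiableAt ℝ (fun y => m y i j) x) {X : Pt n → Fin n → ℝ}
    (dX : ∀ i, DifferentiableAt ℝ (fun y => X y i) x) (i j : Fin n) :
    lieg m X x i j = ∑ k, (X x k * pd k (fun y => m y i j) x + m x k j * pd i (fun y => X y k) x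
      + m x i k * pd j (fun y => X y k) x) := by
  unfold lieg
  rw [cdCov_lower hd (hs x) dm dX, cdCov_lower hd (hs x) dm dX, ← Finset.sum_add_distrib]
  refine Finset.sum_congr rfl fun k _ => ?_
  have : (fun y => m y j i) = fun y => m y i j := by funext y; exact hs y j i
  rw [this, hs x k j]; ring
end Geom

section Lin
variable {n : ℕ}

theorem comm_ds {F : ℝ → Pt n → ℝ} {x : Pt n} (i : Fin n)
    (hF : ContDiffAt ℝ 2 (fun q : ℝ × Pt n => F q.1 q.2) (0, x)) :
    HasDerivAt (fun s => pd i (F s) x) (pd i (fun y => deriv (fun s => F s y) 0) x) 0 := by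
  set U : ℝ × Pt n → ℝ := fun q => F q.1 q.2 with hU
  have hev : ∀ᶠ q in nhds ((0:ℝ), x), DifferentiableAt ℝ U q := by
    have h1 := hF.eventually (by simp)
    filter_upwards [h1] with q hq using hq.differentiableAt (by norm_num)
  have hU' : ContDiffAt ℝ 1 (fderiv ℝ U) (0, x) := hF.fderiv_right (by norm_num)
  have dU' : DifferentiableAt ℝ (fderiv ℝ U) (0, x) := hU'.differentiableAt (by norm_num)
  -- formulas for partial derivatives
  have h1 : ∀ q, DifferentiableAt ℝ U q → pd i (F q.1) q.2 = fderiv ℝ U q (0, Pi.single i 1) := by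
    rintro ⟨s, y⟩ hq
    have hc : HasFDerivAt (fun y => U (s, y)) ((fderiv ℝ U (s, y)).comp (ContinuousLinearMap.inr ℝ ℝ (Pt n))) y :=
      hq.hasFDerivAt.comp y (hasFDerivAt_prodMk_right s y)
    have : fderiv ℝ (F s) y = _ := hc.fderiv
    unfold pd
    rw [this]; simp
  have h2 : ∀ y, DifferentiableAt ℝ U (0, y) → deriv (fun s => F s y) 0 = fderiv ℝ U (0, y) (1, 0) := by
    intro y hq
    have hc : HasFDerivAt (fun s => U (s, y)) ((fderiv ℝ U (0, y)).comp (ContinuousLinearMap.inl ℝ ℝ (Pt n))) (0:ℝ) :=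
      HasFDerivAt.comp (g := U) (f := fun s : ℝ => (s, y)) (0:ℝ) hq.hasFDerivAt
        (hasFDerivAt_prodMk_left (𝕜 := ℝ) (0:ℝ) y)
    have := hc.hasDerivAt.deriv
    refine this.trans ?_
    simp
  have hs : ∀ᶠ s in nhds (0:ℝ), DifferentiableAt ℝ U (s, x) := by
    have : Tendsto (fun s : ℝ => (s, x)) (nhds 0) (nhds (0, x)) :=
      (Continuous.prodMk_left x).tendsto 0
    exact this.eventually hev
  have hy : ∀ᶠ y in nhds x, DifferentiableAt ℝ U (0, y) := by
    have : Tendsto (fun y : Pt n => ((0:ℝ), y)) (nhds x) (nhds (0, x)) :=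
      (Continuous.prodMk_right (0:ℝ)).tendsto x
    exact this.eventually hev
  have e1 : (fun s => pd i (F s) x) =ᶠ[nhds 0] fun s => fderiv ℝ U (s, x) (0, Pi.single i 1) := by
    filter_upwards [hs] with s hs using h1 (s, x) hs
  have e2 : (fun y => deriv (fun s => F s y) 0) =ᶠ[nhds x] fun y => fderiv ℝ U (0, y) (1, 0) := by
    filter_upwards [hy] with y hy using h2 y hy
  have d1 : HasDerivAt (fun s => fderiv ℝ U (s, x) (0, Pi.single i 1))
      (fderiv ℝ (fderiv ℝ U) (0, x) (1, 0) (0, Pi.single i 1)) 0 := by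
    have hc : HasFDerivAt (fun s => fderiv ℝ U (s, x))
        ((fderiv ℝ (fderiv ℝ U) (0, x)).comp (ContinuousLinearMap.inl ℝ ℝ (Pt n))) (0:ℝ) :=
      dU'.hasFDerivAt.comp (0:ℝ) (hasFDerivAt_prodMk_left (0:ℝ) x)
    have hd := hc.hasDerivAt
    have := hd.clm_apply (hasDerivAt_const (0:ℝ) ((0, Pi.single i 1) : ℝ × Pt n))
    simpa using this
  have d2 : pd i (fun y => fderiv ℝ U (0, y) (1, 0)) x =
      fderiv ℝ (fderiv ℝ U) (0, x) (0, Pi.single i 1) (1, 0) := by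
    have hc : HasFDerivAt (fun y => fderiv ℝ U (0, y))
        ((fderiv ℝ (fderiv ℝ U) (0, x)).comp (ContinuousLinearMap.inr ℝ ℝ (Pt n))) x :=
      dU'.hasFDerivAt.comp x (hasFDerivAt_prodMk_right (0:ℝ) x)
    have := hc.clm_apply (hasFDerivAt_const ((1, 0) : ℝ × Pt n) x)
    unfold pd
    rw [this.fderiv]; simp
  have hsym : fderiv ℝ (fderiv ℝ U) (0, x) (1, 0) (0, Pi.single i 1) =
      fderiv ℝ (fderiv ℝ U) (0, x) (0, Pi.single i 1) (1, 0) := by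
    exact (hF.isSymmSndFDerivAt (by simp)) _ _
  rw [pd_congr e2, d2, ← hsym]
  exact d1.congr_of_eventuallyEq e1

variable {g : Pt n → Fin n → Fin n → ℝ}

theorem posdef.det (hp : posdef g) (x : Pt n) : (Matrix.of (g x)).det ≠ 0 := det_ne_of_pos (hp x)

theorem ginv_cd (hp : posdef g) (hg : smoothT g) (i j : Fin n) :
    ContDiff ℝ (⊤ : ℕ∞) (fun x => ginv g x i j) := by
  rw [contDiff_iff_contDiffAt]
  intro x
  exact cd_inv (fun a b => (hg a b).contDiffAt) (hp.det x) i j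

theorem pd_ginv (hp : posdef g) (hg : smoothT g) (i j k : Fin n) (x : Pt n) :
    pd k (fun x => ginv g x i j) x =
      - ∑ a, ∑ b, ginv g x i a * pd k (fun y => g y a b) x * ginv g x b j :=
  fd_inv (fun a b => ((hg a b).of_le (by norm_cast)).contDiffAt) (hp.det x) i j _

theorem ginv_ds (hp : posdef g) (h : Pt n → Fin n → Fin n → ℝ) (x : Pt n) (i j : Fin n) :
    HasDerivAt (fun s => ginv (mpert g h s) x i j)
      (- ∑ a, ∑ b, ginv g x i a * h x a b * ginv g x b j) 0 := by
  have hM : ∀ a b, ContDiffAt ℝ 1 (fun s : ℝ => mpert g h s x a b) 0 := fun a b => by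
    unfold mpert; fun_prop
  have h0 : mpert g h 0 x = g x := by funext a b; simp [mpert]
  have hd : (Matrix.of (mpert g h 0 x)).det ≠ 0 := by rw [h0]; exact hp.det x
  have h1 := fd_inv hM hd i j 1
  have h2 : DifferentiableAt ℝ (fun s => (Matrix.of (mpert g h s x))⁻¹ i j) 0 :=
    (cd_inv hM hd i j).differentiableAt (by norm_num)
  have h3 := h2.hasDerivAt
  rw [← fderiv_apply_one_eq_deriv, h1] at h3
  have h4 : ∀ a b, fderiv ℝ (fun s : ℝ => mpert g h s x a b) 0 1 = h x a b := by
    intro a b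
    rw [fderiv_apply_one_eq_deriv]
    unfold mpert
    simp
  simp only [h4, h0] at h3
  exact h3

theorem ginv_lie (hgs : symT g) (hp : posdef g) (hg : smoothT g) {X : Pt n → Fin n → ℝ}
    (hX : ∀ i, ContDiff ℝ 3 (fun x => X x i)) (x : Pt n) (i j : Fin n) :
    - ∑ a, ∑ b, ginv g x i a * lieg g X x a b * ginv g x b j =
      (∑ k, X x k * pd k (fun x => ginv g x i j) x) - (∑ k, ginv g x k j * pd k (fun y => X y i) x)
        - ∑ k, ginv g x i k * pd k (fun y => X y j) x := by
  have hd := hp.det x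
  have dg : ∀ i j, DifferentiableAt ℝ (fun y => g y i j) x := fun i j =>
    (hg i j).differentiable (by simp) x
  have dX : ∀ i, DifferentiableAt ℝ (fun y => X y i) x := fun i =>
    (hX i).differentiable (by simp) x
  simp only [lieg_eq hd hgs dg dX, pd_ginv hp hg]
  have e1 : ∑ a, ∑ b, ginv g x i a * (∑ k, (X x k * pd k (fun y => g y a b) x
      + g x k b * pd a (fun y => X y k) x + g x a k * pd b (fun y => X y k) x)) * ginv g x b j
      = (∑ a, ∑ b, ∑ k, X x k * (ginv g x i a * pd k (fun y => g y a b) x * ginv g x b j)) +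
        (∑ a, ∑ b, ginv g x i a * (∑ k, g x k b * pd a (fun y => X y k) x) * ginv g x b j) +
        (∑ a, ∑ b, ginv g x i a * (∑ k, g x a k * pd b (fun y => X y k) x) * ginv g x b j) := by
    rw [← Finset.sum_add_distrib, ← Finset.sum_add_distrib]
    refine Finset.sum_congr rfl fun a _ => ?_
    rw [← Finset.sum_add_distrib, ← Finset.sum_add_distrib]
    refine Finset.sum_congr rfl fun b _ => ?_
    simp only [Finset.sum_add_distrib, mul_add, add_mul]
    congr 2
    simp only [Finset.mul_sum, Finset.sum_mul]
    exact Finset.sum_congr rfl fun k _ => by ring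
  have e2 : ∑ a, ∑ b, ginv g x i a * (∑ k, g x k b * pd a (fun y => X y k) x) * ginv g x b j =
      ∑ k, ginv g x i k * pd k (fun y => X y j) x := by
    refine Finset.sum_congr rfl fun a _ => ?_
    have := contr_ginv hd (fun k => pd a (fun y => X y k) x) j
    rw [← this, Finset.mul_sum]
    refine Finset.sum_congr rfl fun b _ => ?_
    rw [ginv_symm (hgs x) b j]
    simp only [hgs x _ b]
    ring
  have e3 : ∑ a, ∑ b, ginv g x i a * (∑ k, g x a k * pd b (fun y => X y k) x) * ginv g x b j =
      ∑ k, ginv g x k j * pd k (fun y => X y i) x := by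
    rw [Finset.sum_comm]
    refine Finset.sum_congr rfl fun b _ => ?_
    have := contr_ginv hd (fun k => pd b (fun y => X y k) x) i
    rw [← this, Finset.mul_sum]
    exact Finset.sum_congr rfl fun a _ => by ring
  rw [e1, e2, e3, sum_rot]
  simp only [← Finset.mul_sum, mul_neg, Finset.sum_neg_distrib]
  ring

/-- squared length of the gradient -/
def RV (g : Pt n → Fin n → Fin n → ℝ) (f : Pt n → ℝ) (x : Pt n) : ℝ :=
  ∑ j, ∑ k, ginv g x j k * pd j f x * pd k f x

theorem RV_eq (m : Pt n → Fin n → Fin n → ℝ) (f : Pt n → ℝ) (x : Pt n) :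
    RV m f x = ∑ i, pd i f x * gradV m f x i := by
  unfold RV gradV
  refine Finset.sum_congr rfl fun i _ => ?_
  rw [Finset.mul_sum]
  exact Finset.sum_congr rfl fun i _ => by ring

/-- `X f` -/
def XfV (X : Pt n → Fin n → ℝ) (f : Pt n → ℝ) (x : Pt n) : ℝ := ∑ j, X x j * pd j f x

/-- the tangential projection -/
def PV (g : Pt n → Fin n → Fin n → ℝ) (f : Pt n → ℝ) (i j : Fin n) (x : Pt n) : ℝ :=
  ginv g x i j - gradV g f x i * gradV g f x j / RV g f x

/-- the tangential gradient of `X f` -/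
def JV (g : Pt n → Fin n → Fin n → ℝ) (f : Pt n → ℝ) (X : Pt n → Fin n → ℝ) (i : Fin n) (x : Pt n) : ℝ :=
  (∑ j, PV g f i j x * pd j (XfV X f) x) / Real.sqrt (RV g f x)

theorem RV_pos (hp : posdef g) {f : Pt n → ℝ} {x : Pt n} (hf : fderiv ℝ f x ≠ 0) : 0 < RV g f x := by
  refine ginv_pos (hp x) (fun i => pd i f x) ?_
  intro h0
  apply hf
  ext v
  rw [fderiv_eq_sum_pd]
  have : ∀ i, pd i f x = 0 := fun i => congrFun h0 i
  simp [this]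

theorem gradV_cd (hp : posdef g) (hg : smoothT g) {f : Pt n → ℝ} (hf : ContDiff ℝ (⊤ : ℕ∞) f) (i : Fin n) :
    ContDiff ℝ (⊤ : ℕ∞) (fun x => gradV g f x i) := by
  unfold gradV
  exact ContDiff.sum fun j _ => (ginv_cd hp hg i j).mul (cd_pd_top hf)

theorem RV_cd (hp : posdef g) (hg : smoothT g) {f : Pt n → ℝ} (hf : ContDiff ℝ (⊤ : ℕ∞) f) :
    ContDiff ℝ (⊤ : ℕ∞) (RV g f) := by
  have : RV g f = fun x => ∑ i, pd i f x * gradV g f x i := by funext x; exact RV_eq g f x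
  rw [this]
  exact ContDiff.sum fun j _ => (cd_pd_top hf).mul (gradV_cd hp hg hf j)

theorem nuV_cd (hp : posdef g) (hg : smoothT g) {f : Pt n → ℝ} (hf : ContDiff ℝ (⊤ : ℕ∞) f) {x : Pt n}
    (hx : fderiv ℝ f x ≠ 0) (i : Fin n) :
    ContDiffAt ℝ (⊤ : ℕ∞) (fun x => nuV g f x i) x := by
  have hR := RV_pos hp hx
  exact (gradV_cd hp hg hf i).contDiffAt.div ((RV_cd hp hg hf).contDiffAt.sqrt hR.ne')
    (Real.sqrt_pos.2 hR).ne'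

theorem XfV_cd {X : Pt n → Fin n → ℝ} (hX : ∀ i, ContDiff ℝ 3 (fun x => X x i)) {f : Pt n → ℝ}
    (hf : ContDiff ℝ (⊤ : ℕ∞) f) : ContDiff ℝ 3 (XfV X f) := by
  unfold XfV
  exact ContDiff.sum fun j _ => (hX j).mul ((cd_pd_top hf).of_le (by norm_cast))

theorem PV_cd (hp : posdef g) (hg : smoothT g) {f : Pt n → ℝ} (hf : ContDiff ℝ (⊤ : ℕ∞) f) {x : Pt n}
    (hx : fderiv ℝ f x ≠ 0) (i j : Fin n) : ContDiffAt ℝ (⊤ : ℕ∞) (PV g f i j) x := by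
  have hR := RV_pos hp hx
  exact (ginv_cd hp hg i j).contDiffAt.sub
    (((gradV_cd hp hg hf i).contDiffAt.mul (gradV_cd hp hg hf j).contDiffAt).div
    (RV_cd hp hg hf).contDiffAt hR.ne')

theorem JV_cd (hp : posdef g) (hg : smoothT g) {f : Pt n → ℝ} (hf : ContDiff ℝ (⊤ : ℕ∞) f) {x : Pt n}
    (hx : fderiv ℝ f x ≠ 0) {X : Pt n → Fin n → ℝ} (hX : ∀ i, ContDiff ℝ 3 (fun x => X x i)) (i : Fin n) :
    ContDiffAt ℝ 2 (JV g f X i) x := by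
  have hR := RV_pos hp hx
  refine ContDiffAt.div (ContDiffAt.sum fun j _ => ?_)
    (((RV_cd hp hg hf).of_le (by norm_cast)).contDiffAt.sqrt hR.ne') (Real.sqrt_pos.2 hR).ne'
  exact ((PV_cd hp hg hf hx i j).of_le (by norm_cast)).mul
    (cd_pd (m := 2) (XfV_cd hX hf) (by norm_num)).contDiffAt

theorem pd_XfV {X : Pt n → Fin n → ℝ} (hX : ∀ i, ContDiff ℝ 3 (fun x => X x i)) {f : Pt n → ℝ}
    (hf : ContDiff ℝ (⊤ : ℕ∞) f) (k : Fin n) (x : Pt n) :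
    pd k (XfV X f) x = ∑ j, (pd k (fun y => X y j) x * pd j f x + X x j * pd k (pd j f) x) := by
  have dX : ∀ i, DifferentiableAt ℝ (fun y => X y i) x := fun i =>
    (hX i).differentiable (by simp) x
  have df : ∀ j, DifferentiableAt ℝ (pd j f) x := fun j => (cd_pd_top hf).differentiable (by simp) x
  unfold XfV
  rw [pd_sum (fun j _ => (dX j).fun_mul (df j))]
  exact Finset.sum_congr rfl fun j _ => pd_mul (dX j) (df j)

theorem grad_ds (hgs : symT g) (hp : posdef g) (hg : smoothT g) {f : Pt n → ℝ}
    (hf : ContDiff ℝ (⊤ : ℕ∞) f) {X : Pt n → Fin n → ℝ}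
    (hX : ∀ i, ContDiff ℝ 3 (fun x => X x i)) (x : Pt n) (i : Fin n) :
    HasDerivAt (fun s => gradV (mpert g (fun y a b => lieg g X y a b) s) f x i)
      ((∑ k, X x k * pd k (fun y => gradV g f y i) x) - (∑ k, gradV g f x k * pd k (fun y => X y i) x)
        - ∑ k, ginv g x i k * pd k (XfV X f) x) 0 := by
  have dG : ∀ i j, DifferentiableAt ℝ (fun y => ginv g y i j) x := fun i j =>
    (ginv_cd hp hg i j).differentiable (by simp) x
  have df : ∀ j, DifferentiableAt ℝ (pd j f) x := fun j => (cd_pd_top hf).differentiable (by simp) x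
  have h1 : HasDerivAt (fun s => gradV (mpert g (fun y a b => lieg g X y a b) s) f x i)
      (∑ j, (- ∑ a, ∑ b, ginv g x i a * lieg g X x a b * ginv g x b j) * pd j f x) 0 := by
    unfold gradV
    exact HasDerivAt.fun_sum fun j _ => (ginv_ds hp _ x i j).mul_const _
  convert h1 using 1
  simp only [ginv_lie hgs hp hg hX]
  have h2 : ∀ k, pd k (fun y => gradV g f y i) x =
      ∑ j, (pd k (fun y => ginv g y i j) x * pd j f x + ginv g x i j * pd k (pd j f) x) := by
    intro k
    unfold gradV
    rw [pd_sum (fun j _ => (dG i j).fun_mul (df j))]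
    exact Finset.sum_congr rfl fun j _ => pd_mul (dG i j) (df j)
  simp only [h2, pd_XfV hX hf, sub_mul, Finset.sum_sub_distrib, mul_add, Finset.sum_add_distrib,
    Finset.mul_sum, Finset.sum_mul]
  have e1 : ∑ k, ∑ j, X x k * (ginv g x i j * pd k (pd j f) x) =
      ∑ k, ∑ j, ginv g x i k * (X x j * pd k (pd j f) x) := by
    rw [Finset.sum_comm]
    refine Finset.sum_congr rfl fun k _ => Finset.sum_congr rfl fun j _ => ?_
    rw [pd_comm (i := j) (j := k) (hf.of_le (by norm_cast)).contDiffAt]; ring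
  have e2 : ∑ k, ∑ j, X x k * (pd k (fun y => ginv g y i j) x * pd j f x) =
      ∑ j, ∑ k, X x k * pd k (fun y => ginv g y i j) x * pd j f x := by
    rw [Finset.sum_comm]
    exact Finset.sum_congr rfl fun k _ => Finset.sum_congr rfl fun j _ => by ring
  have e3 : (∑ k, ∑ j, gradV g f x k * pd k (fun y => X y i) x : ℝ) = ∑ k : Fin n, ∑ j : Fin n, gradV g f x k * pd k (fun y => X y i) x := rfl
  have e4 : ∑ k, gradV g f x k * pd k (fun y => X y i) x =
      ∑ j, ∑ k, ginv g x k j * pd k (fun y => X y i) x * pd j f x := by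
    rw [Finset.sum_comm]
    unfold gradV
    refine Finset.sum_congr rfl fun k _ => ?_
    rw [Finset.sum_mul]
    exact Finset.sum_congr rfl fun j _ => by ring
  have e5 : ∑ k, ∑ j, ginv g x i k * (pd k (fun y => X y j) x * pd j f x) =
      ∑ j, ∑ k, ginv g x i k * pd k (fun y => X y j) x * pd j f x := by
    rw [Finset.sum_comm]
    exact Finset.sum_congr rfl fun k _ => Finset.sum_congr rfl fun j _ => by ring
  rw [e1, e2, e4, e5]; ring

theorem R_ds (hgs : symT g) (hp : posdef g) (hg : smoothT g) {f : Pt n → ℝ}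
    (hf : ContDiff ℝ (⊤ : ℕ∞) f) {X : Pt n → Fin n → ℝ}
    (hX : ∀ i, ContDiff ℝ 3 (fun x => X x i)) (x : Pt n) :
    HasDerivAt (fun s => RV (mpert g (fun y a b => lieg g X y a b) s) f x)
      ((∑ k, X x k * pd k (RV g f) x) - 2 * ∑ k, gradV g f x k * pd k (XfV X f) x) 0 := by
  have dG : ∀ i, DifferentiableAt ℝ (fun y => gradV g f y i) x := fun i =>
    (gradV_cd hp hg hf i).differentiable (by simp) x
  have df : ∀ j, DifferentiableAt ℝ (pd j f) x := fun j => (cd_pd_top hf).differentiable (by simp) x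
  have h1 := HasDerivAt.fun_sum (u := Finset.univ) fun i (_ : i ∈ Finset.univ) =>
    (grad_ds hgs hp hg hf hX x i).const_mul (pd i f x)
  simp only [RV_eq (mpert g _ _)]
  refine HasDerivAt.congr_deriv h1 ?_
  symm
  have h2 : ∀ k, pd k (RV g f) x =
      ∑ i, (pd k (pd i f) x * gradV g f x i + pd i f x * pd k (fun y => gradV g f y i) x) := by
    intro k
    have : RV g f = fun x => ∑ i, pd i f x * gradV g f x i := by funext x; exact RV_eq g f x
    rw [this, pd_sum (fun j _ => (df j).fun_mul (dG j))]
    exact Finset.sum_congr rfl fun j _ => pd_mul (df j) (dG j)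
  have e0 : ∑ i, pd i f x * ∑ k, ginv g x i k * pd k (XfV X f) x = ∑ k, gradV g f x k * pd k (XfV X f) x := by
    simp only [Finset.mul_sum]
    rw [Finset.sum_comm]
    refine Finset.sum_congr rfl fun k _ => ?_
    unfold gradV
    rw [Finset.sum_mul]
    refine Finset.sum_congr rfl fun i _ => ?_
    rw [ginv_symm (hgs x) i k]; ring
  have e1 : ∑ k, gradV g f x k * pd k (XfV X f) x =
      (∑ i, pd i f x * ∑ k, gradV g f x k * pd k (fun y => X y i) x) +
        ∑ k, X x k * ∑ i, pd k (pd i f) x * gradV g f x i := by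
    simp only [pd_XfV hX hf, Finset.mul_sum, mul_add, Finset.sum_add_distrib]
    congr 1
    · rw [Finset.sum_comm]
      exact Finset.sum_congr rfl fun k _ => Finset.sum_congr rfl fun j _ => by ring
    · rw [Finset.sum_comm]
      refine Finset.sum_congr rfl fun k _ => Finset.sum_congr rfl fun j _ => ?_
      rw [pd_comm (i := j) (j := k) (hf.of_le (by norm_cast)).contDiffAt]; ring
  have e2 : ∑ i, pd i f x * ∑ k, X x k * pd k (fun y => gradV g f y i) x =
      ∑ k, X x k * ∑ i, pd i f x * pd k (fun y => gradV g f y i) x := by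
    simp only [Finset.mul_sum]
    rw [Finset.sum_comm]
    exact Finset.sum_congr rfl fun k _ => Finset.sum_congr rfl fun j _ => by ring
  simp only [h2, mul_sub, Finset.sum_sub_distrib, Finset.sum_add_distrib, mul_add]
  rw [e0, e2]
  linarith

theorem nu_ds (hgs : symT g) (hp : posdef g) (hg : smoothT g) {f : Pt n → ℝ}
    (hf : ContDiff ℝ (⊤ : ℕ∞) f) {X : Pt n → Fin n → ℝ}
    (hX : ∀ i, ContDiff ℝ 3 (fun x => X x i)) {x : Pt n} (hx : fderiv ℝ f x ≠ 0) (i : Fin n) :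
    HasDerivAt (fun s => nuV (mpert g (fun y a b => lieg g X y a b) s) f x i)
      ((∑ k, X x k * pd k (fun y => nuV g f y i) x) - (∑ k, nuV g f x k * pd k (fun y => X y i) x)
        - JV g f X i x) 0 := by
  have hR := RV_pos hp hx
  have h0 : mpert g (fun y a b => lieg g X y a b) 0 = g := by funext y a b; simp [mpert]
  have hR0 : RV (mpert g (fun y a b => lieg g X y a b) 0) f x = RV g f x := by rw [h0]
  set ρ := Real.sqrt (RV g f x) with hρ
  have hρ0 : 0 < ρ := Real.sqrt_pos.2 hR
  have hρ2 : ρ ^ 2 = RV g f x := Real.sq_sqrt hR.le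
  have h1 := ((grad_ds hgs hp hg hf hX x i)).fun_div ((R_ds hgs hp hg hf hX x).sqrt (by rw [hR0]; exact hR.ne'))
    (by simp only [hR0]; exact hρ0.ne')
  refine HasDerivAt.congr_deriv h1 ?_
  symm
  simp only [hR0, h0, ← hρ]
  have h2 : ∀ k, pd k (fun y => nuV g f y i) x =
      pd k (fun y => gradV g f y i) x / ρ - gradV g f x i * pd k (RV g f) x / (2 * ρ ^ 3) := by
    intro k
    have dG := (gradV_cd hp hg hf i).differentiable (by simp) x
    have dR := (RV_cd hp hg hf).differentiable (by simp) x
    have dν : DifferentiableAt ℝ (fun y => nuV g f y i) x :=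
      (nuV_cd hp hg hf hx i).differentiableAt (by simp)
    have dS : DifferentiableAt ℝ (fun y => Real.sqrt (RV g f y)) x := dR.sqrt hR.ne'
    have hSR : pd k (RV g f) x = 2 * ρ * pd k (fun y => Real.sqrt (RV g f y)) x := by
      have : pd k (fun y => Real.sqrt (RV g f y)) x = pd k (RV g f) x / (2 * ρ) := by
        unfold pd
        rw [fderiv_sqrt dR hR.ne', ← hρ]
        simp; ring
      rw [this]; field_simp
    have hev : (fun y => gradV g f y i) =ᶠ[nhds x] fun y => nuV g f y i * Real.sqrt (RV g f y) := by
      have : ∀ᶠ y in nhds x, 0 < RV g f y := (RV_cd hp hg hf).continuous.continuousAt.eventually (lt_mem_nhds hR)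
      filter_upwards [this] with y hy
      rw [show nuV g f y i = gradV g f y i / Real.sqrt (RV g f y) from rfl,
        div_mul_cancel₀ _ (Real.sqrt_pos.2 hy).ne']
    rw [pd_congr hev, pd_mul dν dS, hSR, show gradV g f x i = nuV g f x i * ρ from hev.self_of_nhds,
      ← hρ]
    field_simp
    ring
  have e1 : ∑ k, X x k * pd k (fun y => nuV g f y i) x =
      (∑ k, X x k * pd k (fun y => gradV g f y i) x) / ρ
        - gradV g f x i * (∑ k, X x k * pd k (RV g f) x) / (2 * ρ ^ 3) := by
    simp only [h2, mul_sub, Finset.sum_sub_distrib, Finset.sum_div, Finset.mul_sum]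
    congr 1
    · exact Finset.sum_congr rfl fun k _ => by ring
    · exact Finset.sum_congr rfl fun k _ => by ring
  have e2 : ∑ k, nuV g f x k * pd k (fun y => X y i) x =
      (∑ k, gradV g f x k * pd k (fun y => X y i) x) / ρ := by
    rw [Finset.sum_div]
    exact Finset.sum_congr rfl fun k _ => by
      rw [show nuV g f x k = gradV g f x k / ρ from rfl]; ring
  have e3 : JV g f X i x = ((∑ k, ginv g x i k * pd k (XfV X f) x)
      - gradV g f x i * (∑ k, gradV g f x k * pd k (XfV X f) x) / ρ ^ 2) / ρ := by
    unfold JV PV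
    rw [← hρ, hρ2]
    congr 1
    rw [Finset.mul_sum, Finset.sum_div, ← Finset.sum_sub_distrib]
    exact Finset.sum_congr rfl fun k _ => by ring
  rw [e1, e2, e3]
  field_simp
  ring
end Lin

section Lin2
variable {n : ℕ} {g : Pt n → Fin n → Fin n → ℝ}

theorem lieg_cd (hgs : symT g) (hp : posdef g) (hg : smoothT g) {X : Pt n → Fin n → ℝ}
    (hX : ∀ i, ContDiff ℝ 3 (fun x => X x i)) (i j : Fin n) :
    ContDiff ℝ 2 (fun x => lieg g X x i j) := by
  have : (fun x => lieg g X x i j) = fun x => ∑ k, (X x k * pd k (fun y => g y i j) x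
      + g x k j * pd i (fun y => X y k) x + g x i k * pd j (fun y => X y k) x) := by
    funext x
    exact lieg_eq (hp.det x) hgs (fun i j => (hg i j).differentiable (by simp) x)
      (fun i => (hX i).differentiable (by simp) x) i j
  rw [this]
  have hX2 : ∀ k, ContDiff ℝ 2 (fun x => X x k) := fun k => (hX k).of_le (by norm_num)
  have hg2 : ∀ i j, ContDiff ℝ 2 (fun x => g x i j) := fun i j => (hg i j).of_le (by norm_cast)
  have hpg : ∀ k, ContDiff ℝ 2 (pd k (fun y => g y i j)) := fun k =>
    (cd_pd_top (hg i j)).of_le (by norm_cast)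
  have hpX : ∀ i k, ContDiff ℝ 2 (pd i (fun y => X y k)) := fun i k =>
    cd_pd (hX k) (by norm_num)
  exact ContDiff.sum fun k _ => (((hX2 k).mul (hpg k)).add ((hg2 k j).mul (hpX i k))).add
    ((hg2 i k).mul (hpX j k))

theorem ellV_cd (hp : posdef g) (hg : smoothT g) (i : Fin n) : ContDiff ℝ (⊤ : ℕ∞) (ellV g i) := by
  unfold ellV
  exact contDiff_const.mul (ContDiff.sum fun a _ => ContDiff.sum fun b _ =>
    (ginv_cd hp hg a b).mul (cd_pd_top (hg a b)))

theorem sum_swap4 {ι : Type*} [Fintype ι] (F : ι → ι → ι → ι → ℝ) :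
    ∑ a, ∑ b, ∑ c, ∑ d, F a b c d = ∑ c, ∑ d, ∑ a, ∑ b, F a b c d := by
  have h : ∀ G : ι → ι → ℝ, ∑ a, ∑ b, G a b = ∑ p : ι × ι, G p.1 p.2 := fun G =>
    (Fintype.sum_prod_type' G).symm
  simp only [h]
  rw [Finset.sum_comm]

theorem trace_lie (hgs : symT g) (hp : posdef g) (hg : smoothT g) {X : Pt n → Fin n → ℝ}
    (hX : ∀ i, ContDiff ℝ 3 (fun x => X x i)) (x : Pt n) :
    (1/2) * ∑ a, ∑ b, ginv g x a b * lieg g X x a b =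
      ∑ k, (X x k * ellV g k x + pd k (fun y => X y k) x) := by
  have hd := hp.det x
  have dg : ∀ i j, DifferentiableAt ℝ (fun y => g y i j) x := fun i j =>
    (hg i j).differentiable (by simp) x
  have dX : ∀ i, DifferentiableAt ℝ (fun y => X y i) x := fun i =>
    (hX i).differentiable (by simp) x
  simp only [lieg_eq hd hgs dg dX, Finset.sum_add_distrib, mul_add]
  have e1 : ∑ a, ∑ b, ginv g x a b * ∑ k, X x k * pd k (fun y => g y a b) x =
      2 * ∑ k, X x k * ellV g k x := by
    unfold ellV
    simp only [Finset.mul_sum]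
    rw [sum_rot]
    exact Finset.sum_congr rfl fun l _ => Finset.sum_congr rfl fun i _ =>
      Finset.sum_congr rfl fun j _ => by ring
  have e2 : ∑ a, ∑ b, ginv g x a b * ∑ k, g x k b * pd a (fun y => X y k) x =
      ∑ k, pd k (fun y => X y k) x := by
    refine Finset.sum_congr rfl fun a _ => ?_
    rw [← contr_ginv hd (fun k => pd a (fun y => X y k) x) a]
    refine Finset.sum_congr rfl fun b _ => ?_
    congr 1
    exact Finset.sum_congr rfl fun k _ => by rw [hgs x k b]
  have e3 : ∑ a, ∑ b, ginv g x a b * ∑ k, g x a k * pd b (fun y => X y k) x =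
      ∑ k, pd k (fun y => X y k) x := by
    rw [Finset.sum_comm]
    refine Finset.sum_congr rfl fun b _ => ?_
    rw [← contr_ginv hd (fun k => pd b (fun y => X y k) x) b]
    refine Finset.sum_congr rfl fun a _ => ?_
    rw [ginv_symm (hgs x) a b]
  rw [e1, e2, e3]; ring

theorem ell_ds (hgs : symT g) (hp : posdef g) (hg : smoothT g) {X : Pt n → Fin n → ℝ}
    (hX : ∀ i, ContDiff ℝ 3 (fun x => X x i)) (x : Pt n) (i : Fin n) :
    HasDerivAt (fun s => ellV (mpert g (fun y a b => lieg g X y a b) s) i x)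
      (∑ k, (pd i (fun y => X y k) x * ellV g k x + X x k * pd i (ellV g k) x
        + pd i (pd k (fun y => X y k)) x)) 0 := by
  have dg : ∀ i j, DifferentiableAt ℝ (fun y => g y i j) x := fun i j =>
    (hg i j).differentiable (by simp) x
  have dX : ∀ i, DifferentiableAt ℝ (fun y => X y i) x := fun i =>
    (hX i).differentiable (by simp) x
  have dpX : ∀ k i, DifferentiableAt ℝ (pd k (fun y => X y i)) x := fun k i =>
    (cd_pd (m := 2) (hX i) (by norm_num)).differentiable (by simp) x
  have dh : ∀ a b, DifferentiableAt ℝ (fun y => lieg g X y a b) x := fun a b =>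
    (lieg_cd hgs hp hg hX a b).differentiable (by simp) x
  have dG : ∀ i j, DifferentiableAt ℝ (fun y => ginv g y i j) x := fun i j =>
    (ginv_cd hp hg i j).differentiable (by simp) x
  have dl : ∀ i, DifferentiableAt ℝ (ellV g i) x := fun i =>
    (ellV_cd hp hg i).differentiable (by simp) x
  have h0 : mpert g (fun y a b => lieg g X y a b) 0 = g := by funext y a b; simp [mpert]
  have e1 : ∀ s a b, pd i (fun y => mpert g (fun y a b => lieg g X y a b) s y a b) x =
      pd i (fun y => g y a b) x + s * pd i (fun y => lieg g X y a b) x := by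
    intro s a b
    unfold mpert
    rw [pd_add (dg a b) ((dh a b).const_mul s), pd_cmul (dh a b)]
  have h1 : HasDerivAt (fun s => ellV (mpert g (fun y a b => lieg g X y a b) s) i x)
      ((1/2) * ∑ a, ∑ b, ((- ∑ c, ∑ d, ginv g x a c * lieg g X x c d * ginv g x d b) *
        (pd i (fun y => g y a b) x) + ginv g x a b * pd i (fun y => lieg g X y a b) x)) 0 := by
    unfold ellV
    simp only [e1]
    refine HasDerivAt.const_mul _ ?_
    refine HasDerivAt.fun_sum fun a _ => HasDerivAt.fun_sum fun b _ => ?_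
    have h2 := (ginv_ds hp (fun y a b => lieg g X y a b) x a b)
    have h3 : HasDerivAt (fun s : ℝ => pd i (fun y => g y a b) x + s * pd i (fun y => lieg g X y a b) x)
        (pd i (fun y => lieg g X y a b) x) 0 := by
      simpa using ((hasDerivAt_id (0:ℝ)).mul_const (pd i (fun y => lieg g X y a b) x)).const_add
        (pd i (fun y => g y a b) x)
    have h4 := h2.fun_mul h3
    simp only [h0, zero_mul, add_zero] at h4
    exact h4
  refine HasDerivAt.congr_deriv h1 ?_
  have h5 : pd i (fun y => (1/2) * ∑ a, ∑ b, ginv g y a b * lieg g X y a b) x =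
      ∑ k, (pd i (fun y => X y k) x * ellV g k x + X x k * pd i (ellV g k) x
        + pd i (pd k (fun y => X y k)) x) := by
    simp only [trace_lie hgs hp hg hX]
    rw [pd_sum (fun k _ => ((dX k).fun_mul (dl k)).fun_add (dpX k k))]
    refine Finset.sum_congr rfl fun k _ => ?_
    rw [pd_add ((dX k).fun_mul (dl k)) (dpX k k), pd_mul (dX k) (dl k)]
  rw [← h5]
  have d2 : ∀ a b, DifferentiableAt ℝ (fun y => ginv g y a b * lieg g X y a b) x := fun a b =>
    (dG a b).fun_mul (dh a b)
  rw [pd_cmul (DifferentiableAt.fun_sum fun a _ => DifferentiableAt.fun_sum fun b _ => d2 a b),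
    pd_sum (fun a _ => DifferentiableAt.fun_sum fun b _ => d2 a b)]
  congr 1
  have h6 : ∀ a, pd i (fun y => ∑ b, ginv g y a b * lieg g X y a b) x =
      ∑ b, (pd i (fun y => ginv g y a b) x * lieg g X x a b + ginv g x a b * pd i (fun y => lieg g X y a b) x) := by
    intro a
    rw [pd_sum (fun b _ => d2 a b)]
    exact Finset.sum_congr rfl fun b _ => pd_mul (dG a b) (dh a b)
  simp only [h6, Finset.sum_add_distrib]
  congr 1
  simp only [pd_ginv hp hg, neg_mul, Finset.sum_neg_distrib, Finset.sum_mul]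
  congr 1
  rw [sum_swap4]
  exact Finset.sum_congr rfl fun a _ => Finset.sum_congr rfl fun b _ => Finset.sum_congr rfl fun c _ =>
    Finset.sum_congr rfl fun d _ => by
      rw [ginv_symm (hgs x) c a, ginv_symm (hgs x) b d]; ring

/-- zeroth order coefficient in the linearised mean curvature -/
def QV (g : Pt n → Fin n → Fin n → ℝ) (f : Pt n → ℝ) (k : Fin n) (x : Pt n) : ℝ :=
  ∑ i, (pd i (pd k (fun y => nuV g f y i)) x + pd k (fun y => nuV g f y i) x * ellV g i x
    + nuV g f x i * pd i (ellV g k) x)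

theorem hmeanLin_lie (hgs : symT g) (hp : posdef g) (hg : smoothT g) {f : Pt n → ℝ}
    (hf : ContDiff ℝ (⊤ : ℕ∞) f) {X : Pt n → Fin n → ℝ}
    (hX : ∀ i, ContDiff ℝ 3 (fun x => X x i)) {x : Pt n} (hx : fderiv ℝ f x ≠ 0) :
    hmeanLin g (fun y a b => lieg g X y a b) f x =
      (∑ k, X x k * QV g f k x) - (∑ i, pd i (JV g f X i) x) - ∑ i, JV g f X i x * ellV g i x := by
  set h : Pt n → Fin n → Fin n → ℝ := fun y a b => lieg g X y a b with hh
  have h0 : mpert g h 0 = g := by funext y a b; simp [mpert]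
  have cM : ∀ a b, ContDiffAt ℝ 2 (fun q : ℝ × Pt n => mpert g h q.1 q.2 a b) (0, x) := by
    intro a b
    have h1 : ContDiff ℝ 2 (fun y => g y a b) := (hg a b).of_le (by norm_cast)
    have h2 : ContDiff ℝ 2 (fun y => h y a b) := lieg_cd hgs hp hg hX a b
    exact ((h1.comp contDiff_snd).add (contDiff_fst.mul (h2.comp contDiff_snd))).contDiffAt
  have hd0 : (Matrix.of (mpert g h (0, x).1 (0, x).2)).det ≠ 0 := by
    rw [show mpert g h (0, x).1 (0, x).2 = g x by simp [h0]]; exact hp.det x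
  have cG : ∀ a b, ContDiffAt ℝ 2 (fun q : ℝ × Pt n => ginv (mpert g h q.1) q.2 a b) (0, x) :=
    fun a b => cd_inv cM hd0 a b
  have cf : ∀ a, ContDiffAt ℝ 2 (fun q : ℝ × Pt n => pd a f q.2) (0, x) := fun a =>
    (((cd_pd_top hf).of_le (by norm_cast) : ContDiff ℝ 2 (pd a f)).comp contDiff_snd).contDiffAt
  have cgr : ∀ a, ContDiffAt ℝ 2 (fun q : ℝ × Pt n => gradV (mpert g h q.1) f q.2 a) (0, x) := by
    intro a
    unfold gradV
    exact ContDiffAt.sum fun j _ => (cG a j).mul (cf j)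
  have cR : ContDiffAt ℝ 2 (fun q : ℝ × Pt n => RV (mpert g h q.1) f q.2) (0, x) := by
    simp only [RV_eq]
    exact ContDiffAt.sum fun j _ => (cf j).mul (cgr j)
  have hR0 : 0 < RV (mpert g h (0, x).1) f (0, x).2 := by
    simp only [h0]; exact RV_pos hp hx
  have cν : ∀ a, ContDiffAt ℝ 2 (fun q : ℝ × Pt n => nuV (mpert g h q.1) f q.2 a) (0, x) :=
    fun a => (cgr a).div (cR.sqrt hR0.ne') (Real.sqrt_pos.2 hR0).ne'
  have tds : Tendsto (fun s : ℝ => (s, x)) (nhds 0) (nhds (0, x)) :=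
    (Continuous.prodMk_left x).tendsto 0
  have dνs : ∀ᶠ s in nhds (0:ℝ), ∀ a, DifferentiableAt ℝ (fun y => nuV (mpert g h s) f y a) x := by
    rw [eventually_all]
    intro a
    have h1 := tds.eventually ((cν a).eventually (by simp))
    filter_upwards [h1] with s hs
    have h2 : DifferentiableAt ℝ (fun q : ℝ × Pt n => nuV (mpert g h q.1) f q.2 a) (s, x) :=
      hs.differentiableAt (by norm_num)
    exact DifferentiableAt.comp (g := fun q : ℝ × Pt n => nuV (mpert g h q.1) f q.2 a)
      (f := fun y => (s, y)) x h2 (by fun_prop)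
  have hds : ∀ᶠ s in nhds (0:ℝ), (Matrix.of (mpert g h s x)).det ≠ 0 := by
    have h1 : ContDiffAt ℝ 2 (fun q : ℝ × Pt n => (Matrix.of (mpert g h q.1 q.2)).det) (0, x) := cd_det cM
    exact tds.eventually (h1.continuousAt.eventually_ne hd0)
  have dmp : ∀ s i j, DifferentiableAt ℝ (fun y => mpert g h s y i j) x := by
    intro s i j
    exact ((hg i j).differentiable (by simp) x).add
      (((lieg_cd hgs hp hg hX i j).differentiable (by simp) x).const_mul s)
  have smp : ∀ s i j, mpert g h s x i j = mpert g h s x j i := by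
    intro s i j
    simp only [mpert, hh, lieg, hgs x i j]; ring
  have hHev : (fun s => hmean (mpert g h s) f x) =ᶠ[nhds 0] fun s =>
      (∑ i, pd i (fun y => nuV (mpert g h s) f y i) x) +
        ∑ i, nuV (mpert g h s) f x i * ellV (mpert g h s) i x := by
    filter_upwards [hds, dνs] with s h1 h2 using hmean_eq h1 (smp s) (dmp s) h2
  have dX : ∀ i, DifferentiableAt ℝ (fun y => X y i) x := fun i =>
    (hX i).differentiable (by simp) x
  have dpX : ∀ k i, DifferentiableAt ℝ (pd k (fun y => X y i)) x := fun k i =>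
    (cd_pd (m := 2) (hX i) (by norm_num)).differentiable (by simp) x
  have dν : ∀ i, DifferentiableAt ℝ (fun y => nuV g f y i) x := fun i =>
    (nuV_cd hp hg hf hx i).differentiableAt (by simp)
  have dpν : ∀ k i, DifferentiableAt ℝ (pd k (fun y => nuV g f y i)) x := fun k i =>
    (cdAt_pd_top (nuV_cd hp hg hf hx i)).differentiableAt (by simp)
  have dJ : ∀ i, DifferentiableAt ℝ (JV g f X i) x := fun i =>
    (JV_cd hp hg hf hx hX i).differentiableAt (by simp)
  have hxev : ∀ᶠ y in nhds x, fderiv ℝ f y ≠ 0 :=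
    ((hf.continuous_fderiv (by simp)).continuousAt).eventually_ne hx
  have hν' : ∀ i, pd i (fun y => deriv (fun s => nuV (mpert g h s) f y i) 0) x =
      (∑ k, (pd i (fun y => X y k) x * pd k (fun y => nuV g f y i) x
        + X x k * pd i (pd k (fun y => nuV g f y i)) x))
      - (∑ k, (pd i (fun y => nuV g f y k) x * pd k (fun y => X y i) x
        + nuV g f x k * pd i (pd k (fun y => X y i)) x)) - pd i (JV g f X i) x := by
    intro i
    have e : (fun y => deriv (fun s => nuV (mpert g h s) f y i) 0) =ᶠ[nhds x] fun y =>
        (∑ k, X y k * pd k (fun y => nuV g f y i) y) - (∑ k, nuV g f y k * pd k (fun y => X y i) y)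
        - JV g f X i y := by
      filter_upwards [hxev] with y hy using (nu_ds hgs hp hg hf hX hy i).deriv
    have d1 : ∀ k, DifferentiableAt ℝ (fun y => X y k * pd k (fun y => nuV g f y i) y) x :=
      fun k => (dX k).fun_mul (dpν k i)
    have d2 : ∀ k, DifferentiableAt ℝ (fun y => nuV g f y k * pd k (fun y => X y i) y) x :=
      fun k => (dν k).fun_mul (dpX k i)
    rw [pd_congr e, pd_sub ((DifferentiableAt.fun_sum fun k _ => d1 k).fun_sub
      (DifferentiableAt.fun_sum fun k _ => d2 k)) (dJ i),
      pd_sub (DifferentiableAt.fun_sum fun k _ => d1 k) (DifferentiableAt.fun_sum fun k _ => d2 k),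
      pd_sum (fun k _ => d1 k), pd_sum (fun k _ => d2 k)]
    congr 2
    · exact Finset.sum_congr rfl fun k _ => pd_mul (dX k) (dpν k i)
    · exact Finset.sum_congr rfl fun k _ => pd_mul (dν k) (dpX k i)
  have hD : HasDerivAt (fun s => hmean (mpert g h s) f x)
      ((∑ i, pd i (fun y => deriv (fun s => nuV (mpert g h s) f y i) 0) x) +
      ∑ i, (((∑ k, X x k * pd k (fun y => nuV g f y i) x) - (∑ k, nuV g f x k * pd k (fun y => X y i) x)
        - JV g f X i x) * ellV g i x + nuV g f x i * (∑ k, (pd i (fun y => X y k) x * ellV g k x + X x k * pd i (ellV g k) x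
        + pd i (pd k (fun y => X y k)) x)))) 0 := by
    refine HasDerivAt.congr_of_eventuallyEq ?_ hHev
    refine HasDerivAt.fun_add (HasDerivAt.fun_sum fun i _ => comm_ds i (cν i)) (HasDerivAt.fun_sum fun i _ => ?_)
    have h1 := (nu_ds hgs hp hg hf hX hx i).fun_mul (ell_ds hgs hp hg hX x i)
    rw [h0] at h1
    exact h1
  unfold hmeanLin
  rw [hD.deriv]
  simp only [hν']
  unfold QV
  -- algebra
  simp only [sub_mul, mul_add, Finset.sum_add_distrib, Finset.sum_sub_distrib, Finset.mul_sum,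
    Finset.sum_mul]
  have s1 : ∑ i, ∑ k, pd i (fun y => X y k) x * pd k (fun y => nuV g f y i) x =
      ∑ i, ∑ k, pd i (fun y => nuV g f y k) x * pd k (fun y => X y i) x := by
    rw [Finset.sum_comm]
    exact Finset.sum_congr rfl fun k _ => Finset.sum_congr rfl fun j _ => by ring
  have s2 : ∑ i, ∑ k, nuV g f x k * pd i (pd k (fun y => X y i)) x =
      ∑ i, ∑ k, nuV g f x i * pd i (pd k (fun y => X y k)) x := by
    rw [Finset.sum_comm]
    refine Finset.sum_congr rfl fun k _ => Finset.sum_congr rfl fun j _ => ?_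
    rw [pd_comm ((hX j).of_le (by norm_num)).contDiffAt]
  have s3 : ∑ i, ∑ k, nuV g f x k * pd k (fun y => X y i) x * ellV g i x =
      ∑ i, ∑ k, nuV g f x i * (pd i (fun y => X y k) x * ellV g k x) := by
    rw [Finset.sum_comm]
    exact Finset.sum_congr rfl fun k _ => Finset.sum_congr rfl fun j _ => by ring
  have s4 : ∑ i, ∑ k, X x k * pd i (pd k (fun y => nuV g f y i)) x =
      ∑ k, ∑ i, X x k * pd i (pd k (fun y => nuV g f y i)) x := Finset.sum_comm
  have s5 : ∑ i, ∑ k, X x k * pd k (fun y => nuV g f y i) x * ellV g i x =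
      ∑ k, ∑ i, X x k * (pd k (fun y => nuV g f y i) x * ellV g i x) := by
    rw [Finset.sum_comm]
    exact Finset.sum_congr rfl fun k _ => Finset.sum_congr rfl fun j _ => by ring
  have s6 : ∑ i, ∑ k, nuV g f x i * (X x k * pd i (ellV g k) x) =
      ∑ k, ∑ i, X x k * (nuV g f x i * pd i (ellV g k) x) := by
    rw [Finset.sum_comm]
    exact Finset.sum_congr rfl fun k _ => Finset.sum_congr rfl fun j _ => by ring
  rw [s1, s2, s3, s4, s5, s6]; ring
end Lin2

section Chart
variable {n : ℕ}

/-- replace the `k`-th coordinate by `f` -/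
def FV (f : Pt n → ℝ) (k : Fin n) (x : Pt n) : Pt n := fun i => if i = k then f x else x i

theorem FV_cd {f : Pt n → ℝ} (hf : ContDiff ℝ (⊤:ℕ∞) f) (k : Fin n) : ContDiff ℝ (⊤:ℕ∞) (FV f k) := by
  refine contDiff_pi.2 fun i => ?_
  unfold FV
  by_cases h : i = k
  · simpa [h] using hf
  · simpa [h] using contDiff_apply ℝ ℝ i

theorem FV_equiv {f : Pt n → ℝ} (hf : ContDiff ℝ (⊤:ℕ∞) f) (k : Fin n) {x : Pt n}
    (hx : pd k f x ≠ 0) : ∃ A : Pt n ≃L[ℝ] Pt n, HasFDerivAt (FV f k) (A : Pt n →L[ℝ] Pt n) x := by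
  have h1 : HasFDerivAt (FV f k) (fderiv ℝ (FV f k) x) x :=
    ((FV_cd hf k).differentiable (by simp) x).hasFDerivAt
  have hval : ∀ v i, fderiv ℝ (FV f k) x v i = if i = k then fderiv ℝ f x v else v i := by
    intro v i
    have h2 := (hasFDerivAt_pi'.1 h1) i
    by_cases h : i = k
    · have h3 : HasFDerivAt (fun y => FV f k y i) (fderiv ℝ f x) x := by
        simpa [FV, h] using (hf.differentiable (by simp) x).hasFDerivAt
      have := congrArg (fun L : Pt n →L[ℝ] ℝ => L v) (h2.unique h3)
      simpa [h] using this
    · have h3 : HasFDerivAt (fun y => FV f k y i) (ContinuousLinearMap.proj (R := ℝ) (φ := fun _ : Fin n => ℝ) i) x := by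
        simpa [FV, h] using hasFDerivAt_apply (𝕜 := ℝ) i x
      have := congrArg (fun L : Pt n →L[ℝ] ℝ => L v) (h2.unique h3)
      simpa [h] using this
  have hinj : Function.Injective (fderiv ℝ (FV f k) x : Pt n →ₗ[ℝ] Pt n) := by
    rw [← LinearMap.ker_eq_bot, LinearMap.ker_eq_bot']
    intro v hv
    have hv' : ∀ i, fderiv ℝ (FV f k) x v i = 0 := fun i => congrFun hv i
    have h4 : ∀ i, i ≠ k → v i = 0 := fun i hi => by
      have := hv' i; rw [hval] at this; simpa [hi] using this
    have h5 : fderiv ℝ f x v = 0 := by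
      have := hv' k; rw [hval] at this; simpa using this
    rw [fderiv_eq_sum_pd, Finset.sum_eq_single k (fun i _ hi => by rw [h4 i hi, zero_mul])
      (by simp)] at h5
    funext i
    by_cases h : i = k
    · subst h
      exact (mul_eq_zero.1 h5).resolve_right hx
    · exact h4 i h
  let A0 := LinearEquiv.ofInjectiveEndo (fderiv ℝ (FV f k) x : Pt n →ₗ[ℝ] Pt n) hinj
  refine ⟨A0.toContinuousLinearEquiv, ?_⟩
  convert h1 using 1
  exact ContinuousLinearMap.ext fun v => rfl

theorem chart_exists {f : Pt n → ℝ} (hf : ContDiff ℝ (⊤:ℕ∞) f) {p : Pt n} (hp : f p = 0)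
    (hdf : fderiv ℝ f p ≠ 0) :
    ∃ (k : Fin n) (Φ : Pt n → Pt n) (δ : ℝ), 0 < δ ∧ ContDiff ℝ (⊤:ℕ∞) Φ ∧ Φ 0 = p ∧
      (∀ y, f (Φ y) = 0) ∧ (∀ y, pd k f (Φ y) ≠ 0) ∧
      (∀ y ∈ Metric.ball (0:Pt n) δ, ∀ a, a ≠ k → Φ y a = p a + y a) ∧
      (∀ᶠ q in nhds p, f q = 0 → Φ (q - p) = q) := by
  obtain ⟨k, hk⟩ : ∃ k, pd k f p ≠ 0 := by
    by_contra hcon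
    push Not at hcon
    apply hdf
    ext v
    rw [fderiv_eq_sum_pd]
    simp [hcon]
  obtain ⟨A, hA⟩ := FV_equiv hf k hk
  have hFp : ContDiffAt ℝ (⊤:ℕ∞) (FV f k) p := (FV_cd hf k).contDiffAt
  let e := hFp.toOpenPartialHomeomorph (FV f k) hA (by simp)
  have hecoe : ∀ x, e x = FV f k x := fun x => rfl
  have hps : p ∈ e.source := hFp.mem_toOpenPartialHomeomorph_source hA (by simp)
  have hU : e.target ∩ e.symm ⁻¹' {x | pd k f x ≠ 0} ∈ nhds (FV f k p) := by
    have hc : Continuous (pd k f) := (cd_pd_top hf).continuous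
    have ho : IsOpen {x | pd k f x ≠ 0} := isOpen_ne_fun hc continuous_const
    have h1 : IsOpen (e.target ∩ e.symm ⁻¹' {x | pd k f x ≠ 0}) := e.isOpen_inter_preimage_symm ho
    refine h1.mem_nhds ⟨?_, ?_⟩
    · exact e.map_source hps
    · change pd k f (e.symm (FV f k p)) ≠ 0
      rw [← hecoe, e.left_inv hps]; exact hk
  obtain ⟨r, hr, hrU⟩ := Metric.mem_nhds_iff.1 hU
  let χ : ContDiffBump (0 : Pt n) := ⟨r/4, r/2, by linarith, by linarith⟩
  have hχ : ContDiff ℝ (⊤:ℕ∞) χ := χ.contDiff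
  let T : Pt n → Pt n := fun y i => FV f k p i + if i = k then 0 else χ y * y i
  have hT : ContDiff ℝ (⊤:ℕ∞) T := by
    refine contDiff_pi.2 fun i => contDiff_const.add ?_
    by_cases h : i = k
    · simp only [h, if_true]; exact contDiff_const
    · simp only [h, if_false]; exact hχ.mul (contDiff_apply ℝ ℝ i)
  have hTb : ∀ y, T y ∈ Metric.ball (FV f k p) r := by
    intro y
    rw [Metric.mem_ball, dist_pi_lt_iff hr]
    intro i
    simp only [T, Real.dist_eq, add_sub_cancel_left]
    by_cases h : i = k
    · simpa [h] using hr
    · simp only [h, if_false]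
      by_cases hy : ‖y‖ < r/2
      · rw [abs_mul, abs_of_nonneg χ.nonneg]
        have h1 : |y i| ≤ ‖y‖ := norm_le_pi_norm y i
        have h2 : χ y ≤ 1 := χ.le_one
        have h3 : χ y * |y i| ≤ 1 * |y i| := mul_le_mul_of_nonneg_right h2 (abs_nonneg _)
        linarith
      · have : χ y = 0 := χ.zero_of_le_dist (by simpa using not_lt.1 hy)
        simpa [this] using hr
  have hTU : ∀ y, T y ∈ e.target ∧ pd k f (e.symm (T y)) ≠ 0 := fun y => hrU (hTb y)
  have hFT : ∀ y i, FV f k (e.symm (T y)) i = T y i := fun y i => by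
    rw [← hecoe, e.right_inv (hTU y).1]
  have hT1 : ∀ y ∈ Metric.ball (0:Pt n) (r/4), χ y = 1 := fun y hy =>
    χ.one_of_mem_closedBall (Metric.ball_subset_closedBall hy)
  refine ⟨k, fun y => e.symm (T y), r/4, by linarith, ?_, ?_, ?_, fun y => (hTU y).2, ?_, ?_⟩
  · rw [contDiff_iff_contDiffAt]
    intro y
    obtain ⟨B, hB⟩ := FV_equiv hf k (hTU y).2
    have h1 : ContDiffAt ℝ (⊤:ℕ∞) e.symm (T y) :=
      e.contDiffAt_symm (hTU y).1 hB (FV_cd hf k).contDiffAt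
    exact h1.comp y hT.contDiffAt
  · have : T 0 = e p := by
      funext i; simp [T, hecoe]
    simp only [this]
    exact e.left_inv hps
  · intro y
    have := hFT y k
    simpa [FV, T, hp] using this
  · intro y hy a ha
    have := hFT y a
    simpa [FV, T, ha, hT1 y hy] using this
  · filter_upwards [e.open_source.mem_nhds hps, Metric.ball_mem_nhds p (show 0 < r/4 by linarith)]
      with q hq hqb hfq
    have hb : q - p ∈ Metric.ball (0:Pt n) (r/4) := by
      simpa [dist_eq_norm] using hqb
    have : T (q - p) = e q := by
      funext i
      rw [hecoe]
      by_cases h : i = k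
      · simp [T, FV, h, hp, hfq]
      · simp [T, FV, h, hT1 _ hb]
    simp only [this]
    exact e.left_inv hq
end Chart

section Geo
variable {n : ℕ} {g : Pt n → Fin n → Fin n → ℝ} {f : Pt n → ℝ} {Φ : Pt n → Pt n}

/-- coordinate tangent vectors of the parametrised hypersurface -/
def eV (Φ : Pt n → Pt n) (a i : Fin n) (y : Pt n) : ℝ := pd a (fun z => Φ z i) y

theorem comp_cd (hΦ : ContDiff ℝ (⊤:ℕ∞) Φ) (i : Fin n) : ContDiff ℝ (⊤:ℕ∞) (fun z => Φ z i) :=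
  (contDiff_pi.1 hΦ) i

theorem eV_cd (hΦ : ContDiff ℝ (⊤:ℕ∞) Φ) (a i : Fin n) : ContDiff ℝ (⊤:ℕ∞) (eV Φ a i) :=
  cd_pd_top (comp_cd hΦ i)

theorem tang_e (hf : ContDiff ℝ (⊤:ℕ∞) f) (hΦ : ContDiff ℝ (⊤:ℕ∞) Φ) (h0 : ∀ y, f (Φ y) = 0)
    (a : Fin n) (y : Pt n) : ∑ i, pd i f (Φ y) * eV Φ a i y = 0 := by
  have h := pd_comp (a := a) (hf.differentiable (by simp) (Φ y)) (hΦ.differentiable (by simp) y)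
  simp only [h0, pd_const] at h
  exact h.symm

theorem e_coord {k : Fin n} {p : Pt n} {δ : ℝ}
    (hco : ∀ y ∈ Metric.ball (0:Pt n) δ, ∀ a, a ≠ k → Φ y a = p a + y a)
    {y : Pt n} (hy : y ∈ Metric.ball (0:Pt n) δ) (a : Fin n) {i : Fin n} (hi : i ≠ k) :
    eV Φ a i y = if i = a then 1 else 0 := by
  have h1 : (fun z => Φ z i) =ᶠ[nhds y] fun z => p i + z i := by
    filter_upwards [Metric.isOpen_ball.mem_nhds hy] with z hz using hco z hz i hi
  unfold eV
  rw [pd_congr h1, pd_add (differentiableAt_const _) (by fun_prop), pd_const, pd_coord, zero_add]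

theorem e_ext {k : Fin n} {s : Fin n → ℝ} {x : Pt n} (hk : pd k f x ≠ 0)
    (hs : ∑ i, pd i f x * s i = 0) (h : ∀ i, i ≠ k → s i = 0) (i : Fin n) : s i = 0 := by
  by_cases hi : i = k
  · subst hi
    rw [Finset.sum_eq_single i (fun j _ hj => by rw [h j hj, mul_zero]) (by simp)] at hs
    exact (mul_eq_zero.1 hs).resolve_left hk
  · exact h i hi

theorem e_k (hf : ContDiff ℝ (⊤:ℕ∞) f) (hΦ : ContDiff ℝ (⊤:ℕ∞) Φ) (h0 : ∀ y, f (Φ y) = 0)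
    {k : Fin n} {p : Pt n} {δ : ℝ} (hk : ∀ y, pd k f (Φ y) ≠ 0)
    (hco : ∀ y ∈ Metric.ball (0:Pt n) δ, ∀ a, a ≠ k → Φ y a = p a + y a)
    {y : Pt n} (hy : y ∈ Metric.ball (0:Pt n) δ) (i : Fin n) : eV Φ k i y = 0 :=
  e_ext (s := fun i => eV Φ k i y) (hk y) (tang_e hf hΦ h0 k y)
    (fun i hi => by rw [e_coord hco hy k hi, if_neg hi]) i

theorem e_span (hf : ContDiff ℝ (⊤:ℕ∞) f) (hΦ : ContDiff ℝ (⊤:ℕ∞) Φ) (h0 : ∀ y, f (Φ y) = 0)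
    {k : Fin n} {p : Pt n} {δ : ℝ} (hk : ∀ y, pd k f (Φ y) ≠ 0)
    (hco : ∀ y ∈ Metric.ball (0:Pt n) δ, ∀ a, a ≠ k → Φ y a = p a + y a)
    {y : Pt n} (hy : y ∈ Metric.ball (0:Pt n) δ) {t : Fin n → ℝ}
    (ht : ∑ i, pd i f (Φ y) * t i = 0) (i : Fin n) : ∑ a, t a * eV Φ a i y = t i := by
  have h := e_ext (s := fun i => ∑ a, t a * eV Φ a i y - t i) (hk y) ?_ ?_ i
  · exact sub_eq_zero.1 h
  · simp only [mul_sub, Finset.sum_sub_distrib, ht, sub_zero, Finset.mul_sum]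
    rw [Finset.sum_comm]
    refine Finset.sum_eq_zero fun a _ => ?_
    have h1 := tang_e hf hΦ h0 a y
    have h2 : ∑ i, pd i f (Φ y) * (t a * eV Φ a i y) = t a * ∑ i, pd i f (Φ y) * eV Φ a i y := by
      rw [Finset.mul_sum]
      exact Finset.sum_congr rfl fun i _ => by ring
    rw [h2, h1, mul_zero]
  · intro i hi
    simp [e_coord hco hy _ hi]

theorem PV_symm (hgs : symT g) (i j : Fin n) (x : Pt n) : PV g f i j x = PV g f j i x := by
  unfold PV
  rw [ginv_symm (hgs x) i j, mul_comm (gradV g f x i)]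

theorem PV_tang {x : Pt n} (hR : RV g f x ≠ 0) (i : Fin n) : ∑ j, PV g f i j x * pd j f x = 0 := by
  have h1 : ∑ j, PV g f i j x * pd j f x =
      (∑ j, ginv g x i j * pd j f x) - gradV g f x i / RV g f x * ∑ j, pd j f x * gradV g f x j := by
    rw [Finset.mul_sum, ← Finset.sum_sub_distrib]
    exact Finset.sum_congr rfl fun j _ => by unfold PV; ring
  rw [h1, ← RV_eq, div_mul_cancel₀ _ hR]
  unfold gradV; ring

theorem PV_form (hgs : symT g) (hp : posdef g) {x : Pt n} (hdf : fderiv ℝ f x ≠ 0) {k : Fin n}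
    (hk : pd k f x ≠ 0) {ξ : Fin n → ℝ} (hξ : ξ ≠ 0) :
    0 < (∑ a, ∑ b, PV g f a b x * ξ a * ξ b) + ξ k ^ 2 := by
  have hR := RV_pos hp hdf
  set s := ∑ a, gradV g f x a * ξ a with hs
  set t := s / RV g f x with ht
  have hs2 : ∑ a, ∑ b, ginv g x a b * ξ a * pd b f x = s := by
    rw [hs]
    refine Finset.sum_congr rfl fun a _ => ?_
    unfold gradV
    rw [Finset.sum_mul]
    exact Finset.sum_congr rfl fun b _ => by ring
  have hs3 : ∑ a, ∑ b, ginv g x a b * pd a f x * ξ b = s := by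
    rw [← hs2, Finset.sum_comm]
    exact Finset.sum_congr rfl fun a _ => Finset.sum_congr rfl fun b _ => by
      rw [ginv_symm (hgs x) b a]; ring
  have key : ∑ a, ∑ b, PV g f a b x * ξ a * ξ b =
      ∑ a, ∑ b, ginv g x a b * (ξ a - t * pd a f x) * (ξ b - t * pd b f x) := by
    have e1 : ∑ a, ∑ b, PV g f a b x * ξ a * ξ b =
        (∑ a, ∑ b, ginv g x a b * ξ a * ξ b) - s * s / RV g f x := by
      rw [hs, Finset.sum_mul_sum, Finset.sum_div, ← Finset.sum_sub_distrib]
      refine Finset.sum_congr rfl fun a _ => ?_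
      rw [Finset.sum_div, ← Finset.sum_sub_distrib]
      refine Finset.sum_congr rfl fun b _ => ?_
      unfold PV; ring
    have e2 : ∑ a, ∑ b, ginv g x a b * (ξ a - t * pd a f x) * (ξ b - t * pd b f x) =
        (∑ a, ∑ b, ginv g x a b * ξ a * ξ b) - t * (∑ a, ∑ b, ginv g x a b * ξ a * pd b f x)
        - t * (∑ a, ∑ b, ginv g x a b * pd a f x * ξ b) + t ^ 2 * RV g f x := by
      unfold RV
      simp only [Finset.mul_sum, ← Finset.sum_sub_distrib, ← Finset.sum_add_distrib]
      exact Finset.sum_congr rfl fun a _ => Finset.sum_congr rfl fun b _ => by ring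
    rw [e1, e2, hs2, hs3, ht]
    field_simp
    ring
  rw [key]
  by_cases h : (fun a => ξ a - t * pd a f x) = 0
  · have h1 : ∀ a, ξ a - t * pd a f x = 0 := fun a => congrFun h a
    simp only [h1, mul_zero, Finset.sum_const_zero, zero_add]
    have ht0 : t ≠ 0 := by
      intro h2
      apply hξ
      funext a
      have := h1 a
      rw [h2] at this
      simpa using this
    have : ξ k = t * pd k f x := sub_eq_zero.1 (h1 k)
    rw [this]
    positivity
  · have := ginv_pos (hp x) _ h
    have h2 := sq_nonneg (ξ k)
    linarith

/-- tangential components of `X` -/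
def wV (g : Pt n → Fin n → Fin n → ℝ) (X : Pt n → Fin n → ℝ) (Φ : Pt n → Pt n) (a : Fin n)
    (y : Pt n) : ℝ := ∑ i, ∑ j, g (Φ y) i j * X (Φ y) i * eV Φ a j y

theorem P_span (hgs : symT g) (hp : posdef g) (hf : ContDiff ℝ (⊤:ℕ∞) f) (hΦ : ContDiff ℝ (⊤:ℕ∞) Φ)
    (h0 : ∀ y, f (Φ y) = 0) (hreg : ∀ y, fderiv ℝ f (Φ y) ≠ 0)
    {k : Fin n} {p : Pt n} {δ : ℝ} (hk : ∀ y, pd k f (Φ y) ≠ 0)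
    (hco : ∀ y ∈ Metric.ball (0:Pt n) δ, ∀ a, a ≠ k → Φ y a = p a + y a)
    {y : Pt n} (hy : y ∈ Metric.ball (0:Pt n) δ) (i j : Fin n) :
    ∑ b, PV g f i b (Φ y) * eV Φ b j y = PV g f i j (Φ y) := by
  refine e_span hf hΦ h0 hk hco hy (t := fun b => PV g f i b (Φ y)) ?_ j
  rw [← PV_tang (g := g) (RV_pos hp (hreg y)).ne' i]
  exact Finset.sum_congr rfl fun b _ => by ring

theorem u_rep (hgs : symT g) (hp : posdef g) (hf : ContDiff ℝ (⊤:ℕ∞) f) (hΦ : ContDiff ℝ (⊤:ℕ∞) Φ)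
    (h0 : ∀ y, f (Φ y) = 0) (hreg : ∀ y, fderiv ℝ f (Φ y) ≠ 0)
    {k : Fin n} {p : Pt n} {δ : ℝ} (hk : ∀ y, pd k f (Φ y) ≠ 0)
    (hco : ∀ y ∈ Metric.ball (0:Pt n) δ, ∀ a, a ≠ k → Φ y a = p a + y a) (X : Pt n → Fin n → ℝ)
    {y : Pt n} (hy : y ∈ Metric.ball (0:Pt n) δ) (i : Fin n) :
    X (Φ y) i = gradV g f (Φ y) i / RV g f (Φ y) * XfV X f (Φ y) +
      ∑ b, PV g f i b (Φ y) * wV g X Φ b y := by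
  have hR := RV_pos hp (hreg y)
  have hd := hp.det (Φ y)
  have e1 : ∑ b, PV g f i b (Φ y) * wV g X Φ b y =
      ∑ j, PV g f i j (Φ y) * ∑ l, g (Φ y) j l * X (Φ y) l := by
    have : ∀ j, PV g f i j (Φ y) * ∑ l, g (Φ y) j l * X (Φ y) l =
        ∑ b, ∑ l, PV g f i b (Φ y) * eV Φ b j y * (g (Φ y) j l * X (Φ y) l) := by
      intro j
      rw [← P_span hgs hp hf hΦ h0 hreg hk hco hy i j, Finset.sum_mul_sum]
    simp only [this]
    rw [Finset.sum_comm]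
    refine Finset.sum_congr rfl fun b _ => ?_
    unfold wV
    rw [Finset.mul_sum, Finset.sum_comm]
    simp only [Finset.mul_sum]
    rw [Finset.sum_comm]
    rw [Finset.sum_comm]
    refine Finset.sum_congr rfl fun j _ => Finset.sum_congr rfl fun l _ => ?_
    rw [hgs (Φ y) j l]; ring
  have e2 : ∑ j, gradV g f (Φ y) j * ∑ l, g (Φ y) j l * X (Φ y) l = XfV X f (Φ y) := by
    unfold XfV
    have h1 : ∀ j, gradV g f (Φ y) j * ∑ l, g (Φ y) j l * X (Φ y) l =
        ∑ l, X (Φ y) l * (g (Φ y) l j * gradV g f (Φ y) j) := by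
      intro j
      rw [Finset.mul_sum]
      exact Finset.sum_congr rfl fun l _ => by rw [hgs (Φ y) j l]; ring
    simp only [h1]
    rw [Finset.sum_comm]
    refine Finset.sum_congr rfl fun l _ => ?_
    rw [← Finset.mul_sum]
    congr 1
    exact contr_g hd (fun j => pd j f (Φ y)) l
  have e3 : ∑ j, PV g f i j (Φ y) * ∑ l, g (Φ y) j l * X (Φ y) l =
      X (Φ y) i - gradV g f (Φ y) i / RV g f (Φ y) * XfV X f (Φ y) := by
    rw [← e2, Finset.mul_sum, ← contr_ginv hd (fun l => X (Φ y) l) i, ← Finset.sum_sub_distrib]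
    refine Finset.sum_congr rfl fun j _ => ?_
    unfold PV; ring
  rw [e1, e3]; ring
end Geo

section Eqs
variable {n : ℕ} {g : Pt n → Fin n → Fin n → ℝ} {f : Pt n → ℝ} {Φ : Pt n → Pt n}
  {X : Pt n → Fin n → ℝ}

/-- coefficients of the tangential Killing system -/
def CV (g : Pt n → Fin n → Fin n → ℝ) (Φ : Pt n → Pt n) (a b i : Fin n) (y : Pt n) : ℝ :=
  (∑ j, (pd a (fun z => g (Φ z) i j) y * eV Φ b j y + pd b (fun z => g (Φ z) i j) y * eV Φ a j y
    + g (Φ y) i j * (pd a (eV Φ b j) y + pd b (eV Φ a j) y)))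
  - ∑ l, ∑ m, pd i (fun z => g z l m) (Φ y) * eV Φ a l y * eV Φ b m y

theorem CV_cd (hg : smoothT g) (hΦ : ContDiff ℝ (⊤:ℕ∞) Φ) (a b i : Fin n) :
    ContDiff ℝ (⊤:ℕ∞) (CV g Φ a b i) := by
  have h1 : ∀ i j, ContDiff ℝ (⊤:ℕ∞) (fun z => g (Φ z) i j) := fun i j => (hg i j).comp hΦ
  refine ContDiff.sub (ContDiff.sum fun j _ => ?_) (ContDiff.sum fun l _ => ContDiff.sum fun m _ => ?_)
  · exact (((cd_pd_top (h1 i j)).mul (eV_cd hΦ b j)).add ((cd_pd_top (h1 i j)).mul (eV_cd hΦ a j))).add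
      ((h1 i j).mul ((cd_pd_top (eV_cd hΦ b j)).add (cd_pd_top (eV_cd hΦ a j))))
  · exact (((cd_pd_top (hg l m)).comp hΦ).mul (eV_cd hΦ a l)).mul (eV_cd hΦ b m)

theorem u_cd (hΦ : ContDiff ℝ (⊤:ℕ∞) Φ) (hX : ∀ i, ContDiff ℝ 3 (fun x => X x i)) (i : Fin n) :
    ContDiff ℝ 3 (fun y => X (Φ y) i) := (hX i).comp (hΦ.of_le (by norm_cast))

theorem wV_cd (hg : smoothT g) (hΦ : ContDiff ℝ (⊤:ℕ∞) Φ) (hX : ∀ i, ContDiff ℝ 3 (fun x => X x i))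
    (a : Fin n) : ContDiff ℝ 3 (wV g X Φ a) := by
  refine ContDiff.sum fun i _ => ContDiff.sum fun j _ => ?_
  exact ((((hg i j).comp hΦ).of_le (by norm_cast)).mul (u_cd hΦ hX i)).mul
    ((eV_cd hΦ a j).of_le (by norm_cast))

theorem pd_wV (hg : smoothT g) (hΦ : ContDiff ℝ (⊤:ℕ∞) Φ) (hX : ∀ i, ContDiff ℝ 3 (fun x => X x i))
    (a b : Fin n) (y : Pt n) : pd a (wV g X Φ b) y =
      ∑ i, ∑ j, (pd a (fun z => g (Φ z) i j) y * X (Φ y) i * eV Φ b j y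
        + g (Φ y) i j * pd a (fun z => X (Φ z) i) y * eV Φ b j y
        + g (Φ y) i j * X (Φ y) i * pd a (eV Φ b j) y) := by
  have d1 : ∀ i j, DifferentiableAt ℝ (fun z => g (Φ z) i j) y := fun i j =>
    ((hg i j).comp hΦ).differentiable (by simp) y
  have d2 : ∀ i, DifferentiableAt ℝ (fun z => X (Φ z) i) y := fun i =>
    (u_cd hΦ hX i).differentiable (by simp) y
  have d3 : ∀ j, DifferentiableAt ℝ (eV Φ b j) y := fun j => (eV_cd hΦ b j).differentiable (by simp) y
  have d4 : ∀ i j, DifferentiableAt ℝ (fun z => g (Φ z) i j * X (Φ z) i * eV Φ b j z) y := fun i j =>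
    ((d1 i j).fun_mul (d2 i)).fun_mul (d3 j)
  unfold wV
  rw [pd_sum (fun i _ => DifferentiableAt.fun_sum fun j _ => d4 i j)]
  refine Finset.sum_congr rfl fun i _ => ?_
  rw [pd_sum (fun j _ => d4 i j)]
  refine Finset.sum_congr rfl fun j _ => ?_
  rw [pd_mul ((d1 i j).fun_mul (d2 i)) (d3 j), pd_mul (d1 i j) (d2 i)]
  ring

theorem killing1 (hgs : symT g) (hp : posdef g) (hg : smoothT g) (hf : ContDiff ℝ (⊤:ℕ∞) f)
    (hΦ : ContDiff ℝ (⊤:ℕ∞) Φ) (h0 : ∀ y, f (Φ y) = 0) (hX : ∀ i, ContDiff ℝ 3 (fun x => X x i))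
    (hLie : ∀ x ∈ f ⁻¹' {(0:ℝ)}, ∀ v w : Fin n → ℝ, Tang f x v → Tang f x w →
      ∑ i, ∑ j, lieg g X x i j * v i * w j = 0) (a b : Fin n) (y : Pt n) :
    pd a (wV g X Φ b) y + pd b (wV g X Φ a) y = ∑ i, X (Φ y) i * CV g Φ a b i y := by
  have tg : ∀ a, Tang f (Φ y) (fun i => eV Φ a i y) := fun a => by
    unfold Tang
    rw [fderiv_eq_sum_pd, ← tang_e hf hΦ h0 a y]
    exact Finset.sum_congr rfl fun i _ => by ring
  have hL := hLie (Φ y) (h0 y) _ _ (tg a) (tg b)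
  have dg : ∀ i j, DifferentiableAt ℝ (fun y => g y i j) (Φ y) := fun i j =>
    (hg i j).differentiable (by simp) _
  have dX : ∀ i, DifferentiableAt ℝ (fun y => X y i) (Φ y) := fun i =>
    (hX i).differentiable (by simp) _
  have du : ∀ a i, pd a (fun z => X (Φ z) i) y = ∑ j, pd j (fun x => X x i) (Φ y) * eV Φ a j y :=
    fun a i => pd_comp (V := fun x => X x i) (dX i) (hΦ.differentiable (by simp) y)
  simp only [lieg_eq (hp.det (Φ y)) hgs dg dX] at hL
  -- three pieces
  have hS : (∑ i, X (Φ y) i * ∑ l, ∑ m, pd i (fun z => g z l m) (Φ y) * eV Φ a l y * eV Φ b m y)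
      + (∑ i, ∑ j, g (Φ y) i j * pd a (fun z => X (Φ z) i) y * eV Φ b j y)
      + (∑ i, ∑ j, g (Φ y) i j * pd b (fun z => X (Φ z) i) y * eV Φ a j y) = 0 := by
    rw [← hL]
    have e1 : ∑ i, X (Φ y) i * ∑ l, ∑ m, pd i (fun z => g z l m) (Φ y) * eV Φ a l y * eV Φ b m y
        = ∑ l, ∑ m, ∑ i, X (Φ y) i * pd i (fun z => g z l m) (Φ y) * eV Φ a l y * eV Φ b m y := by
      rw [sum_rot]
      simp only [Finset.mul_sum]
      exact Finset.sum_congr rfl fun i _ => Finset.sum_congr rfl fun l _ =>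
        Finset.sum_congr rfl fun m _ => by ring
    have e2 : ∑ i, ∑ j, g (Φ y) i j * pd a (fun z => X (Φ z) i) y * eV Φ b j y
        = ∑ l, ∑ m, ∑ i, g (Φ y) i m * pd l (fun z => X z i) (Φ y) * eV Φ a l y * eV Φ b m y := by
      have : ∀ i j, g (Φ y) i j * pd a (fun z => X (Φ z) i) y * eV Φ b j y =
          ∑ l, g (Φ y) i j * pd l (fun z => X z i) (Φ y) * eV Φ a l y * eV Φ b j y := by
        intro i j
        rw [du, Finset.mul_sum, Finset.sum_mul]
        exact Finset.sum_congr rfl fun l _ => by ring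
      simp only [this]
      rw [sum_rot]
      exact Finset.sum_congr rfl fun l _ => Finset.sum_comm
    have e3 : ∑ i, ∑ j, g (Φ y) i j * pd b (fun z => X (Φ z) i) y * eV Φ a j y
        = ∑ l, ∑ m, ∑ i, g (Φ y) l i * pd m (fun z => X z i) (Φ y) * eV Φ a l y * eV Φ b m y := by
      have : ∀ i j, g (Φ y) i j * pd b (fun z => X (Φ z) i) y * eV Φ a j y =
          ∑ m, g (Φ y) j i * pd m (fun z => X z i) (Φ y) * eV Φ a j y * eV Φ b m y := by
        intro i j
        rw [du, Finset.mul_sum, Finset.sum_mul, hgs (Φ y) i j]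
        exact Finset.sum_congr rfl fun l _ => by ring
      simp only [this]
      rw [sum_rot (fun l m i => g (Φ y) l i * pd m (fun z => X z i) (Φ y) * eV Φ a l y * eV Φ b m y)]
    rw [e1, e2, e3, ← Finset.sum_add_distrib, ← Finset.sum_add_distrib]
    refine Finset.sum_congr rfl fun l _ => ?_
    rw [← Finset.sum_add_distrib, ← Finset.sum_add_distrib]
    refine Finset.sum_congr rfl fun m _ => ?_
    rw [← Finset.sum_add_distrib, ← Finset.sum_add_distrib, Finset.sum_mul, Finset.sum_mul]
    exact Finset.sum_congr rfl fun i _ => by ring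
  rw [pd_wV hg hΦ hX, pd_wV hg hΦ hX]
  have e4 : ∑ i, X (Φ y) i * CV g Φ a b i y =
      (∑ i, ∑ j, (pd a (fun z => g (Φ z) i j) y * X (Φ y) i * eV Φ b j y
        + pd b (fun z => g (Φ z) i j) y * X (Φ y) i * eV Φ a j y
        + g (Φ y) i j * X (Φ y) i * pd a (eV Φ b j) y + g (Φ y) i j * X (Φ y) i * pd b (eV Φ a j) y))
      - (∑ i, X (Φ y) i * ∑ l, ∑ m, pd i (fun z => g z l m) (Φ y) * eV Φ a l y * eV Φ b m y) := by
    rw [← Finset.sum_sub_distrib]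
    refine Finset.sum_congr rfl fun i _ => ?_
    unfold CV
    rw [mul_sub, Finset.mul_sum]
    congr 1
    exact Finset.sum_congr rfl fun j _ => by ring
  rw [e4]
  simp only [Finset.sum_add_distrib] at hS ⊢
  linarith

/-- second order coefficients of the chart -/
def cV (g : Pt n → Fin n → Fin n → ℝ) (f : Pt n → ℝ) (Φ : Pt n → Pt n) (j : Fin n) (y : Pt n) : ℝ :=
  ∑ a, ∑ b, PV g f a b (Φ y) * pd a (eV Φ b j) y

/-- divergence of the normalised projection -/
def DV (g : Pt n → Fin n → Fin n → ℝ) (f : Pt n → ℝ) (j : Fin n) (x : Pt n) : ℝ :=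
  ∑ i, pd i (fun z => PV g f i j z / Real.sqrt (RV g f z)) x

theorem P_chain (hgs : symT g) (hp : posdef g) (hf : ContDiff ℝ (⊤:ℕ∞) f) (hΦ : ContDiff ℝ (⊤:ℕ∞) Φ)
    (h0 : ∀ y, f (Φ y) = 0) (hreg : ∀ y, fderiv ℝ f (Φ y) ≠ 0)
    {k : Fin n} {p : Pt n} {δ : ℝ} (hk : ∀ y, pd k f (Φ y) ≠ 0)
    (hco : ∀ y ∈ Metric.ball (0:Pt n) δ, ∀ a, a ≠ k → Φ y a = p a + y a)
    {V : Pt n → ℝ} (hV : ContDiff ℝ 3 V)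
    {y : Pt n} (hy : y ∈ Metric.ball (0:Pt n) δ) :
    ∑ a, ∑ b, PV g f a b (Φ y) * pd a (pd b (fun z => V (Φ z))) y =
      (∑ i, ∑ j, PV g f i j (Φ y) * pd i (pd j V) (Φ y)) + ∑ j, pd j V (Φ y) * cV g f Φ j y := by
  have hΦd : ∀ y, DifferentiableAt ℝ Φ y := fun y => hΦ.differentiable (by simp) y
  have hVd : ∀ x, DifferentiableAt ℝ V x := fun x => hV.differentiable (by simp) x
  have hpV : ∀ j, ContDiff ℝ 2 (pd j V) := fun j => cd_pd hV (by norm_num)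
  have hpVd : ∀ j x, DifferentiableAt ℝ (pd j V) x := fun j x => (hpV j).differentiable (by simp) x
  have hpVc : ∀ j x, DifferentiableAt ℝ (fun z => pd j V (Φ z)) x := fun j x =>
    (hpVd j (Φ x)).comp x (hΦd x)
  have hed : ∀ b j x, DifferentiableAt ℝ (eV Φ b j) x := fun b j x =>
    (eV_cd hΦ b j).differentiable (by simp) x
  have h1 : ∀ b, pd b (fun z => V (Φ z)) = fun z => ∑ j, pd j V (Φ z) * eV Φ b j z := fun b => by
    funext z; exact pd_comp (hVd _) (hΦd z)
  have h2 : ∀ a b, pd a (pd b (fun z => V (Φ z))) y =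
      (∑ j, ∑ i, pd i (pd j V) (Φ y) * eV Φ a i y * eV Φ b j y)
        + ∑ j, pd j V (Φ y) * pd a (eV Φ b j) y := by
    intro a b
    rw [h1, pd_sum (fun j _ => (hpVc j y).fun_mul (hed b j y)), ← Finset.sum_add_distrib]
    refine Finset.sum_congr rfl fun j _ => ?_
    rw [pd_mul (hpVc j y) (hed b j y), pd_comp (hpVd j (Φ y)) (hΦd y), Finset.sum_mul]
    rfl
  simp only [h2, mul_add, Finset.sum_add_distrib]
  congr 1
  · have e1 : ∀ i j, PV g f i j (Φ y) * pd i (pd j V) (Φ y) =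
        ∑ a, ∑ b, PV g f a b (Φ y) * (pd i (pd j V) (Φ y) * eV Φ a i y * eV Φ b j y) := by
      intro i j
      have e2 : PV g f i j (Φ y) = ∑ a, ∑ b, PV g f a b (Φ y) * eV Φ a i y * eV Φ b j y := by
        rw [PV_symm hgs i j, ← P_span hgs hp hf hΦ h0 hreg hk hco hy j i]
        refine Finset.sum_congr rfl fun a _ => ?_
        rw [PV_symm hgs j a, ← P_span hgs hp hf hΦ h0 hreg hk hco hy a j, Finset.sum_mul]
        exact Finset.sum_congr rfl fun b _ => by ring
      rw [e2, Finset.sum_mul]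
      refine Finset.sum_congr rfl fun a _ => ?_
      rw [Finset.sum_mul]
      exact Finset.sum_congr rfl fun b _ => by ring
    simp only [e1, Finset.mul_sum]
    rw [sum_swap4, Finset.sum_comm]
  · unfold cV
    simp only [Finset.mul_sum]
    rw [sum_rot]
    exact Finset.sum_congr rfl fun j _ => Finset.sum_congr rfl fun a _ =>
      Finset.sum_congr rfl fun b _ => by ring

theorem M_cd (hp : posdef g) (hg : smoothT g) (hf : ContDiff ℝ (⊤:ℕ∞) f) {x : Pt n}
    (hx : fderiv ℝ f x ≠ 0) (i j : Fin n) :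
    ContDiffAt ℝ (⊤:ℕ∞) (fun z => PV g f i j z / Real.sqrt (RV g f z)) x := by
  have hR := RV_pos hp hx
  exact (PV_cd hp hg hf hx i j).div ((RV_cd hp hg hf).contDiffAt.sqrt hR.ne') (Real.sqrt_pos.2 hR).ne'

theorem flux_div (hp : posdef g) (hg : smoothT g) (hf : ContDiff ℝ (⊤:ℕ∞) f) {x : Pt n}
    (hx : fderiv ℝ f x ≠ 0) {V : Pt n → ℝ} (hV : ContDiff ℝ 3 V) :
    Real.sqrt (RV g f x) * ∑ i, pd i (fun z => (∑ j, PV g f i j z * pd j V z) / Real.sqrt (RV g f z)) x =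
      Real.sqrt (RV g f x) * (∑ j, DV g f j x * pd j V x)
        + ∑ i, ∑ j, PV g f i j x * pd i (pd j V) x := by
  have hR := RV_pos hp hx
  have hS := (Real.sqrt_pos.2 hR).ne'
  have hMd : ∀ i j, DifferentiableAt ℝ (fun z => PV g f i j z / Real.sqrt (RV g f z)) x := fun i j =>
    (M_cd hp hg hf hx i j).differentiableAt (by simp)
  have hpVd : ∀ j, DifferentiableAt ℝ (pd j V) x := fun j =>
    (cd_pd (m := 2) hV (by norm_num)).differentiable (by simp) x
  have h1 : ∀ i, (fun z => (∑ j, PV g f i j z * pd j V z) / Real.sqrt (RV g f z)) =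
      fun z => ∑ j, PV g f i j z / Real.sqrt (RV g f z) * pd j V z := by
    intro i; funext z
    rw [Finset.sum_div]
    exact Finset.sum_congr rfl fun j _ => by ring
  have h2 : ∀ i, pd i (fun z => (∑ j, PV g f i j z * pd j V z) / Real.sqrt (RV g f z)) x =
      ∑ j, (pd i (fun z => PV g f i j z / Real.sqrt (RV g f z)) x * pd j V x
        + PV g f i j x / Real.sqrt (RV g f x) * pd i (pd j V) x) := by
    intro i
    rw [h1, pd_sum (fun j _ => (hMd i j).fun_mul (hpVd j))]
    exact Finset.sum_congr rfl fun j _ => pd_mul (hMd i j) (hpVd j)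
  simp only [h2, Finset.sum_add_distrib, mul_add]
  congr 1
  · congr 1
    rw [Finset.sum_comm]
    unfold DV
    exact Finset.sum_congr rfl fun j _ => by rw [Finset.sum_mul]
  · rw [Finset.mul_sum]
    refine Finset.sum_congr rfl fun i _ => ?_
    rw [Finset.mul_sum]
    refine Finset.sum_congr rfl fun j _ => ?_
    field_simp

/-- first order coefficient -/
def dV (g : Pt n → Fin n → Fin n → ℝ) (f : Pt n → ℝ) (Φ : Pt n → Pt n) (j : Fin n) (y : Pt n) : ℝ :=
  cV g f Φ j y - Real.sqrt (RV g f (Φ y)) * DV g f j (Φ y)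

theorem P_master (hgs : symT g) (hp : posdef g) (hg : smoothT g) (hf : ContDiff ℝ (⊤:ℕ∞) f)
    (hΦ : ContDiff ℝ (⊤:ℕ∞) Φ)
    (h0 : ∀ y, f (Φ y) = 0) (hreg : ∀ y, fderiv ℝ f (Φ y) ≠ 0)
    {k : Fin n} {p : Pt n} {δ : ℝ} (hk : ∀ y, pd k f (Φ y) ≠ 0)
    (hco : ∀ y ∈ Metric.ball (0:Pt n) δ, ∀ a, a ≠ k → Φ y a = p a + y a)
    {V : Pt n → ℝ} (hV : ContDiff ℝ 3 V)
    {y : Pt n} (hy : y ∈ Metric.ball (0:Pt n) δ) :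
    ∑ a, ∑ b, PV g f a b (Φ y) * pd a (pd b (fun z => V (Φ z))) y =
      Real.sqrt (RV g f (Φ y)) *
        (∑ i, pd i (fun z => (∑ j, PV g f i j z * pd j V z) / Real.sqrt (RV g f z)) (Φ y))
      + ∑ j, pd j V (Φ y) * dV g f Φ j y := by
  rw [P_chain hgs hp hf hΦ h0 hreg hk hco hV hy, flux_div hp hg hf (hreg y) hV]
  have : ∑ j, pd j V (Φ y) * dV g f Φ j y = (∑ j, pd j V (Φ y) * cV g f Φ j y)
      - Real.sqrt (RV g f (Φ y)) * (∑ j, DV g f j (Φ y) * pd j V (Φ y)) := by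
    rw [Finset.mul_sum, ← Finset.sum_sub_distrib]
    exact Finset.sum_congr rfl fun j _ => by unfold dV; ring
  rw [this]; ring

theorem dV_tang (hgs : symT g) (hp : posdef g) (hg : smoothT g) (hf : ContDiff ℝ (⊤:ℕ∞) f)
    (hΦ : ContDiff ℝ (⊤:ℕ∞) Φ)
    (h0 : ∀ y, f (Φ y) = 0) (hreg : ∀ y, fderiv ℝ f (Φ y) ≠ 0)
    {k : Fin n} {p : Pt n} {δ : ℝ} (hk : ∀ y, pd k f (Φ y) ≠ 0)
    (hco : ∀ y ∈ Metric.ball (0:Pt n) δ, ∀ a, a ≠ k → Φ y a = p a + y a)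
    {y : Pt n} (hy : y ∈ Metric.ball (0:Pt n) δ) : ∑ j, pd j f (Φ y) * dV g f Φ j y = 0 := by
  have h := P_master hgs hp hg hf hΦ h0 hreg hk hco (V := f) (hf.of_le (by norm_cast)) hy
  have hz : ∀ b : Fin n, pd b (fun z => f (Φ z)) = fun _ => 0 := fun b => by
    funext z; simp only [h0, pd_const]
  have hfl : ∀ i, pd i (fun z => (∑ j, PV g f i j z * pd j f z) / Real.sqrt (RV g f z)) (Φ y) = 0 := by
    intro i
    have h1 : (fun z => (∑ j, PV g f i j z * pd j f z) / Real.sqrt (RV g f z)) =ᶠ[nhds (Φ y)]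
        fun _ => 0 := by
      filter_upwards [(RV_cd hp hg hf).continuous.continuousAt.eventually_ne
        (RV_pos (g := g) hp (hreg y)).ne'] with z hz
      rw [PV_tang hz i, zero_div]
    rw [pd_congr h1, pd_const]
  simp only [hz, hfl, pd_const, mul_zero, Finset.sum_const_zero, zero_add] at h
  exact h.symm

theorem normal_eq (hgs : symT g) (hp : posdef g) (hg : smoothT g) (hf : ContDiff ℝ (⊤:ℕ∞) f)
    (hΦ : ContDiff ℝ (⊤:ℕ∞) Φ)
    (h0 : ∀ y, f (Φ y) = 0) (hreg : ∀ y, fderiv ℝ f (Φ y) ≠ 0)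
    {k : Fin n} {p : Pt n} {δ : ℝ} (hk : ∀ y, pd k f (Φ y) ≠ 0)
    (hco : ∀ y ∈ Metric.ball (0:Pt n) δ, ∀ a, a ≠ k → Φ y a = p a + y a)
    (hX : ∀ i, ContDiff ℝ 3 (fun x => X x i))
    (hH : ∀ x ∈ f ⁻¹' {(0:ℝ)}, hmeanLin g (fun y a b => lieg g X y a b) f x = 0)
    {y : Pt n} (hy : y ∈ Metric.ball (0:Pt n) δ) :
    ∑ a, ∑ b, PV g f a b (Φ y) * pd a (pd b (fun z => XfV X f (Φ z))) y =
      (∑ i, Real.sqrt (RV g f (Φ y)) * QV g f i (Φ y) * X (Φ y) i)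
      + ∑ a, (dV g f Φ a y - ∑ i, PV g f i a (Φ y) * ellV g i (Φ y)) *
          pd a (fun z => XfV X f (Φ z)) y := by
  have hV := XfV_cd hX hf
  have hR := RV_pos (g := g) hp (hreg y)
  have hS := (Real.sqrt_pos.2 hR).ne'
  have h1 := hH (Φ y) (h0 y)
  rw [hmeanLin_lie hgs hp hg hf hX (hreg y)] at h1
  rw [P_master hgs hp hg hf hΦ h0 hreg hk hco hV hy]
  have hJ : ∑ i, pd i (fun z => (∑ j, PV g f i j z * pd j (XfV X f) z) / Real.sqrt (RV g f z)) (Φ y)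
      = ∑ i, pd i (JV g f X i) (Φ y) := rfl
  have ht : ∑ j, pd j f (Φ y) * (dV g f Φ j y - ∑ i, PV g f i j (Φ y) * ellV g i (Φ y)) = 0 := by
    simp only [mul_sub, Finset.sum_sub_distrib, dV_tang hgs hp hg hf hΦ h0 hreg hk hco hy,
      Finset.mul_sum, zero_sub, neg_eq_zero]
    rw [Finset.sum_comm]
    refine Finset.sum_eq_zero fun i _ => ?_
    have := PV_tang hR.ne' i
    calc _ = ellV g i (Φ y) * ∑ j, PV g f i j (Φ y) * pd j f (Φ y) := by
          rw [Finset.mul_sum]; exact Finset.sum_congr rfl fun j _ => by ring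
      _ = 0 := by rw [this, mul_zero]
  have h3 : ∑ a, (dV g f Φ a y - ∑ i, PV g f i a (Φ y) * ellV g i (Φ y)) *
          pd a (fun z => XfV X f (Φ z)) y =
      ∑ j, pd j (XfV X f) (Φ y) * (dV g f Φ j y - ∑ i, PV g f i j (Φ y) * ellV g i (Φ y)) := by
    have h4 : ∀ a, pd a (fun z => XfV X f (Φ z)) y = ∑ j, pd j (XfV X f) (Φ y) * eV Φ a j y := fun a =>
      pd_comp (hV.differentiable (by simp) _) (hΦ.differentiable (by simp) y)
    have h5 := e_span hf hΦ h0 hk hco hy ht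
    conv_rhs =>
      enter [2, j]
      rw [← h5 j, Finset.mul_sum]
    rw [Finset.sum_comm]
    refine Finset.sum_congr rfl fun a _ => ?_
    rw [h4, Finset.mul_sum]
    exact Finset.sum_congr rfl fun j _ => by ring
  rw [h3, hJ]
  have h6 : ∑ i, pd i (JV g f X i) (Φ y) = (∑ k, X (Φ y) k * QV g f k (Φ y))
      - ∑ i, JV g f X i (Φ y) * ellV g i (Φ y) := by linarith
  have h7 : Real.sqrt (RV g f (Φ y)) * ∑ i, JV g f X i (Φ y) * ellV g i (Φ y) =
      ∑ j, pd j (XfV X f) (Φ y) * ∑ i, PV g f i j (Φ y) * ellV g i (Φ y) := by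
    simp only [Finset.mul_sum]
    conv_rhs => rw [Finset.sum_comm]
    refine Finset.sum_congr rfl fun i _ => ?_
    unfold JV
    have : Real.sqrt (RV g f (Φ y)) * ((∑ j, PV g f i j (Φ y) * pd j (XfV X f) (Φ y)) /
        Real.sqrt (RV g f (Φ y)) * ellV g i (Φ y)) =
        (∑ j, PV g f i j (Φ y) * pd j (XfV X f) (Φ y)) * ellV g i (Φ y) := by
      field_simp
    rw [this, Finset.sum_mul]
    exact Finset.sum_congr rfl fun j _ => by ring
  have h8 : ∑ i, Real.sqrt (RV g f (Φ y)) * QV g f i (Φ y) * X (Φ y) i =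
      Real.sqrt (RV g f (Φ y)) * ∑ k, X (Φ y) k * QV g f k (Φ y) := by
    rw [Finset.mul_sum]
    exact Finset.sum_congr rfl fun i _ => by ring
  rw [h6, h8, mul_sub, h7]
  simp only [mul_sub, Finset.sum_sub_distrib]
  ring
end Eqs

section Final
variable {n : ℕ} {g : Pt n → Fin n → Fin n → ℝ} {f : Pt n → ℝ} {Φ : Pt n → Pt n}
  {X : Pt n → Fin n → ℝ}

/-- lower order terms -/
def LO {ι : Type*} [Fintype ι] (W : ι → Pt n → ℝ) (δ : ℝ) (e : Pt n → ℝ) : Prop :=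
  ∃ K : ℝ, 0 ≤ K ∧ ∀ y ∈ Metric.ball (0:Pt n) δ, |e y| ≤ K * Real.sqrt (∑ c, e1V (W c) y)

section LOs
variable {ι : Type*} [Fintype ι] {W : ι → Pt n → ℝ} {δ : ℝ}

theorem LO.congr {e e' : Pt n → ℝ} (h : LO W δ e) (he : ∀ y ∈ Metric.ball (0:Pt n) δ, e' y = e y) :
    LO W δ e' := by
  obtain ⟨K, hK, h⟩ := h
  exact ⟨K, hK, fun y hy => by rw [he y hy]; exact h y hy⟩

theorem LO.add {e e' : Pt n → ℝ} (h : LO W δ e) (h' : LO W δ e') : LO W δ (fun y => e y + e' y) := by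
  obtain ⟨K, hK, h⟩ := h
  obtain ⟨K', hK', h'⟩ := h'
  refine ⟨K + K', by linarith, fun y hy => ?_⟩
  have h1 := abs_add_le (e y) (e' y)
  have h2 := h y hy
  have h3 := h' y hy
  rw [add_mul]; linarith

theorem LO.zero : LO W δ (fun _ => 0) := ⟨0, le_refl _, fun y _ => by simp⟩

theorem LO.sum {κ : Type*} {s : Finset κ} {e : κ → Pt n → ℝ} (h : ∀ i ∈ s, LO W δ (e i)) :
    LO W δ (fun y => ∑ i ∈ s, e i y) := by
  classical
  induction s using Finset.induction_on with
  | empty => simpa using LO.zero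
  | insert a s ha ih =>
    simp only [Finset.sum_insert ha]
    exact (h a (by simp)).add (ih fun i hi => h i (by simp [hi]))

theorem LO.mul {c e : Pt n → ℝ} (hc : Continuous c) (h : LO W δ e) : LO W δ (fun y => c y * e y) := by
  obtain ⟨K, hK, h⟩ := h
  obtain ⟨C, hC⟩ := (isCompact_closedBall (0:Pt n) δ).exists_bound_of_continuousOn hc.continuousOn
  refine ⟨|C| * K, by positivity, fun y hy => ?_⟩
  have h1 := hC y (Metric.ball_subset_closedBall hy)
  rw [Real.norm_eq_abs] at h1
  rw [abs_mul, mul_assoc]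
  exact mul_le_mul (h1.trans (le_abs_self C)) (h y hy) (abs_nonneg _) (abs_nonneg _)

theorem LO.self (b : ι) : LO W δ (W b) := by
  refine ⟨1, zero_le_one, fun y _ => ?_⟩
  rw [one_mul]
  refine Real.abs_le_sqrt ?_
  have h1 : e1V (W b) y ≤ ∑ c, e1V (W c) y :=
    Finset.single_le_sum (f := fun c => e1V (W c) y) (fun c _ => e1V_nonneg _ _) (Finset.mem_univ b)
  refine le_trans ?_ h1
  unfold e1V
  have : 0 ≤ ∑ a, pd a (W b) y ^ 2 := Finset.sum_nonneg fun a _ => sq_nonneg _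
  linarith

theorem LO.pd (b : ι) (a : Fin n) : LO W δ (_root_.pd a (W b)) := by
  refine ⟨1, zero_le_one, fun y _ => ?_⟩
  rw [one_mul]
  refine Real.abs_le_sqrt ?_
  have h1 : e1V (W b) y ≤ ∑ c, e1V (W c) y :=
    Finset.single_le_sum (f := fun c => e1V (W c) y) (fun c _ => e1V_nonneg _ _) (Finset.mem_univ b)
  refine le_trans ?_ h1
  unfold e1V
  have h2 : _root_.pd a (W b) y ^ 2 ≤ ∑ a, _root_.pd a (W b) y ^ 2 :=
    Finset.single_le_sum (f := fun a => _root_.pd a (W b) y ^ 2) (fun c _ => sq_nonneg _) (Finset.mem_univ a)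
  have := sq_nonneg (W b y)
  linarith

theorem LO.uniform {e : ι → Pt n → ℝ} (h : ∀ b, LO W δ (e b)) :
    ∃ K : ℝ, 0 ≤ K ∧ ∀ y ∈ Metric.ball (0:Pt n) δ, ∀ b, e b y ^ 2 ≤ K * ∑ c, e1V (W c) y := by
  choose K hK hb using h
  refine ⟨∑ b, K b ^ 2, Finset.sum_nonneg fun b _ => sq_nonneg _, fun y hy b => ?_⟩
  have hN : 0 ≤ ∑ c, e1V (W c) y := Finset.sum_nonneg fun c _ => e1V_nonneg _ _
  have h1 := hb b y hy
  have h2 : e b y ^ 2 ≤ (K b * Real.sqrt (∑ c, e1V (W c) y)) ^ 2 := by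
    rw [← sq_abs]
    exact pow_le_pow_left₀ (abs_nonneg _) h1 2
  rw [mul_pow, Real.sq_sqrt hN] at h2
  refine h2.trans (mul_le_mul_of_nonneg_right ?_ hN)
  exact Finset.single_le_sum (f := fun b => K b ^ 2) (fun c _ => sq_nonneg _) (Finset.mem_univ b)
end LOs

theorem cont_comp {F : Pt n → ℝ} (hΦ : ContDiff ℝ (⊤:ℕ∞) Φ)
    (hF : ∀ y, ContDiffAt ℝ (⊤:ℕ∞) F (Φ y)) : ContDiff ℝ (⊤:ℕ∞) (fun y => F (Φ y)) :=
  contDiff_iff_contDiffAt.2 fun y => (hF y).comp y hΦ.contDiffAt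

theorem QV_cd (hp : posdef g) (hg : smoothT g) (hf : ContDiff ℝ (⊤:ℕ∞) f) {x : Pt n}
    (hx : fderiv ℝ f x ≠ 0) (i : Fin n) : ContDiffAt ℝ (⊤:ℕ∞) (QV g f i) x := by
  unfold QV
  refine ContDiffAt.sum fun j _ => ?_
  have h1 := nuV_cd hp hg hf hx j
  exact ((cdAt_pd_top (cdAt_pd_top h1)).add ((cdAt_pd_top h1).mul (ellV_cd hp hg j).contDiffAt)).add
    (h1.mul (cd_pd_top (ellV_cd hp hg i)).contDiffAt)

theorem DV_cd (hp : posdef g) (hg : smoothT g) (hf : ContDiff ℝ (⊤:ℕ∞) f) {x : Pt n}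
    (hx : fderiv ℝ f x ≠ 0) (j : Fin n) : ContDiffAt ℝ (⊤:ℕ∞) (DV g f j) x := by
  unfold DV
  exact ContDiffAt.sum fun i _ => cdAt_pd_top (M_cd hp hg hf hx i j)

/-- the unknowns of the elliptic system -/
def WV (g : Pt n → Fin n → Fin n → ℝ) (f : Pt n → ℝ) (X : Pt n → Fin n → ℝ) (Φ : Pt n → Pt n) :
    Option (Fin n) → Pt n → ℝ
  | none => fun y => XfV X f (Φ y)
  | some a => wV g X Φ a

theorem WV_zero {y : Pt n} (h : ∀ i, X (Φ y) i = 0) (b : Option (Fin n)) : WV g f X Φ b y = 0 := by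
  cases b with
  | none => simp [WV, XfV, h]
  | some a => simp [WV, wV, h]

/-- principal coefficients -/
def gmV (g : Pt n → Fin n → Fin n → ℝ) (f : Pt n → ℝ) (Φ : Pt n → Pt n) (k a b : Fin n) (y : Pt n) : ℝ :=
  PV g f a b (Φ y) + if a = k then (if b = k then 1 else 0) else 0

theorem second_w {w : Fin n → Pt n → ℝ} (hw : ∀ a, ContDiff ℝ 3 (w a)) (a b c : Fin n) (y : Pt n) :
    pd a (pd b (w c)) y = (1/2) * (pd a (fun z => pd b (w c) z + pd c (w b) z) y
      + pd b (fun z => pd a (w c) z + pd c (w a) z) y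
      + (-1) * pd c (fun z => pd a (w b) z + pd b (w a) z) y) := by
  have hd : ∀ a b, DifferentiableAt ℝ (pd a (w b)) y := fun a b =>
    (cd_pd (m := 2) (hw b) (by norm_num)).differentiable (by simp) y
  have h2 : ∀ c, ContDiffAt ℝ 2 (w c) y := fun c => ((hw c).of_le (by norm_num)).contDiffAt
  rw [pd_add (hd _ _) (hd _ _), pd_add (hd _ _) (hd _ _), pd_add (hd _ _) (hd _ _),
    pd_comm (i := b) (j := a) (h2 c), pd_comm (i := c) (j := a) (h2 b), pd_comm (i := c) (j := b) (h2 a)]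
  ring

theorem chart_ucp (hgs : symT g) (hp : posdef g) (hg : smoothT g) (hf : ContDiff ℝ (⊤:ℕ∞) f)
    (hΦ : ContDiff ℝ (⊤:ℕ∞) Φ)
    (h0 : ∀ y, f (Φ y) = 0) (hreg : ∀ y, fderiv ℝ f (Φ y) ≠ 0)
    {k : Fin n} {p : Pt n} {δ : ℝ} (hδ : 0 < δ) (hk : ∀ y, pd k f (Φ y) ≠ 0)
    (hco : ∀ y ∈ Metric.ball (0:Pt n) δ, ∀ a, a ≠ k → Φ y a = p a + y a)
    (hX : ∀ i, ContDiff ℝ 3 (fun x => X x i))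
    (hLie : ∀ x ∈ f ⁻¹' {(0:ℝ)}, ∀ v w : Fin n → ℝ, Tang f x v → Tang f x w →
      ∑ i, ∑ j, lieg g X x i j * v i * w j = 0)
    (hH : ∀ x ∈ f ⁻¹' {(0:ℝ)}, hmeanLin g (fun y a b => lieg g X y a b) f x = 0)
    {z : Pt n} (hz : ∀ᶠ y in nhds z, ∀ i, X (Φ y) i = 0)
    (hzs : ∀ x : Pt n, ∑ i, (x i - z i)^2 ≤ ∑ i, (0 - z i)^2 → x ∈ Metric.ball (0:Pt n) δ) :
    ∀ᶠ y in nhds (0 : Pt n), ∀ i, X (Φ y) i = 0 := by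
  have hPc : ∀ a b, ContDiff ℝ (⊤:ℕ∞) (fun y => PV g f a b (Φ y)) := fun a b =>
    cont_comp hΦ fun y => PV_cd hp hg hf (hreg y) a b
  have hAc : ∀ i, ContDiff ℝ (⊤:ℕ∞) (fun y => gradV g f (Φ y) i / RV g f (Φ y)) := fun i =>
    cont_comp (F := fun x => gradV g f x i / RV g f x) hΦ fun y =>
      (gradV_cd hp hg hf i).contDiffAt.div (RV_cd hp hg hf).contDiffAt (RV_pos hp (hreg y)).ne'
  have hSc : ContDiff ℝ (⊤:ℕ∞) (fun y => Real.sqrt (RV g f (Φ y))) :=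
    cont_comp (F := fun x => Real.sqrt (RV g f x)) hΦ fun y =>
      (RV_cd hp hg hf).contDiffAt.sqrt (RV_pos hp (hreg y)).ne'
  have hVc : ContDiff ℝ 3 (fun y => XfV X f (Φ y)) := (XfV_cd hX hf).comp (hΦ.of_le (by norm_cast))
  have hwc : ∀ a, ContDiff ℝ 3 (wV g X Φ a) := wV_cd hg hΦ hX
  have hWc : ∀ b, ContDiff ℝ 3 (WV g f X Φ b) := by
    intro b
    cases b with
    | none => exact hVc
    | some a => exact hwc a
  have hgc : ∀ a b, ContDiff ℝ (⊤:ℕ∞) (gmV g f Φ k a b) := fun a b => (hPc a b).add contDiff_const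
  -- `X` and its tangential derivatives are of lower order
  have hu : ∀ i, LO (WV g f X Φ) δ (fun y => X (Φ y) i) := by
    intro i
    refine LO.congr ?_ (fun y hy => u_rep hgs hp hf hΦ h0 hreg hk hco X hy i)
    exact (LO.mul (hAc i).continuous (LO.self none)).add
      (LO.sum fun b _ => LO.mul (hPc i b).continuous (LO.self (some b)))
  have hdu : ∀ c i, LO (WV g f X Φ) δ (pd c (fun y => X (Φ y) i)) := by
    intro c i
    have h1 : ∀ y ∈ Metric.ball (0:Pt n) δ, pd c (fun y => X (Φ y) i) y =
        (pd c (fun y => gradV g f (Φ y) i / RV g f (Φ y)) y * WV g f X Φ none y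
          + gradV g f (Φ y) i / RV g f (Φ y) * pd c (WV g f X Φ none) y)
        + ∑ b, (pd c (fun y => PV g f i b (Φ y)) y * WV g f X Φ (some b) y
          + PV g f i b (Φ y) * pd c (WV g f X Φ (some b)) y) := by
      intro y hy
      have h2 : (fun y => X (Φ y) i) =ᶠ[nhds y] fun y =>
          gradV g f (Φ y) i / RV g f (Φ y) * XfV X f (Φ y) + ∑ b, PV g f i b (Φ y) * wV g X Φ b y := by
        filter_upwards [Metric.isOpen_ball.mem_nhds hy] with q hq
        exact u_rep hgs hp hf hΦ h0 hreg hk hco X hq i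
      have dA := (hAc i).differentiable (by simp) y
      have dV := hVc.differentiable (by simp) y
      have dP : ∀ b, DifferentiableAt ℝ (fun y => PV g f i b (Φ y)) y := fun b =>
        (hPc i b).differentiable (by simp) y
      have dw : ∀ b, DifferentiableAt ℝ (wV g X Φ b) y := fun b => (hwc b).differentiable (by simp) y
      rw [pd_congr h2, pd_add (dA.fun_mul dV) (DifferentiableAt.fun_sum fun b _ => (dP b).fun_mul (dw b)),
        pd_mul dA dV, pd_sum (fun b _ => (dP b).fun_mul (dw b))]
      congr 1
      exact Finset.sum_congr rfl fun b _ => pd_mul (dP b) (dw b)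
    refine LO.congr ?_ h1
    exact ((LO.mul (cd_pd_top (hAc i)).continuous (LO.self none)).add
        (LO.mul (hAc i).continuous (LO.pd none c))).add
      (LO.sum fun b _ => (LO.mul (cd_pd_top (hPc i b)).continuous (LO.self (some b))).add
        (LO.mul (hPc i b).continuous (LO.pd (some b) c)))
  -- the tangential part
  have hF : ∀ a b c, LO (WV g f X Φ) δ
      (pd c (fun y => pd a (wV g X Φ b) y + pd b (wV g X Φ a) y)) := by
    intro a b c
    have h1 : (fun y => pd a (wV g X Φ b) y + pd b (wV g X Φ a) y) =
        fun y => ∑ i, X (Φ y) i * CV g Φ a b i y := by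
      funext y; exact killing1 hgs hp hg hf hΦ h0 hX hLie a b y
    have h2 : ∀ y, pd c (fun y => pd a (wV g X Φ b) y + pd b (wV g X Φ a) y) y =
        ∑ i, (CV g Φ a b i y * pd c (fun y => X (Φ y) i) y + pd c (CV g Φ a b i) y * X (Φ y) i) := by
      intro y
      have dC : ∀ i, DifferentiableAt ℝ (CV g Φ a b i) y := fun i =>
        (CV_cd hg hΦ a b i).differentiable (by simp) y
      have du : ∀ i, DifferentiableAt ℝ (fun y => X (Φ y) i) y := fun i =>
        (u_cd hΦ hX i).differentiable (by simp) y
      rw [h1, pd_sum (fun i _ => (du i).fun_mul (dC i))]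
      refine Finset.sum_congr rfl fun i _ => ?_
      rw [pd_mul (du i) (dC i)]; ring
    refine LO.congr ?_ (fun y _ => h2 y)
    exact LO.sum fun i _ => (LO.mul (CV_cd hg hΦ a b i).continuous (hdu c i)).add
      (LO.mul (cd_pd_top (CV_cd hg hΦ a b i)).continuous (hu i))
  have hw2 : ∀ a b c, LO (WV g f X Φ) δ (pd a (pd b (wV g X Φ c))) := by
    intro a b c
    refine LO.congr ?_ (fun y _ => second_w hwc a b c y)
    exact LO.mul continuous_const (((hF b c a).add (hF a c b)).add
      (LO.mul continuous_const (hF a b c)))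
  -- the normal part
  have hv2 : LO (WV g f X Φ) δ (fun y => ∑ a, ∑ b, gmV g f Φ k a b y *
      pd a (pd b (WV g f X Φ none)) y) := by
    have h1 : ∀ y ∈ Metric.ball (0:Pt n) δ, ∑ a, ∑ b, gmV g f Φ k a b y *
        pd a (pd b (WV g f X Φ none)) y =
        (∑ i, Real.sqrt (RV g f (Φ y)) * QV g f i (Φ y) * X (Φ y) i)
        + ∑ a, (dV g f Φ a y - ∑ i, PV g f i a (Φ y) * ellV g i (Φ y)) *
          pd a (WV g f X Φ none) y := by
      intro y hy
      refine Eq.trans ?_ (normal_eq hgs hp hg hf hΦ h0 hreg hk hco hX hH hy)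
      have h2 : pd k (WV g f X Φ none) =ᶠ[nhds y] fun _ => 0 := by
        filter_upwards [Metric.isOpen_ball.mem_nhds hy] with q hq
        have h3 : pd k (fun z => XfV X f (Φ z)) q = ∑ j, pd j (XfV X f) (Φ q) * eV Φ k j q :=
          pd_comp ((XfV_cd hX hf).differentiable (by simp) _) (hΦ.differentiable (by simp) q)
        change pd k (fun z => XfV X f (Φ z)) q = 0
        rw [h3]
        exact Finset.sum_eq_zero fun j _ => by rw [e_k hf hΦ h0 hk hco hq j, mul_zero]
      have h4 : pd k (pd k (WV g f X Φ none)) y = 0 := by rw [pd_congr h2, pd_const]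
      refine Finset.sum_congr rfl fun a _ => Finset.sum_congr rfl fun b _ => ?_
      change gmV g f Φ k a b y * pd a (pd b (WV g f X Φ none)) y =
        PV g f a b (Φ y) * pd a (pd b (WV g f X Φ none)) y
      unfold gmV
      by_cases ha : a = k
      · by_cases hb : b = k
        · rw [ha, hb, h4, mul_zero, mul_zero]
        · simp [hb]
      · simp [ha]
    refine LO.congr ?_ h1
    refine (LO.sum fun i _ => LO.mul ?_ (hu i)).add (LO.sum fun a _ => LO.mul ?_ (LO.pd none a))
    · exact hSc.continuous.mul (cont_comp hΦ fun y => QV_cd hp hg hf (hreg y) i).continuous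
    · refine Continuous.sub ?_ (continuous_finsetSum _ fun i _ => (hPc i a).continuous.mul
        ((ellV_cd hp hg i).continuous.comp hΦ.continuous))
      refine Continuous.sub ?_ (hSc.continuous.mul
        (cont_comp hΦ fun y => DV_cd hp hg hf (hreg y) a).continuous)
      exact continuous_finsetSum _ fun i _ => continuous_finsetSum _ fun b _ =>
        (hPc i b).continuous.mul (cd_pd_top (eV_cd hΦ b a)).continuous
  have hll : ∀ b, LO (WV g f X Φ) δ (llV (gmV g f Φ k) (WV g f X Φ b)) := by
    intro b
    have h1 : ∀ y, llV (gmV g f Φ k) (WV g f X Φ b) y =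
        (∑ a, ∑ c, pd a (gmV g f Φ k a c) y * pd c (WV g f X Φ b) y)
        + ∑ a, ∑ c, gmV g f Φ k a c y * pd a (pd c (WV g f X Φ b)) y := by
      intro y
      unfold llV
      simp only [pd_thV hgc ((hWc b).of_le (by norm_num)), Finset.sum_add_distrib]
    refine LO.congr ?_ (fun y _ => h1 y)
    refine LO.add (LO.sum fun a _ => LO.sum fun c _ =>
      LO.mul (cd_pd_top (hgc a c)).continuous (LO.pd b c)) ?_
    cases b with
    | none => exact hv2
    | some d => exact LO.sum fun a _ => LO.sum fun c _ => LO.mul (hgc a c).continuous (hw2 a c d)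
  obtain ⟨K, hK, hin⟩ := LO.uniform hll
  have hfin := ucp_ball (γ := gmV g f Φ k) (δ := δ) (W := WV g f X Φ) (K := K) (z := z)
    (fun a b y => by
      unfold gmV
      rw [PV_symm hgs a b]
      by_cases ha : a = k <;> by_cases hb : b = k <;> simp [ha, hb])
    hgc
    (fun y _ ξ hξ => by
      have h1 := PV_form hgs hp (hreg y) (hk y) hξ
      have h2 : ∑ a, ∑ b, gmV g f Φ k a b y * ξ a * ξ b =
          (∑ a, ∑ b, PV g f a b (Φ y) * ξ a * ξ b) + ξ k ^ 2 := by
        unfold gmV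
        simp only [add_mul, Finset.sum_add_distrib]
        congr 1
        simp [ite_mul, Finset.sum_ite_eq', sq]
      rw [h2]; exact h1)
    (fun b => (hWc b).of_le (by norm_num)) hK hin
    (by filter_upwards [hz] with y hy b using WV_zero hy b) hzs
  filter_upwards [hfin, Metric.ball_mem_nhds (0:Pt n) hδ] with y hy hyb i
  rw [u_rep hgs hp hf hΦ h0 hreg hk hco X hyb i]
  have h1 : XfV X f (Φ y) = 0 := hy none
  have h2 : ∀ b, wV g X Φ b y = 0 := fun b => hy (some b)
  simp [h1, h2]

theorem near_zero {δ : ℝ} (hδ : 0 < δ) : ∀ᶠ z in nhds (0 : Pt n), ∀ x : Pt n,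
    ∑ i, (x i - z i)^2 ≤ ∑ i, (0 - z i)^2 → x ∈ Metric.ball (0:Pt n) δ := by
  have h1 : Continuous (fun z : Pt n => ∑ i, (0 - z i)^2) := by fun_prop
  have h2 : ∀ᶠ z in nhds (0:Pt n), ∑ i, (0 - z i)^2 < (δ/2)^2 := by
    refine h1.continuousAt.eventually_lt_const ?_
    simp; positivity
  filter_upwards [h2] with z hz x hx
  rw [mem_ball_zero_iff, pi_norm_lt_iff hδ]
  intro i
  have h3 : (x i - z i)^2 ≤ ∑ i, (x i - z i)^2 :=
    Finset.single_le_sum (f := fun i => (x i - z i)^2) (fun c _ => sq_nonneg _) (Finset.mem_univ i)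
  have h4 : (0 - z i)^2 ≤ ∑ i, (0 - z i)^2 :=
    Finset.single_le_sum (f := fun i => (0 - z i)^2) (fun c _ => sq_nonneg _) (Finset.mem_univ i)
  have h5 := abs_lt_of_sq_lt_sq (lt_of_le_of_lt (h3.trans hx) hz) (by linarith)
  have h6 := abs_lt_of_sq_lt_sq (lt_of_le_of_lt h4 hz) (by linarith)
  rw [Real.norm_eq_abs, abs_lt]
  rw [abs_lt] at h5 h6
  constructor <;> linarith [h5.1, h5.2, h6.1, h6.2]

theorem local_closed (hgs : symT g) (hp : posdef g) (hg : smoothT g) (hf : ContDiff ℝ (⊤:ℕ∞) f)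
    (hreg : ∀ x ∈ f ⁻¹' {(0:ℝ)}, fderiv ℝ f x ≠ 0)
    (hX : ∀ i, ContDiff ℝ 3 (fun x => X x i))
    (hLie : ∀ x ∈ f ⁻¹' {(0:ℝ)}, ∀ v w : Fin n → ℝ, Tang f x v → Tang f x w →
      ∑ i, ∑ j, lieg g X x i j * v i * w j = 0)
    (hH : ∀ x ∈ f ⁻¹' {(0:ℝ)}, hmeanLin g (fun y a b => lieg g X y a b) f x = 0)
    {p : Pt n} (hpz : f p = 0)
    (hfr : ∃ᶠ q in nhds p, f q = 0 ∧ ∀ᶠ r in nhds q, f r = 0 → ∀ i, X r i = 0) :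
    ∀ᶠ r in nhds p, f r = 0 → ∀ i, X r i = 0 := by
  obtain ⟨k, Φ, δ, hδ, hΦ, hΦ0, h0, hk, hco, hinv⟩ := chart_exists hf hpz (hreg p hpz)
  have hsub : Tendsto (fun q : Pt n => q - p) (nhds p) (nhds 0) := by
    have : Continuous (fun q : Pt n => q - p) := by fun_prop
    simpa using this.tendsto p
  obtain ⟨q, ⟨hq0, hqX⟩, hqi, hqz⟩ := (hfr.and_eventually
    (hinv.and (hsub.eventually (near_zero hδ)))).exists
  have hΦq : Φ (q - p) = q := hqi hq0
  have hzX : ∀ᶠ y in nhds (q - p), ∀ i, X (Φ y) i = 0 := by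
    have h1 : Tendsto Φ (nhds (q - p)) (nhds q) := by
      simpa [hΦq] using hΦ.continuous.tendsto (q - p)
    filter_upwards [h1.eventually hqX] with y hy using hy (h0 y)
  have hfin := chart_ucp hgs hp hg hf hΦ h0 (fun y => hreg _ (h0 y)) hδ hk hco hX hLie hH hzX hqz
  filter_upwards [hsub.eventually hfin, hinv] with r hr hri hr0 i
  have := hr i
  rwa [hri hr0] at this

end Final

/-- if a `C³` vector field `X` near the connected hypersurface
`Σ = f⁻¹(0)` satisfies `(L_X ḡ)^⊤ = 0` and `H'(L_X ḡ) = 0` on `Σ` and vanishes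
on a nonempty (relatively) open subset of `Σ`, then `X ≡ 0` on all of `Σ`. -/
theorem statement9 {n : ℕ} (g : Pt n → Fin n → Fin n → ℝ) (f : Pt n → ℝ)
    (hgsym : symT g) (hgpos : posdef g) (hgsm : smoothT g)
    (hfsm : ContDiff ℝ (⊤ : ℕ∞) f)
    (hreg : ∀ x ∈ f ⁻¹' {(0:ℝ)}, fderiv ℝ f x ≠ 0)
    (hconn : IsConnected (f ⁻¹' {(0:ℝ)}))
    (X : Pt n → Fin n → ℝ) (hXreg : ∀ i, ContDiff ℝ 3 (fun x => X x i))
    -- `(L_X ḡ)^⊤ = 0` on `Σ`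
    (hLieT : ∀ x ∈ f ⁻¹' {(0:ℝ)}, ∀ v w : Fin n → ℝ, Tang f x v → Tang f x w →
      ∑ i, ∑ j, lieg g X x i j * v i * w j = 0)
    -- `H'(L_X ḡ) = 0` on `Σ`
    (hHp : ∀ x ∈ f ⁻¹' {(0:ℝ)},
      hmeanLin g (fun y a b => lieg g X y a b) f x = 0)
    -- `X` vanishes on a nonempty open subset of `Σ`
    (hvan : ∃ O : Set (Pt n), IsOpen O ∧ (O ∩ f ⁻¹' {(0:ℝ)}).Nonempty ∧
      ∀ x ∈ O ∩ f ⁻¹' {(0:ℝ)}, ∀ i, X x i = 0) :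
    ∀ x ∈ f ⁻¹' {(0:ℝ)}, ∀ i, X x i = 0 := by
  have hsub := hconn.isPreconnected
  obtain ⟨O, hO, ⟨x0, hx0O, hx0⟩, hOX⟩ := hvan
  -- the set of points near which `X` vanishes along the hypersurface
  let U : Set (Pt n) := {q | ∀ᶠ r in nhds q, f r = 0 → ∀ i, X r i = 0}
  have hUo : IsOpen U := isOpen_setOfPred_eventually_nhds
  let V : Set (Pt n) := {q | ∃ᶠ r in nhds q, f r = 0 ∧ r ∈ U}
  have hV : IsOpen Vᶜ := by
    have : Vᶜ = {q | ∀ᶠ r in nhds q, ¬ (f r = 0 ∧ r ∈ U)} := by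
      ext q
      exact Filter.not_frequently
    rw [this]
    exact isOpen_setOfPred_eventually_nhds
  have hx0U : x0 ∈ U := by
    have : ∀ᶠ r in nhds x0, r ∈ O := hO.mem_nhds hx0O
    filter_upwards [this] with r hr hr0 using hOX r ⟨hr, hr0⟩
  intro x hx
  by_contra hcon
  have hVU : ∀ q ∈ f ⁻¹' {(0:ℝ)}, q ∈ V → q ∈ U := fun q hq hqV =>
    local_closed hgsym hgpos hgsm hfsm hreg hXreg hLieT hHp hq hqV
  have hxU : x ∉ U := fun h => hcon (h.self_of_nhds hx)
  obtain ⟨q, hqS, hqU, hqV⟩ := hsub U Vᶜ hUo hV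
    (fun q hq => by
      by_cases h : q ∈ V
      · exact Or.inl (hVU q hq h)
      · exact Or.inr h)
    ⟨x0, hx0, hx0U⟩ ⟨x, hx, fun h => hxU (hVU x hx h)⟩
  apply hqV
  have : (∃ᶠ r in nhds q, f r = 0 ∧ r ∈ U) := by
    intro hev
    exact hev.self_of_nhds ⟨hqS, hqU⟩
  exact this
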